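/- Let f : ℝ → ℝ be smooth, positive, with f(x) → 0 as |x| → ∞ and with bounded first and second derivatives. Then for every sufficiently small ε > 0 there exist β > 0 and x₀ ∈ ℝ such that the smooth function h(x) = −β e^{−β^{3/2}(x−x₀)²} satisfies ‖h‖_{L^p(ℝ)} < ε for every 1 ≤ p ≤ ∞, and there exists no global classical solution u : [0,∞) × ℝ → ℝ of the Cauchy problem ∂u/∂t = ∂²u/∂x² − 2 f(x) u − u², u(0,·) = h, with u(t,x) ≤ 0 everywhere and u(t,·) bounded for every t ≥ 0. That is, any classical solution with these properties on a maximal interval [0,T) must have T < ∞, and then ‖u(t,·)‖_∞ → ∞ as t → T⁻. -/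

import Mathlib

open MeasureTheory Filter
open scoped ENNReal NNReal

/-- `u` is a classical solution on `[0,T) × ℝ` of the Cauchy problem
`∂u/∂t = ∂²u/∂x² − 2 f(x) u − u²`, `u(0,·) = h`: it is continuous in `t` on `[0,T)`,
twice continuously differentiable in `x` and once in `t` for `0 < t < T`, and satisfies
the equation pointwise. -/
def IsClassicalSolution (f h : ℝ → ℝ) (T : ℝ) (u : ℝ → ℝ → ℝ) : Prop :=
  (∀ x, u 0 x = h x) ∧
  (∀ x, ContinuousOn (fun t => u t x) (Set.Ico 0 T)) ∧
  (∀ t ∈ Set.Ioo (0 : ℝ) T, ContDiff ℝ 2 (u t)) ∧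
  (∀ t ∈ Set.Ioo (0 : ℝ) T, ∀ x : ℝ,
    HasDerivAt (fun s => u s x)
      (deriv (deriv (u t)) x - 2 * f x * u t x - (u t x) ^ 2) t)

namespace SemilinearHeat

open Set Topology ProbabilityTheory

/-! ### Gaussian moments of a bounded function -/

lemma exists_abs_pow_mul_exp_le (j : ℕ) {c : ℝ} (hc : 0 < c) :
    ∃ M : ℝ, 0 ≤ M ∧ ∀ z : ℝ,
        |z| ^ j * Real.exp (-c * z ^ 2) ≤ M * Real.exp (-(c / 2) * z ^ 2) := by
  refine ⟨1 + (j.factorial : ℝ) * (2 / c) ^ j, by positivity, fun z => ?_⟩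
  have h1 : |z| ^ j ≤ 1 + (z ^ 2) ^ j := by
    rw [← sq_abs, ← pow_mul, mul_comm 2 j, pow_mul]
    nlinarith [sq_nonneg (|z| ^ j - 1 / 2), pow_nonneg (abs_nonneg z) j]
  have h2 := Real.pow_div_factorial_le_exp (x := c / 2 * z ^ 2) (by positivity) j
  have h3 : (z ^ 2) ^ j ≤ (j.factorial : ℝ) * (2 / c) ^ j * Real.exp (c / 2 * z ^ 2) := by
    have : (z ^ 2) ^ j = (j.factorial : ℝ) * (2 / c) ^ j * ((c / 2 * z ^ 2) ^ j / j.factorial) := by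
      rw [mul_pow, div_pow, div_pow]
      have : (j.factorial : ℝ) ≠ 0 := by positivity
      field_simp
    rw [this]
    gcongr
  have h4 : 1 ≤ Real.exp (c / 2 * z ^ 2) := Real.one_le_exp (by positivity)
  have h5 : Real.exp (-(c / 2) * z ^ 2) = Real.exp (c / 2 * z ^ 2) * Real.exp (-c * z ^ 2) := by
    rw [← Real.exp_add]; congr 1; ring
  rw [h5, ← mul_assoc]
  gcongr
  nlinarith

/-- The `j`-th Gaussian moment of `q` about `x`. -/
noncomputable def gmoment (q : ℝ → ℝ) (j : ℕ) (c x : ℝ) : ℝ :=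
  ∫ y, (x - y) ^ j * Real.exp (-c * (x - y) ^ 2) * q y

lemma integrable_exp_neg_mul_sub_sq {c : ℝ} (hc : 0 < c) (x : ℝ) :
    Integrable (fun y : ℝ => Real.exp (-c * (x - y) ^ 2)) :=
  (integrable_exp_neg_mul_sq hc).comp_sub_left x

lemma integrable_gmoment {q : ℝ → ℝ} {C : ℝ} (hq : Continuous q) (hC : ∀ y, |q y| ≤ C) (j : ℕ)
    {c : ℝ} (hc : 0 < c) (x : ℝ) :
    Integrable (fun y => (x - y) ^ j * Real.exp (-c * (x - y) ^ 2) * q y) := by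
  obtain ⟨M, hM, h⟩ := exists_abs_pow_mul_exp_le j hc
  refine ((integrable_exp_neg_mul_sub_sq (half_pos hc) x).const_mul (M * C)).mono'
    (by fun_prop) (Eventually.of_forall fun y => ?_)
  rw [norm_mul, norm_mul, norm_pow, Real.norm_eq_abs, Real.norm_eq_abs, Real.norm_eq_abs,
    Real.abs_exp]
  calc _ ≤ (M * Real.exp (-(c / 2) * (x - y) ^ 2)) * C :=
        mul_le_mul (h _) (hC y) (abs_nonneg _) (by positivity)
    _ = _ := by ring

lemma hasDerivAt_gmoment_space {q : ℝ → ℝ} {C : ℝ} (hq : Continuous q) (hC : ∀ y, |q y| ≤ C)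
    (j : ℕ) {c : ℝ} (hc : 0 < c) (x : ℝ) :
    HasDerivAt (gmoment q j c) (j * gmoment q (j - 1) c x - 2 * c * gmoment q (j + 1) c x) x := by
  obtain ⟨M, hM, h⟩ := exists_abs_pow_mul_exp_le (j - 1) hc
  obtain ⟨M', hM', h'⟩ := exists_abs_pow_mul_exp_le (j + 1) hc
  have key := (hasDerivAt_integral_of_dominated_loc_of_deriv_le (μ := volume)
    (F := fun x y => (x - y) ^ j * Real.exp (-c * (x - y) ^ 2) * q y)
    (F' := fun x y => j * ((x - y) ^ (j - 1) * Real.exp (-c * (x - y) ^ 2) * q y)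
      - 2 * c * ((x - y) ^ (j + 1) * Real.exp (-c * (x - y) ^ 2) * q y))
    (bound := fun y => ((j * M + 2 * c * M') * C * Real.exp (c / 2))
      * Real.exp (-(c / 4) * (x - y) ^ 2))
    (Metric.ball_mem_nhds x one_pos) (Eventually.of_forall fun x => by fun_prop)
    (integrable_gmoment hq hC j hc x) (by fun_prop) (Eventually.of_forall fun y x' hx' => ?_)
    ((integrable_exp_neg_mul_sub_sq (by positivity) x).const_mul _)
    (Eventually.of_forall fun y x' _ => ?_)).2
  · have e : ∀ x, (∫ y, (j * ((x - y) ^ (j - 1) * Real.exp (-c * (x - y) ^ 2) * q y)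
      - 2 * c * ((x - y) ^ (j + 1) * Real.exp (-c * (x - y) ^ 2) * q y)))
        = j * gmoment q (j - 1) c x - 2 * c * gmoment q (j + 1) c x := by
      intro x
      rw [integral_sub ((integrable_gmoment hq hC _ hc x).const_mul _)
        ((integrable_gmoment hq hC _ hc x).const_mul _), integral_const_mul, integral_const_mul]
      rfl
    rw [e] at key
    exact key
  · have hz : Real.exp (-(c / 2) * (x' - y) ^ 2)
        ≤ Real.exp (c / 2) * Real.exp (-(c / 4) * (x - y) ^ 2) := by
      rw [← Real.exp_add]
      apply Real.exp_le_exp.2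
      rw [Metric.mem_ball, Real.dist_eq, abs_lt] at hx'
      nlinarith [sq_nonneg (2 * (x' - y) - (x - y)), hc, mul_pos hc hc, mul_nonneg hc.le
        (sq_nonneg ((x' - y) + (x' - x))), mul_nonneg hc.le
        (by nlinarith : (0:ℝ) ≤ 1 - (x' - x) ^ 2)]
    have hC0 : 0 ≤ C := (abs_nonneg _).trans (hC y)
    have a1 : ∀ (i : ℕ) (N : ℝ), 0 ≤ N → (∀ z : ℝ, |z| ^ i * Real.exp (-c * z ^ 2)
        ≤ N * Real.exp (-(c / 2) * z ^ 2)) →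
        |(x' - y) ^ i * Real.exp (-c * (x' - y) ^ 2) * q y|
          ≤ N * C * (Real.exp (c / 2) * Real.exp (-(c / 4) * (x - y) ^ 2)) := by
      intro i N hN hi
      rw [abs_mul, abs_mul, abs_pow, Real.abs_exp]
      calc _ ≤ (N * Real.exp (-(c / 2) * (x' - y) ^ 2)) * C :=
            mul_le_mul (hi _) (hC y) (abs_nonneg _) (by positivity)
        _ ≤ (N * (Real.exp (c / 2) * Real.exp (-(c / 4) * (x - y) ^ 2))) * C := by gcongr
        _ = _ := by ring
    have b1 := a1 _ M hM h
    have b2 := a1 _ M' hM' h'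
    rw [Real.norm_eq_abs]
    refine (abs_sub _ _).trans ?_
    rw [abs_mul, abs_mul (2 * c), abs_of_nonneg (Nat.cast_nonneg j : (0:ℝ) ≤ j),
      abs_of_pos (by positivity : 0 < 2 * c)]
    calc _ ≤ (j:ℝ) * (M * C * (Real.exp (c / 2) * Real.exp (-(c / 4) * (x - y) ^ 2))) + 2 * c *
          (M' * C * (Real.exp (c / 2) * Real.exp (-(c / 4) * (x - y) ^ 2))) := by gcongr
      _ = _ := by ring
  · have h0 : HasDerivAt (fun x : ℝ => x - y) 1 x' := (hasDerivAt_id x').sub_const y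
    have h1 := (h0.pow j).mul (((h0.pow 2).const_mul (-c)).exp)
    refine (h1.mul_const (q y)).congr_deriv ?_
    simp only [Pi.pow_apply]
    push_cast
    ring

lemma hasDerivAt_gmoment_param {q : ℝ → ℝ} {C : ℝ} (hq : Continuous q) (hC : ∀ y, |q y| ≤ C)
    (j : ℕ) {c : ℝ} (hc : 0 < c) (x : ℝ) :
    HasDerivAt (fun c => gmoment q j c x) (-gmoment q (j + 2) c x) c := by
  obtain ⟨M, hM, h⟩ := exists_abs_pow_mul_exp_le (j + 2) (half_pos hc)
  have key := (hasDerivAt_integral_of_dominated_loc_of_deriv_le (μ := volume)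
    (F := fun c y => (x - y) ^ j * Real.exp (-c * (x - y) ^ 2) * q y)
    (F' := fun c y => -((x - y) ^ (j + 2) * Real.exp (-c * (x - y) ^ 2) * q y))
    (bound := fun y => M * C * Real.exp (-(c / 2 / 2) * (x - y) ^ 2))
    (Ioi_mem_nhds (half_lt_self hc)) (Eventually.of_forall fun x => by fun_prop)
    (integrable_gmoment hq hC j hc x) (by fun_prop) (Eventually.of_forall fun y c' hc' => ?_)
    ((integrable_exp_neg_mul_sub_sq (by positivity) x).const_mul _)
    (Eventually.of_forall fun y c' _ => ?_)).2
  · rwa [integral_neg] at key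
  · have hC0 : 0 ≤ C := (abs_nonneg _).trans (hC y)
    rw [norm_neg, Real.norm_eq_abs, abs_mul, abs_mul, abs_pow, Real.abs_exp]
    calc _ ≤ (|x - y| ^ (j + 2) * Real.exp (-(c / 2) * (x - y) ^ 2)) * C := by
          gcongr
          · exact le_of_lt hc'
          · exact hC y
      _ ≤ (M * Real.exp (-(c / 2 / 2) * (x - y) ^ 2)) * C := mul_le_mul_of_nonneg_right (h _) hC0
      _ = _ := by ring
  · have h0 : HasDerivAt (fun c : ℝ => -c * (x - y) ^ 2) (-1 * (x - y) ^ 2) c' :=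
      (hasDerivAt_neg c').mul_const _
    refine ((h0.exp.const_mul ((x - y) ^ j)).mul_const (q y)).congr_deriv ?_
    ring

/-! ### The heat semigroup -/

/-- Heat evolution of `q`, averaged against the standard Gaussian; it is `q` itself at `t = 0`. -/
noncomputable def heat (q : ℝ → ℝ) (t x : ℝ) : ℝ :=
  ∫ ξ, q (x + √(2 * t) * ξ) ∂(gaussianReal 0 1)

/-- The first spatial derivative of `heat q`. -/
noncomputable def heatX (q : ℝ → ℝ) (t x : ℝ) : ℝ :=
  (√(2 * t))⁻¹ * ∫ ξ, ξ * q (x + √(2 * t) * ξ) ∂(gaussianReal 0 1)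

/-- The second spatial derivative of `heat q`. -/
noncomputable def heatXX (q : ℝ → ℝ) (t x : ℝ) : ℝ :=
  (2 * t)⁻¹ * ∫ ξ, (ξ ^ 2 - 1) * q (x + √(2 * t) * ξ) ∂(gaussianReal 0 1)

/-- The heat kernel. -/
noncomputable def heatKernel (t z : ℝ) : ℝ := (√(4 * Real.pi * t))⁻¹ * Real.exp (-z ^ 2 / (4 * t))

lemma integral_gaussian_comp_eq {t : ℝ} (ht : 0 < t) (x : ℝ) (g : ℝ → ℝ) :
    ∫ ξ, g (x + √(2 * t) * ξ) ∂(gaussianReal 0 1) = ∫ y, heatKernel t (x - y) * g y := by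
  have hs : 0 < √(2 * t) := Real.sqrt_pos.2 (by positivity)
  have h1 : ∫ ξ, g (x + √(2 * t) * ξ) ∂(gaussianReal 0 1)
      = ∫ y, g y ∂((gaussianReal 0 1).map (fun ξ => x + √(2 * t) * ξ)) := by
    let e : ℝ ≃ᵐ ℝ :=
        ((Homeomorph.mulLeft₀ _ hs.ne').trans (Homeomorph.addLeft x)).toMeasurableEquiv
    exact (e.measurableEmbedding.integral_map g).symm
  have h2 : (gaussianReal 0 1).map (fun ξ => x + √(2 * t) * ξ)
      = gaussianReal x (2 * t).toNNReal := by
    have : (fun ξ => x + √(2 * t) * ξ) = (fun z => x + z) ∘ (fun ξ => √(2 * t) * ξ) := rfl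
    rw [this, ← Measure.map_map (by fun_prop) (by fun_prop), gaussianReal_map_const_mul,
      gaussianReal_map_const_add]
    congr 1
    · simp
    · ext
      rw [mul_one, NNReal.coe_mk, Real.sq_sqrt (by positivity), Real.coe_toNNReal _ (by positivity)]
  rw [h1, h2, integral_gaussianReal_eq_integral_smul 
    (by rw [ne_eq, Real.toNNReal_eq_zero]; linarith)]
  refine integral_congr_ae (Eventually.of_forall fun y => ?_)
  simp only [gaussianPDFReal, heatKernel, smul_eq_mul,
      Real.coe_toNNReal _ (by positivity : 0 ≤ 2 * t)]
  congr 3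
  · congr 1; ring
  · congr 1
    · ring
    · ring

lemma heat_eq_kernel {t : ℝ} (ht : 0 < t) (q : ℝ → ℝ) (x : ℝ) :
    heat q t x = ∫ y, heatKernel t (x - y) * q y :=
  integral_gaussian_comp_eq ht x q

lemma heatKernel_eq (t z : ℝ) :
    heatKernel t z = (√(4 * Real.pi * t))⁻¹ * Real.exp (-(4 * t)⁻¹ * z ^ 2) := by
  rw [heatKernel]; congr 2; rw [neg_div, div_eq_inv_mul]; ring

lemma heat_eq_gmoment {t : ℝ} (ht : 0 < t) (q : ℝ → ℝ) (x : ℝ) :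
    heat q t x = (√(4 * Real.pi * t))⁻¹ * gmoment q 0 (4 * t)⁻¹ x := by
  rw [heat_eq_kernel ht, gmoment, ← integral_const_mul]
  congr 1 with y
  rw [heatKernel_eq]; ring

lemma heatX_eq_gmoment {t : ℝ} (ht : 0 < t) (q : ℝ → ℝ) (x : ℝ) :
    heatX q t x = (√(4 * Real.pi * t))⁻¹ * (-(2 * t)⁻¹ * gmoment q 1 (4 * t)⁻¹ x) := by
  have hs : 0 < √(2 * t) := Real.sqrt_pos.2 (by positivity)
  have h := integral_gaussian_comp_eq ht x (fun y => (y - x) / √(2 * t) * q y)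
  have e : ∀ ξ : ℝ, (x + √(2 * t) * ξ - x) / √(2 * t) = ξ := fun ξ => by field_simp; ring
  simp only [e] at h
  rw [heatX, h, gmoment, ← integral_const_mul, ← integral_const_mul, ← integral_const_mul]
  congr 1 with y
  rw [heatKernel_eq]
  have h2 : (√(2 * t))⁻¹ * (√(2 * t))⁻¹ = (2 * t)⁻¹ := by
    rw [← mul_inv, Real.mul_self_sqrt (by positivity)]
  rw [div_eq_mul_inv]
  linear_combination ((√(4 * Real.pi * t))⁻¹ * Real.exp (-(4 * t)⁻¹ * (x - y) ^ 2) * (y - x) * q y)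
    * h2

lemma heatXX_eq_gmoment {q : ℝ → ℝ} {C : ℝ} (hq : Continuous q) (hC : ∀ y, |q y| ≤ C)
    {t : ℝ} (ht : 0 < t) (x : ℝ) :
    heatXX q t x = (√(4 * Real.pi * t))⁻¹ * (-(2 * t)⁻¹ * gmoment q 0 (4 * t)⁻¹ x
      + (2 * t)⁻¹ ^ 2 * gmoment q 2 (4 * t)⁻¹ x) := by
  have hs : 0 < √(2 * t) := Real.sqrt_pos.2 (by positivity)
  have h := integral_gaussian_comp_eq ht x (fun y => (((y - x) / √(2 * t)) ^ 2 - 1) * q y)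
  have e : ∀ ξ : ℝ, (x + √(2 * t) * ξ - x) / √(2 * t) = ξ := fun ξ => by field_simp; ring
  simp only [e] at h
  rw [heatXX, h, gmoment, gmoment, ← integral_const_mul, ← integral_const_mul,
    ← integral_const_mul, ← integral_add, ← integral_const_mul]
  · congr 1 with y
    rw [heatKernel_eq]
    have h2 : (√(2 * t))⁻¹ ^ 2 = (2 * t)⁻¹ := by
      rw [inv_pow, Real.sq_sqrt (by positivity)]
    rw [div_eq_mul_inv, mul_pow, h2]
    ring
  · exact (integrable_gmoment hq hC 0 (by positivity) x).const_mul _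
  · exact (integrable_gmoment hq hC 2 (by positivity) x).const_mul _

lemma hasDerivAt_heat_space {q : ℝ → ℝ} {C : ℝ} (hq : Continuous q) (hC : ∀ y, |q y| ≤ C)
    {t : ℝ} (ht : 0 < t) (x : ℝ) : HasDerivAt (heat q t) (heatX q t x) x := by
  have h := (hasDerivAt_gmoment_space hq hC 0 (c := (4 * t)⁻¹) (by positivity) x).const_mul
    (√(4 * Real.pi * t))⁻¹
  have e : heat q t = fun x => (√(4 * Real.pi * t))⁻¹ * gmoment q 0 (4 * t)⁻¹ x :=
    funext fun x => heat_eq_gmoment ht q x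
  rw [e, heatX_eq_gmoment ht]
  refine h.congr_deriv ?_
  push_cast
  field_simp
  ring

lemma hasDerivAt_heatX_space {q : ℝ → ℝ} {C : ℝ} (hq : Continuous q) (hC : ∀ y, |q y| ≤ C)
    {t : ℝ} (ht : 0 < t) (x : ℝ) : HasDerivAt (heatX q t) (heatXX q t x) x := by
  have h := ((hasDerivAt_gmoment_space hq hC 1 (c := (4 * t)⁻¹) (by positivity) x).const_mul
    (-(2 * t)⁻¹)).const_mul (√(4 * Real.pi * t))⁻¹
  have e : heatX q t = fun x => (√(4 * Real.pi * t))⁻¹ * (-(2 * t)⁻¹ * gmoment q 1 (4 * t)⁻¹ x) :=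
    funext fun x => heatX_eq_gmoment ht q x
  rw [e, heatXX_eq_gmoment hq hC ht]
  refine h.congr_deriv ?_
  push_cast
  field_simp
  ring

lemma hasDerivAt_heat_time {q : ℝ → ℝ} {C : ℝ} (hq : Continuous q) (hC : ∀ y, |q y| ≤ C)
    {t : ℝ} (ht : 0 < t) (x : ℝ) : HasDerivAt (fun t => heat q t x) (heatXX q t x) t := by
  have hc : HasDerivAt (fun t : ℝ => (4 * t)⁻¹) (-(4:ℝ) / (4 * t) ^ 2) t := by
    exact (((hasDerivAt_id t).const_mul (4:ℝ)).inv (by simpa using ht.ne')).congr_deriv (by simp)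
  have hg := (hasDerivAt_gmoment_param hq hC 0 (c := (4 * t)⁻¹) (by positivity) x).comp t hc
  have hpos : 0 < 4 * Real.pi * t := by positivity
  have hp0 : HasDerivAt (fun t : ℝ => 4 * Real.pi * t) (4 * Real.pi) t := by
    simpa using (hasDerivAt_id t).const_mul (4 * Real.pi)
  have hp := (hp0.sqrt hpos.ne').inv (Real.sqrt_pos.2 hpos).ne'
  have h := hp.mul hg
  have e : (fun t => heat q t x) =ᶠ[𝓝 t]
      fun t => (√(4 * Real.pi * t))⁻¹ * gmoment q 0 (4 * t)⁻¹ x := by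
    filter_upwards [Ioi_mem_nhds ht] with s hs
    exact heat_eq_gmoment hs q x
  refine (h.congr_of_eventuallyEq e).congr_deriv ?_
  rw [heatXX_eq_gmoment hq hC ht]
  have hs : √(4 * Real.pi * t) ^ 2 = 4 * Real.pi * t := Real.sq_sqrt hpos.le
  have hs0 := (Real.sqrt_pos.2 hpos).ne'
  simp only [Function.comp_def, zero_add, Pi.inv_apply]
  rw [hs]
  field_simp
  ring

lemma heat_zero (q : ℝ → ℝ) (x : ℝ) : heat q 0 x = q x := by
  simp [heat]

lemma integrable_heat {q : ℝ → ℝ} {C : ℝ} (hq : Continuous q) (hC : ∀ y, |q y| ≤ C) (t x : ℝ) :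
    Integrable (fun ξ => q (x + √(2 * t) * ξ)) (gaussianReal 0 1) :=
  (integrable_const C).mono' (by fun_prop) (Eventually.of_forall fun ξ => hC _)

lemma continuous_heat {q : ℝ → ℝ} {C : ℝ} (hq : Continuous q) (hC : ∀ y, |q y| ≤ C) :
    Continuous (fun p : ℝ × ℝ => heat q p.1 p.2) :=
  continuous_of_dominated (bound := fun _ => C) (fun p => by fun_prop)
    (fun p => Eventually.of_forall fun ξ => hC _) (integrable_const C)
    (Eventually.of_forall fun ξ => by fun_prop)

lemma heat_le {q : ℝ → ℝ} {C M : ℝ} (hq : Continuous q) (hC : ∀ y, |q y| ≤ C)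
    (hM : ∀ y, q y ≤ M) (t x : ℝ) : heat q t x ≤ M := by
  have h := integral_mono (integrable_heat hq hC t x) (integrable_const M) (fun ξ => hM _)
  simpa [heat] using h

lemma heat_nonneg {q : ℝ → ℝ} (h0 : ∀ y, 0 ≤ q y) (t x : ℝ) : 0 ≤ heat q t x :=
  integral_nonneg fun _ => h0 _

lemma abs_heat_le {q : ℝ → ℝ} {C : ℝ} (hC : ∀ y, |q y| ≤ C) (t x : ℝ) : |heat q t x| ≤ C := by
  have h := norm_integral_le_of_norm_le_const (μ := gaussianReal 0 1)
    (f := fun ξ => q (x + √(2 * t) * ξ)) (C := C) (Eventually.of_forall fun ξ => hC _)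
  simpa [heat] using h

lemma integrable_abs_gaussian : Integrable (fun ξ : ℝ => |ξ|) (gaussianReal 0 1) :=
  ((memLp_id_gaussianReal (μ := 0) (v := 1) 1).integrable le_rfl).abs

lemma integrable_pow_gaussian (n : ℕ) : Integrable (fun ξ : ℝ => ξ ^ n) (gaussianReal 0 1) := by
  have h := (memLp_id_gaussianReal (μ := 0) (v := 1) n)
  rcases Nat.eq_zero_or_pos n with rfl | hn
  · simp
  · have := h.integrable_norm_pow hn.ne'
    refine this.mono' (by fun_prop) (Eventually.of_forall fun ξ => ?_)
    simp

/-- The heat flow moves an `n`-Lipschitz function upward by at most `n √(2 t) E|ξ|`. -/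
lemma heat_le_add_of_lipschitz {q : ℝ → ℝ} {C n : ℝ} (hq : Continuous q) (hC : ∀ y, |q y| ≤ C)
    (hn : ∀ x y, |q x - q y| ≤ n * |x - y|) (t x : ℝ) :
    heat q t x ≤ q x + n * √(2 * t) * ∫ ξ, |ξ| ∂(gaussianReal 0 1) := by
  have h := integral_mono (integrable_heat hq hC t x)
    ((integrable_const (q x)).add (integrable_abs_gaussian.const_mul (n * √(2 * t)))) (fun ξ => by
      have := (le_abs_self _).trans (hn (x + √(2 * t) * ξ) x)
      rw [add_sub_cancel_left, abs_mul, abs_of_nonneg (Real.sqrt_nonneg _)] at this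
      simp only [Pi.add_apply]
      linarith)
  simp only [Pi.add_apply] at h
  rw [integral_add (integrable_const _) (integrable_abs_gaussian.const_mul _), integral_const_mul]
    at h
  simpa [heat] using h

lemma heatKernel_nonneg (t z : ℝ) : 0 ≤ heatKernel t z := by
  unfold heatKernel; positivity

lemma integrable_heatKernel {t : ℝ} (ht : 0 < t) (x : ℝ) :
    Integrable (fun y => heatKernel t (x - y)) := by
  simp only [heatKernel_eq]
  exact (integrable_exp_neg_mul_sub_sq (by positivity) x).const_mul _

lemma continuous_heatKernel (t : ℝ) : Continuous (heatKernel t) := by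
  unfold heatKernel; fun_prop

lemma integrable_heatKernel_mul {q : ℝ → ℝ} {C : ℝ} (hq : Continuous q) (hC : ∀ y, |q y| ≤ C)
    {t : ℝ} (ht : 0 < t) (x : ℝ) :
    Integrable (fun y => heatKernel t (x - y) * q y) :=
  (integrable_heatKernel ht x).mul_bdd (c := C) hq.aestronglyMeasurable
    (Eventually.of_forall fun y => hC y)

lemma heatKernel_le_inv_sqrt {t : ℝ} (ht : 0 ≤ t) (z : ℝ) :
    heatKernel t z ≤ (√(4 * Real.pi * t))⁻¹ := by
  unfold heatKernel
  refine mul_le_of_le_one_right (by positivity) (Real.exp_le_one_iff.2 ?_)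
  rw [neg_div]
  exact neg_nonpos.2 (by positivity)

lemma heatKernel_le {τ h : ℝ} (hτ : 0 < τ) (hh : τ ≤ h) (z : ℝ) :
    heatKernel τ z ≤ √(h / τ) * heatKernel h z := by
  have hh0 : 0 < h := hτ.trans_le hh
  have e : √(h / τ) * (√(4 * Real.pi * h))⁻¹ = (√(4 * Real.pi * τ))⁻¹ := by
    rw [← Real.sqrt_inv, ← Real.sqrt_inv, ← Real.sqrt_mul (by positivity)]
    congr 1; field_simp
  unfold heatKernel
  rw [← mul_assoc, e]
  gcongr ?_ * Real.exp ?_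
  rw [neg_div, neg_div]
  gcongr

lemma heat_le_mul_heat {q : ℝ → ℝ} {C : ℝ} (hq : Continuous q) (hC : ∀ y, |q y| ≤ C)
    (h0 : ∀ y, 0 ≤ q y) {τ h : ℝ} (hτ : 0 < τ) (hh : τ ≤ h) (x : ℝ) :
    heat q τ x ≤ √(h / τ) * heat q h x := by
  have hh0 : 0 < h := hτ.trans_le hh
  rw [heat_eq_kernel hτ, heat_eq_kernel hh0, ← integral_const_mul]
  refine integral_mono (integrable_heatKernel_mul hq hC hτ x)
    ((integrable_heatKernel_mul hq hC hh0 x).const_mul _) fun y => ?_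
  have := mul_le_mul_of_nonneg_right (heatKernel_le hτ hh (x - y)) (h0 y)
  simpa [mul_assoc] using this

/-! ### Auxiliary facts -/

lemma eventually_lt_of_hasDerivAt_pos {g : ℝ → ℝ} {d x : ℝ} (h : HasDerivAt g d x) (hd : 0 < d) :
    ∀ᶠ y in 𝓝[<] x, g y < g x := by
  have h1 := (hasDerivAt_iff_tendsto_slope.1 h).eventually (lt_mem_nhds hd)
  have h2 : 𝓝[<] x ≤ 𝓝[≠] x := nhdsWithin_mono _ fun y hy => ne_of_lt hy
  filter_upwards [h2 h1, self_mem_nhdsWithin] with y hy hyx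
  rw [slope_def_field] at hy
  have hyx' : y - x < 0 := sub_neg.2 hyx
  by_contra hc
  exact absurd hy (not_lt.2 (div_nonpos_of_nonneg_of_nonpos (by linarith) hyx'.le))

lemma second_deriv_nonneg_of_isLocalMin {g g' : ℝ → ℝ} {g2 x : ℝ} (h1 : ∀ y, HasDerivAt g (g' y) y)
    (h2 : HasDerivAt g' g2 x) (hm : IsLocalMin g x) : 0 ≤ g2 := by
  by_contra hlt
  push Not at hlt
  have e : deriv g = g' := funext fun y => (h1 y).deriv
  have hM : IsLocalMax g x := by
    refine isLocalMax_of_deriv_deriv_neg ?_ hm.deriv_eq_zero (h1 x).continuousAt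
    rw [e, h2.deriv]; exact hlt
  have hc : g =ᶠ[𝓝 x] fun _ => g x := by
    filter_upwards [hm, hM] with y hy hy' using le_antisymm hy' hy
  have hc' : g' =ᶠ[𝓝 x] fun _ => 0 := by
    filter_upwards [hc.eventuallyEq_nhds] with y hy
    exact (h1 y).unique ((hasDerivAt_const y (g x)).congr_of_eventuallyEq hy)
  exact hlt.ne (h2.unique ((hasDerivAt_const x (0:ℝ)).congr_of_eventuallyEq hc'))

/-- A jointly continuous function which is positive on `{s} × K`, with `K` compact, is positive on
`{t} × K` for `t` near `s`. -/
lemma eventually_forall_pos_of_isCompact {g : ℝ × ℝ → ℝ} (hg : Continuous g) {K : Set ℝ}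
    (hK : IsCompact K) {s : ℝ} (h : ∀ x ∈ K, 0 < g (s, x)) :
    ∀ᶠ t in 𝓝 s, ∀ x ∈ K, 0 < g (t, x) :=
  hK.eventually_forall_of_forall_eventually (P := fun t x => 0 < g (t, x)) fun x hx =>
    hg.continuousAt.eventually (lt_mem_nhds (h x hx))

/-- A Baire category principle: if the exceptional times of a property are locally (in a portion)
confined to one set of a countable closed cover, and this forces the property, then the property
holds at all times. -/
lemma forall_of_baire {J : Set ℝ} (hJ : ∀ t ∈ J, ∃ d, t < d ∧ Icc t d ⊆ J) (Good : ℝ → Prop)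
    (E : ℕ → Set ℝ) (hclosed : ∀ n, ∀ t ∈ J, t ∈ closure (E n ∩ J) → t ∈ E n)
    (hcover : ∀ t ∈ J, ∃ n, t ∈ E n)
    (hstep : ∀ t ∈ J, ∀ n d, t < d → t ∈ E n → (∀ s ∈ Ico t d, s ∈ J → ¬ Good s → s ∈ E n) →
      Good t) :
    ∀ t ∈ J, Good t := by
  intro t0 ht0
  by_contra hbad
  obtain ⟨d', hd', hJd⟩ := hJ t0 ht0
  set B : Set ℝ := {t | ¬ Good t} ∩ Ico t0 d' with hB
  set C := closure B with hC
  have hBt0 : t0 ∈ B := ⟨hbad, le_rfl, hd'⟩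
  have hCJ : C ⊆ J := by
    refine (closure_minimal ?_ isClosed_Icc).trans hJd
    exact fun t ht => Ico_subset_Icc_self ht.2
  have : IsClosed C := isClosed_closure
  have : CompleteSpace C := IsClosed.completeSpace_coe
  have : Nonempty C := ⟨⟨t0, subset_closure hBt0⟩⟩
  obtain ⟨n, ⟨t, htC⟩, ht⟩ := nonempty_interior_of_iUnion_of_closed
    (f := fun n => (Subtype.val ⁻¹' (closure (E n ∩ J)) : Set C))
    (fun n => isClosed_closure.preimage continuous_subtype_val)
    (by
      ext ⟨t, ht⟩
      simp only [mem_iUnion, mem_preimage, mem_univ, iff_true]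
      obtain ⟨n, hn⟩ := hcover t (hCJ ht)
      exact ⟨n, subset_closure ⟨hn, hCJ ht⟩⟩)
  obtain ⟨U, hU, hUe⟩ := isOpen_induced_iff.1
    (isOpen_interior (s := (Subtype.val ⁻¹' (closure (E n ∩ J)) : Set C)))
  have htU : t ∈ U := by
    have : (⟨t, htC⟩ : C) ∈ Subtype.val ⁻¹' U := by rw [hUe]; exact ht
    exact this
  have hUE : ∀ s ∈ U, s ∈ C → s ∈ E n := fun s hs hsC => by
    have : (⟨s, hsC⟩ : C) ∈ Subtype.val ⁻¹' U := hs
    rw [hUe] at this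
    have h := interior_subset this
    exact hclosed n s (hCJ hsC) h
  obtain ⟨t1, ht1U, ht1B⟩ := mem_closure_iff.1 htC U hU htU
  have h1 : ∀ᶠ d in 𝓝[>] t1, Ico t1 d ⊆ U := by
    obtain ⟨e, he, hb⟩ := Metric.isOpen_iff.1 hU t1 ht1U
    filter_upwards [Ioo_mem_nhdsGT (show t1 < t1 + e by linarith)] with d hd s hs
    apply hb
    rw [Metric.mem_ball, Real.dist_eq, abs_of_nonneg (by linarith [hs.1])]
    linarith [hs.2, hd.2]
  obtain ⟨d, hdU, hd⟩ := (h1.and (Ioo_mem_nhdsGT ht1B.2.2)).exists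
  refine ht1B.1 (hstep t1 (hCJ (subset_closure ht1B)) n d hd.1
    (hUE t1 ht1U (subset_closure ht1B)) fun s hs _ hsb => hUE s (hdU hs) (subset_closure
      ⟨hsb, ht1B.2.1.trans hs.1, hs.2.trans hd.2⟩))

/-! ### Functions with separate parabolic regularity -/

/-- `z` is continuous separately in time and in space on `[a, b) × ℝ`, and on `(a, b) × ℝ` it has
time derivative `zt` and first and second space derivatives `zx` and `zxx`. -/
structure ParabolicOn (a b : ℝ) (z zt zx zxx : ℝ → ℝ → ℝ) : Prop where
  cont_time : ∀ x, ContinuousOn (fun t => z t x) (Ico a b)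
  cont_space : ∀ t ∈ Ico a b, Continuous (z t)
  deriv_time : ∀ t ∈ Ioo a b, ∀ x, HasDerivAt (fun s => z s x) (zt t x) t
  deriv_space : ∀ t ∈ Ioo a b, ∀ x, HasDerivAt (z t) (zx t x) x
  deriv_space₂ : ∀ t ∈ Ioo a b, ∀ x, HasDerivAt (zx t) (zxx t x) x

namespace ParabolicOn

variable {a b : ℝ} {z zt zx zxx w wt wx wxx : ℝ → ℝ → ℝ}

lemma mono (h : ParabolicOn a b z zt zx zxx) {a' b' : ℝ} (ha : a ≤ a') (hb : b' ≤ b) :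
    ParabolicOn a' b' z zt zx zxx where
  cont_time x := (h.cont_time x).mono (Ico_subset_Ico ha hb)
  cont_space t ht := h.cont_space t (Ico_subset_Ico ha hb ht)
  deriv_time t ht := h.deriv_time t (Ioo_subset_Ioo ha hb ht)
  deriv_space t ht := h.deriv_space t (Ioo_subset_Ioo ha hb ht)
  deriv_space₂ t ht := h.deriv_space₂ t (Ioo_subset_Ioo ha hb ht)

lemma add (hz : ParabolicOn a b z zt zx zxx) (hw : ParabolicOn a b w wt wx wxx) :
    ParabolicOn a b (fun t x => z t x + w t x) (fun t x => zt t x + wt t x)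
      (fun t x => zx t x + wx t x) (fun t x => zxx t x + wxx t x) where
  cont_time x := (hz.cont_time x).add (hw.cont_time x)
  cont_space t ht := (hz.cont_space t ht).add (hw.cont_space t ht)
  deriv_time t ht x := (hz.deriv_time t ht x).add (hw.deriv_time t ht x)
  deriv_space t ht x := (hz.deriv_space t ht x).add (hw.deriv_space t ht x)
  deriv_space₂ t ht x := (hz.deriv_space₂ t ht x).add (hw.deriv_space₂ t ht x)

/-- Multiplication by a function of time. -/
lemma time_mul (hz : ParabolicOn a b z zt zx zxx) {c c' : ℝ → ℝ} (hc : ContinuousOn c (Ico a b))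
    (hc' : ∀ t ∈ Ioo a b, HasDerivAt c (c' t) t) :
    ParabolicOn a b (fun t x => c t * z t x) (fun t x => c' t * z t x + c t * zt t x)
      (fun t x => c t * zx t x) (fun t x => c t * zxx t x) where
  cont_time x := hc.mul (hz.cont_time x)
  cont_space t ht := (hz.cont_space t ht).const_mul (c t)
  deriv_time t ht x := (hc' t ht).mul (hz.deriv_time t ht x)
  deriv_space t ht x := (hz.deriv_space t ht x).const_mul (c t)
  deriv_space₂ t ht x := (hz.deriv_space₂ t ht x).const_mul (c t)

lemma sub (hz : ParabolicOn a b z zt zx zxx) (hw : ParabolicOn a b w wt wx wxx) :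
    ParabolicOn a b (fun t x => z t x - w t x) (fun t x => zt t x - wt t x)
      (fun t x => zx t x - wx t x) (fun t x => zxx t x - wxx t x) where
  cont_time x := (hz.cont_time x).sub (hw.cont_time x)
  cont_space t ht := (hz.cont_space t ht).sub (hw.cont_space t ht)
  deriv_time t ht x := (hz.deriv_time t ht x).sub (hw.deriv_time t ht x)
  deriv_space t ht x := (hz.deriv_space t ht x).sub (hw.deriv_space t ht x)
  deriv_space₂ t ht x := (hz.deriv_space₂ t ht x).sub (hw.deriv_space₂ t ht x)

end ParabolicOn

lemma parabolicOn_heat {q : ℝ → ℝ} {C : ℝ} (hq : Continuous q) (hC : ∀ y, |q y| ≤ C) (a b : ℝ) :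
    ParabolicOn a b (fun t x => heat q (t - a) x) (fun t x => heatXX q (t - a) x)
      (fun t x => heatX q (t - a) x) (fun t x => heatXX q (t - a) x) where
  cont_time x := by
    have := continuous_heat hq hC
    exact (this.comp (by fun_prop : Continuous fun t : ℝ => (t - a, x))).continuousOn
  cont_space t _ := by
    have := continuous_heat hq hC
    exact this.comp (by fun_prop : Continuous fun x : ℝ => (t - a, x))
  deriv_time t ht x := by
    have h := (hasDerivAt_heat_time hq hC (sub_pos.2 ht.1) x).comp t ((hasDerivAt_id t).sub_const a)
    exact h.congr_deriv (mul_one _)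
  deriv_space t ht x := hasDerivAt_heat_space hq hC (sub_pos.2 ht.1) x
  deriv_space₂ t ht x := hasDerivAt_heatX_space hq hC (sub_pos.2 ht.1) x

/-! ### The comparison principle under separate regularity -/

/-- A supersolution of the heat equation wherever it is negative, bounded below, and nonnegative
outside `[-R, R]`. -/
structure ConfinedSupersolution (a b R C : ℝ) (z zt zx zxx : ℝ → ℝ → ℝ) : Prop
    extends ParabolicOn a b z zt zx zxx where
  lower : ∀ t ∈ Ico a b, ∀ x, -C ≤ z t x
  outside : ∀ t ∈ Ico a b, ∀ x, R ≤ |x| → 0 ≤ z t x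
  ineq : ∀ t ∈ Ioo a b, ∀ x, z t x < 0 → zxx t x ≤ zt t x

/-- The negative part of `z`. -/
noncomputable def negPt (z : ℝ → ℝ → ℝ) (t x : ℝ) : ℝ := max (-z t x) 0

/-- Upper semicontinuity from the right at time `τ`, uniformly in space. -/
def UpperRight (b : ℝ) (N : ℝ → ℝ → ℝ) (τ : ℝ) : Prop :=
  ∀ ε > 0, ∃ η > 0, ∀ t, τ < t → t < τ + η → t < b → ∀ x, N t x ≤ N τ x + ε

namespace ConfinedSupersolution

variable {a b R C : ℝ} {z zt zx zxx : ℝ → ℝ → ℝ}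

lemma negPt_nonneg (z : ℝ → ℝ → ℝ) (t x : ℝ) : 0 ≤ negPt z t x := le_max_right _ _

lemma neg_le_negPt (z : ℝ → ℝ → ℝ) (t x : ℝ) : -z t x ≤ negPt z t x := le_max_left _ _

lemma negPt_eq_of_pos {t x : ℝ} (h : 0 < negPt z t x) : negPt z t x = -z t x := by
  unfold negPt at h ⊢
  rcases le_total (-z t x) 0 with h1 | h1
  · rw [max_eq_right h1] at h; exact absurd h (lt_irrefl _)
  · exact max_eq_left h1

lemma continuous_negPt (h : ConfinedSupersolution a b R C z zt zx zxx) {t : ℝ} (ht : t ∈ Ico a b) :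
    Continuous (negPt z t) := (h.cont_space t ht).neg.max continuous_const

lemma continuousOn_negPt (h : ConfinedSupersolution a b R C z zt zx zxx) (x : ℝ) :
    ContinuousOn (fun t => negPt z t x) (Ico a b) := 
  ContinuousOn.sup (h.cont_time x).neg continuousOn_const

lemma negPt_eq_zero (h : ConfinedSupersolution a b R C z zt zx zxx) {t x : ℝ} (ht : t ∈ Ico a b)
    (hx : R ≤ |x|) : negPt z t x = 0 :=
  max_eq_right (neg_nonpos.2 (h.outside t ht x hx))

lemma abs_negPt_le (h : ConfinedSupersolution a b R C z zt zx zxx) (hC : 0 ≤ C) {t : ℝ}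
    (ht : t ∈ Ico a b) (x : ℝ) : |negPt z t x| ≤ C := by
  rw [abs_of_nonneg (negPt_nonneg _ _ _)]
  exact max_le (by linarith [h.lower t ht x]) hC

lemma abs_lt_of_neg (h : ConfinedSupersolution a b R C z zt zx zxx) {t x : ℝ} (ht : t ∈ Ico a b)
    (hx : z t x < 0) : |x| < R := by
  by_contra hc
  exact absurd (h.outside t ht x (not_lt.1 hc)) (not_le.2 hx)

/-- Comparison with the heat flow of the negative part, given one-sided uniform continuity. -/
lemma negPt_le_heat (h : ConfinedSupersolution a b R C z zt zx zxx) (hC : 0 ≤ C) {s t₂ : ℝ}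
    (hs : a ≤ s) (hst : s < t₂) (ht₂ : t₂ < b) (hU : ∀ τ ∈ Ico s t₂, UpperRight b (negPt z) τ)
    (x : ℝ) : negPt z t₂ x ≤ heat (negPt z s) (t₂ - s) x := by
  have hsI : s ∈ Ico a b := ⟨hs, hst.trans ht₂⟩
  have hNc := h.continuous_negPt hsI
  have hNb := h.abs_negPt_le hC hsI
  have hψ0 : ∀ t x, 0 ≤ heat (negPt z s) (t - s) x := fun t x => heat_nonneg (negPt_nonneg z s) _ _
  by_contra hlt
  push Not at hlt
  obtain ⟨ε, hε, hεx⟩ : ∃ ε > 0, heat (negPt z s) (t₂ - s) x + ε * (t₂ - s) < negPt z t₂ x := by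
    refine ⟨(negPt z t₂ x - heat (negPt z s) (t₂ - s) x) / (2 * (t₂ - s)), ?_, ?_⟩
    · exact div_pos (by linarith) (by linarith)
    · have : (t₂ - s) ≠ 0 := by linarith
      have e : (negPt z t₂ x - heat (negPt z s) (t₂ - s) x) / (2 * (t₂ - s)) * (t₂ - s)
        = (negPt z t₂ x - heat (negPt z s) (t₂ - s) x) / 2 := by field_simp
      rw [e]; linarith
  set ψ : ℝ → ℝ → ℝ := fun t x => heat (negPt z s) (t - s) x with hψ
  have hψc : Continuous fun p : ℝ × ℝ => ψ p.1 p.2 :=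
    (continuous_heat hNc hNb).comp (by fun_prop : Continuous fun p : ℝ × ℝ => (p.1 - s, p.2))
  set Q : ℝ → ℝ → ℝ := fun t x => z t x + (ψ t x + ε * (t - s)) with hQ
  have hQ2 : Q t₂ x < 0 := by
    have : 0 < negPt z t₂ x := by
      have := hψ0 t₂ x
      have h2 : 0 < ε * (t₂ - s) := mul_pos hε (by linarith)
      linarith
    rw [negPt_eq_of_pos this] at hεx
    simp only [hQ, hψ]; linarith
  obtain ⟨κ, hκ, hκx⟩ : ∃ κ > 0, Q t₂ x = -κ := ⟨-Q t₂ x, by linarith, by ring⟩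
  have hzQ : ∀ t x, s ≤ t → Q t x < 0 → z t x < 0 := fun t x ht hq => by
    have h1 := hψ0 t x
    have h2 : 0 ≤ ε * (t - s) := mul_nonneg hε.le (by linarith)
    simp only [hQ, hψ] at hq; linarith
  set S : Set ℝ := {t | t ∈ Icc s t₂ ∧ ∀ x, -κ < Q t x} with hS
  have hsS : s ∈ S := by
    refine ⟨⟨le_rfl, hst.le⟩, fun y => ?_⟩
    simp only [hQ, hψ, sub_self, heat_zero]
    have := neg_le_negPt z s y
    linarith
  have hSb : BddAbove S := ⟨t₂, fun t ht => ht.1.2⟩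
  set τ := sSup S with hτ
  have hsτ : s ≤ τ := le_csSup hSb hsS
  have hτ2 : τ ≤ t₂ := csSup_le ⟨s, hsS⟩ fun t ht => ht.1.2
  have hτI : τ ∈ Ico a b := ⟨hs.trans hsτ, hτ2.trans_lt ht₂⟩
  have hQc : Continuous (Q τ) := (h.cont_space τ hτI).add
    ((hψc.comp (by fun_prop : Continuous fun y : ℝ => (τ, y))).add continuous_const)
  have hτS : τ ∉ S := by
    intro hmem
    have hτlt : τ < t₂ := by
      refine lt_of_le_of_ne hτ2 fun he => ?_
      rw [he] at hmem
      exact absurd (hmem.2 x) (by rw [hκx]; exact lt_irrefl _)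
    obtain ⟨x₁, hx₁, hmin⟩ := isCompact_Icc.exists_isMinOn (s := Icc (-R) R)
      (by
        have h0 := h.abs_lt_of_neg ⟨hs.trans hst.le, ht₂⟩ (hzQ t₂ x hst.le hQ2)
        have := abs_nonneg x
        exact nonempty_Icc.2 (by linarith)) hQc.continuousOn
    have hgap := hmem.2 x₁
    obtain ⟨e, he, hκe, hgap'⟩ : ∃ e > 0, 2 * e < κ ∧ -κ + 2 * e < Q τ x₁ := by
      refine ⟨min (κ / 4) ((Q τ x₁ + κ) / 4), lt_min (by linarith) (by linarith), ?_, ?_⟩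
      · have := min_le_left (κ / 4) ((Q τ x₁ + κ) / 4); linarith
      · have := min_le_right (κ / 4) ((Q τ x₁ + κ) / 4); linarith
    obtain ⟨η, hη, hUη⟩ := hU τ ⟨hsτ, hτlt⟩ e he
    have hψe := eventually_forall_pos_of_isCompact (g := fun p => ψ p.1 p.2 - ψ τ p.2 + e)
      ((hψc.sub (hψc.comp (by fun_prop : Continuous fun p : ℝ × ℝ => (τ, p.2)))).add
        continuous_const) (isCompact_Icc (a := -R) (b := R)) (s := τ)
      (fun y _ => by simp only [sub_self, zero_add]; exact he)
    obtain ⟨t, ⟨htψ, htU⟩, ht⟩ := (((hψe.filter_mono nhdsWithin_le_nhds).and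
      (Ioo_mem_nhdsGT (show τ < τ + η by linarith))).and (Ioo_mem_nhdsGT hτlt)).exists
    have htS : t ∉ S := fun hc => absurd (le_csSup hSb hc) (not_le.2 ht.1)
    obtain ⟨y, hy⟩ : ∃ y, Q t y ≤ -κ := by
      by_contra hc
      push Not at hc
      exact htS ⟨⟨hsτ.trans ht.1.le, ht.2.le⟩, hc⟩
    have htI : t ∈ Ico a b := ⟨hτI.1.trans ht.1.le, ht.2.trans ht₂⟩
    have hzy := hzQ t y (hsτ.trans ht.1.le) (by linarith)
    have hyR := h.abs_lt_of_neg htI hzy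
    have hyR' : y ∈ Icc (-R) R := abs_le.1 hyR.le
    have h1 := hUη t ht.1 htU.2 htI.2 y
    have h2 := htψ y hyR'
    have h3 := neg_le_negPt z t y
    have h4 : ε * (τ - s) ≤ ε * (t - s) := mul_le_mul_of_nonneg_left (by linarith [ht.1]) hε.le
    have h5 : 0 ≤ ε * (τ - s) := mul_nonneg hε.le (by linarith)
    have h6 := hψ0 τ y
    have h7 : Q τ x₁ ≤ Q τ y := hmin hyR'
    simp only [hQ] at hy h7 hgap'
    have h8 : 0 < negPt z τ y := by
      simp only [hψ] at *
      linarith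
    rw [negPt_eq_of_pos h8] at h1
    linarith
  have hsτ' : s < τ := lt_of_le_of_ne hsτ fun he => hτS (he ▸ hsS)
  obtain ⟨x₀, hx₀⟩ : ∃ y, Q τ y ≤ -κ := by
    by_contra hc
    push Not at hc
    exact hτS ⟨⟨hsτ, hτ2⟩, hc⟩
  have hx₀R := h.abs_lt_of_neg hτI (hzQ τ x₀ hsτ (by linarith))
  obtain ⟨x₁, hx₁, hmin⟩ := isCompact_Icc.exists_isMinOn (s := Icc (-R) R)
    ⟨x₀, abs_le.1 hx₀R.le⟩ hQc.continuousOn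
  have hQ1 : Q τ x₁ ≤ -κ := (hmin (abs_le.1 hx₀R.le)).trans hx₀
  have hz1 := hzQ τ x₁ hsτ (by linarith)
  have hx₁R := h.abs_lt_of_neg hτI hz1
  have hloc : IsLocalMin (Q τ) x₁ :=
    hmin.isLocalMin (Icc_mem_nhds (abs_lt.1 hx₁R).1 (abs_lt.1 hx₁R).2)
  have hτo : τ ∈ Ioo a b := ⟨hs.trans_lt hsτ', hτI.2⟩
  have hp := parabolicOn_heat hNc hNb s b
  have hτo' : τ ∈ Ioo s b := ⟨hsτ', hτI.2⟩
  have hQxx := second_deriv_nonneg_of_isLocalMin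
    (g := Q τ) (g' := fun y => zx τ y + (heatX (negPt z s) (τ - s) y + 0))
    (fun y => (h.deriv_space τ hτo y).add ((hp.deriv_space τ hτo' y).add (hasDerivAt_const y _)))
    ((h.deriv_space₂ τ hτo x₁).add ((hp.deriv_space₂ τ hτo' x₁).add (hasDerivAt_const x₁ _))) hloc
  have hQt : HasDerivAt (fun t => Q t x₁)
      (zt τ x₁ + (heatXX (negPt z s) (τ - s) x₁ + ε * 1)) τ :=
    (h.deriv_time τ hτo x₁).add ((hp.deriv_time τ hτo' x₁).add
      (((hasDerivAt_id τ).sub_const s).const_mul ε))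
  have hev := eventually_lt_of_hasDerivAt_pos hQt (by linarith [h.ineq τ hτo x₁ hz1])
  obtain ⟨l, hl, hlτ⟩ := (mem_nhdsLT_iff_exists_Ioo_subset' hsτ').1 hev
  obtain ⟨t, htS, htl⟩ := exists_lt_of_lt_csSup ⟨s, hsS⟩ (show l < sSup S from hl)
  have htτ : t ≤ τ := le_csSup hSb htS
  rcases htτ.lt_or_eq with h1 | h1
  · have h2 : Q t x₁ < Q τ x₁ := hlτ ⟨htl, h1⟩
    linarith [htS.2 x₁]
  · exact hτS (h1 ▸ htS)

lemma negPt_le_heat_of_gap (h : ConfinedSupersolution a b R C z zt zx zxx) (hC : 0 ≤ C) {s t : ℝ}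
    (hs : a ≤ s) (hst : s < t) (ht : t < b) (hU : ∀ τ ∈ Ioo s t, UpperRight b (negPt z) τ)
    (x : ℝ) : negPt z t x ≤ heat (negPt z s) (t - s) x := by
  have hcont : ContinuousOn (fun r : ℝ => (√(4 * Real.pi * (t - r)))⁻¹) (Iio t) := by
    refine ContinuousOn.inv₀ (by fun_prop) fun r hr => (Real.sqrt_pos.2 ?_).ne'
    have : 0 < t - r := sub_pos.2 hr
    positivity
  have hbd : ∀ᶠ r in 𝓝[>] s, (√(4 * Real.pi * (t - r)))⁻¹ ≤ (√(4 * Real.pi * (t - s)))⁻¹ + 1 := by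
    have := (hcont.continuousAt (Iio_mem_nhds hst)).eventually
      (ge_mem_nhds
          (show (√(4 * Real.pi * (t - s)))⁻¹ < (√(4 * Real.pi * (t - s)))⁻¹ + 1 by linarith))
    exact this.filter_mono nhdsWithin_le_nhds
  have hIoo : ∀ᶠ r in 𝓝[>] s, r ∈ Ioo s t := Ioo_mem_nhdsGT hst
  have hlim : Tendsto (fun r => ∫ y, heatKernel (t - r) (x - y) * negPt z r y) (𝓝[>] s)
      (𝓝 (∫ y, heatKernel (t - s) (x - y) * negPt z s y)) := by
    refine MeasureTheory.tendsto_integral_filter_of_dominated_convergence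
      (fun y => (Icc (-R) R).indicator (fun _ => ((√(4 * Real.pi * (t - s)))⁻¹ + 1) * C) y)
      ?_ ?_ ?_ ?_
    · filter_upwards [hIoo] with r hr
      have h1 := h.continuous_negPt ⟨hs.trans hr.1.le, hr.2.trans ht⟩
      have h2 := continuous_heatKernel (t - r)
      fun_prop
    · filter_upwards [hIoo, hbd] with r hr hb
      refine Eventually.of_forall fun y => ?_
      have hrI : r ∈ Ico a b := ⟨hs.trans hr.1.le, hr.2.trans ht⟩
      by_cases hy : y ∈ Icc (-R) R
      · rw [indicator_of_mem hy, norm_mul]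
        refine mul_le_mul ?_ (h.abs_negPt_le hC hrI y) (norm_nonneg _) (by positivity)
        rw [Real.norm_eq_abs, abs_of_nonneg (heatKernel_nonneg _ _)]
        refine (heatKernel_le_inv_sqrt (sub_pos.2 hr.2).le _).trans hb
      · rw [indicator_of_notMem hy, h.negPt_eq_zero hrI, mul_zero, norm_zero]
        by_contra hc
        exact hy (abs_le.1 (not_le.1 hc).le)
    · exact (integrable_indicator_iff measurableSet_Icc).2 continuous_const.integrableOn_Icc
    · refine Eventually.of_forall fun y => ?_
      refine Tendsto.mul ?_ ?_
      · have h1 : ContinuousAt (fun r : ℝ => heatKernel (t - r) (x - y)) s := by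
          unfold heatKernel
          refine (hcont.continuousAt (Iio_mem_nhds hst)).mul ?_
          refine Real.continuous_exp.continuousAt.comp ?_
          refine ContinuousAt.div (by fun_prop) (by fun_prop) ?_
          have : 0 < t - s := sub_pos.2 hst
          positivity
        exact h1.tendsto.mono_left nhdsWithin_le_nhds
      · have h1 := h.continuousOn_negPt y s ⟨hs, hst.trans ht⟩
        refine h1.tendsto.mono_left ?_
        rw [← nhdsWithin_Ioo_eq_nhdsGT (hst.trans ht)]
        exact nhdsWithin_mono _ fun r hr => ⟨hs.trans hr.1.le, hr.2⟩
  rw [heat_eq_kernel (sub_pos.2 hst)]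
  refine ge_of_tendsto hlim ?_
  filter_upwards [hIoo] with r hr
  rw [← heat_eq_kernel (sub_pos.2 hr.2)]
  exact h.negPt_le_heat hC (hs.trans hr.1.le) hr.2 ht
    (fun τ hτ => hU τ ⟨hr.1.trans_le hτ.1, hτ.2⟩) x

lemma exists_lipschitz_negPt (h : ConfinedSupersolution a b R C z zt zx zxx) (hR : 0 ≤ R) {t : ℝ}
    (ht : t ∈ Ioo a b) : ∃ n : ℕ, ∀ x y, |negPt z t x - negPt z t y| ≤ n * |x - y| := by
  have hcx : ContinuousOn (zx t) (Icc (-R) R) := fun x _ =>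
    (h.deriv_space₂ t ht x).continuousAt.continuousWithinAt
  obtain ⟨M, hM⟩ := isCompact_Icc.exists_bound_of_continuousOn hcx
  obtain ⟨n, hn⟩ := exists_nat_ge M
  have hRR : -R ≤ R := by linarith
  refine ⟨n, fun x y => ?_⟩
  have hproj : ∀ x, negPt z t (projIcc (-R) R hRR x) = negPt z t x := by
    intro x
    by_cases hx : x ∈ Icc (-R) R
    · rw [projIcc_of_mem hRR hx]
    · have hx' : R < |x| := by
        by_contra hc
        exact hx (abs_le.1 (not_lt.1 hc))
      have htI := Ioo_subset_Ico_self ht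
      rw [h.negPt_eq_zero htI hx'.le, h.negPt_eq_zero htI]
      rcases lt_or_ge x (-R) with h1 | h1
      · rw [projIcc_of_le_left hRR h1.le]
        simp only [abs_neg]
        exact le_abs_self R
      · have h2 : R < x := by
          by_contra h2
          exact hx ⟨h1, not_lt.1 h2⟩
        rw [projIcc_of_right_le hRR h2.le]
        exact le_abs_self R
  rw [← hproj x, ← hproj y]
  have hl := (convex_Icc (-R) R).norm_image_sub_le_of_norm_hasDerivWithin_le (f := z t)
    (f' := zx t) (C := M) (fun u _ => (h.deriv_space t ht u).hasDerivWithinAt) hM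
    (projIcc (-R) R hRR y).2 (projIcc (-R) R hRR x).2
  have hd : |(projIcc (-R) R hRR x : ℝ) - projIcc (-R) R hRR y| ≤ |x - y| := by
    have := (LipschitzWith.projIcc hRR).dist_le_mul x y
    rwa [NNReal.coe_one, one_mul, Subtype.dist_eq, Real.dist_eq, Real.dist_eq] at this
  refine (abs_max_sub_max_le_abs _ _ _).trans ?_
  rw [neg_sub_neg, abs_sub_comm]
  exact hl.trans (mul_le_mul hn hd (abs_nonneg _) (Nat.cast_nonneg n))

lemma upperRight (h : ConfinedSupersolution a b R C z zt zx zxx) (hC : 0 ≤ C) (hR : 0 ≤ R) :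
    ∀ τ ∈ Ioo a b, UpperRight b (negPt z) τ := by
  set E : ℕ → Set ℝ := fun n => {t | ∀ x y, |negPt z t x - negPt z t y| ≤ n * |x - y|} with hE
  have hclosed : ∀ n, ∀ t ∈ Ioo a b, t ∈ closure (E n ∩ Ioo a b) → t ∈ E n := by
    intro n t ht htc x y
    have hc : ∀ x, ContinuousWithinAt (fun t => negPt z t x) (E n ∩ Ioo a b) t := fun x =>
      (h.continuousOn_negPt x t (Ioo_subset_Ico_self ht)).mono
        (inter_subset_right.trans Ioo_subset_Ico_self)
    have := mem_closure_iff_nhdsWithin_neBot.1 htc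
    refine le_of_tendsto (((hc x).sub (hc y)).abs) ?_
    filter_upwards [self_mem_nhdsWithin] with s hs using hs.1 x y
  refine forall_of_baire (J := Ioo a b) ?_ _ E hclosed
    (fun t ht => h.exists_lipschitz_negPt hR ht) ?_
  · intro t ht
    obtain ⟨d, hd⟩ := exists_between ht.2
    exact ⟨d, hd.1, fun s hs => ⟨ht.1.trans_le hs.1, hs.2.trans_lt hd.2⟩⟩
  intro t₀ ht₀ n d htd htE hbad ε hε
  have ht₀I := Ioo_subset_Ico_self ht₀
  set A := ∫ ξ, |ξ| ∂(gaussianReal 0 1) with hA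
  have hA0 : 0 ≤ A := integral_nonneg fun ξ => abs_nonneg ξ
  -- equicontinuity on the exceptional set
  have hclose : ∀ᶠ r in 𝓝[Ico a b] t₀, r ∈ E n → ∀ x ∈ Icc (-R) R,
      negPt z r x ≤ negPt z t₀ x + ε / 2 := by
    have hloc : ∀ x, ∃ U ∈ 𝓝 x, ∀ᶠ r in 𝓝[Ico a b] t₀, r ∈ E n → ∀ y ∈ U,
        negPt z r y ≤ negPt z t₀ y + ε / 2 := by
      intro x
      have hn1 : (0:ℝ) < n + 1 := by positivity
      refine ⟨Metric.ball x (ε / 8 / (n + 1)), Metric.ball_mem_nhds x (by positivity), ?_⟩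
      have h1 := (h.continuousOn_negPt x t₀ ht₀I).tendsto.eventually
        (ge_mem_nhds (show negPt z t₀ x < negPt z t₀ x + ε / 8 by linarith))
      filter_upwards [h1] with r hr hrE y hy
      have h2 := (abs_le.1 (hrE y x)).2
      have h3 := (abs_le.1 (htE y x)).1
      rw [Metric.mem_ball, Real.dist_eq] at hy
      have h4 : (n:ℝ) * |y - x| ≤ ε / 8 := by
        calc (n:ℝ) * |y - x| ≤ (n + 1) * (ε / 8 / (n + 1)) := by gcongr; linarith
          _ = ε / 8 := by field_simp
      linarith
    choose U hU hUr using hloc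
    obtain ⟨F, -, hF⟩ := isCompact_Icc.elim_nhds_subcover (s := Icc (-R) R) U fun x _ => hU x
    filter_upwards [(Filter.eventually_all_finset F).2 fun x _ => hUr x] with r hr hrE x hx
    obtain ⟨i, hi, hxi⟩ := mem_iUnion₂.1 (hF hx)
    exact hr i hi hrE x hxi
  obtain ⟨η₁, hη₁, hb1⟩ := Metric.mem_nhdsWithin_iff.1 hclose
  have hsq : ∀ᶠ r in 𝓝 (0:ℝ), (n:ℝ) * √(2 * r) * A < ε / 2 := by
    have hc : Continuous fun r : ℝ => (n:ℝ) * √(2 * r) * A := by fun_prop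
    exact hc.continuousAt.eventually (gt_mem_nhds (by simpa using half_pos hε))
  obtain ⟨η₂, hη₂, hb2⟩ := Metric.eventually_nhds_iff.1 hsq
  refine ⟨min (min η₁ η₂) (d - t₀), lt_min (lt_min hη₁ hη₂) (by linarith), fun t ht htη htb x => ?_⟩
  have m1 := min_le_left (min η₁ η₂) (d - t₀)
  have m2 := min_le_right (min η₁ η₂) (d - t₀)
  have m3 := min_le_left η₁ η₂
  have m4 := min_le_right η₁ η₂
  have hN : ∀ r ∈ E n, t₀ ≤ r → r ≤ t → negPt z r x ≤ negPt z t₀ x + ε / 2 := by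
    intro r hrE h1 h2
    have hrI : r ∈ Ico a b := ⟨ht₀I.1.trans h1, h2.trans_lt htb⟩
    by_cases hx : R ≤ |x|
    · rw [h.negPt_eq_zero hrI hx]
      linarith [negPt_nonneg z t₀ x]
    · refine hb1 ⟨?_, hrI⟩ hrE x (abs_le.1 (not_le.1 hx).le)
      rw [Metric.mem_ball, Real.dist_eq, abs_of_nonneg (by linarith)]
      linarith
  -- the last exceptional time before `t`
  set B : Set ℝ := {r | r ∈ Icc t₀ t ∧ r ∈ E n} with hB
  have hBn : t₀ ∈ B := ⟨⟨le_rfl, ht.le⟩, htE⟩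
  have hBb : BddAbove B := ⟨t, fun r hr => hr.1.2⟩
  set r := sSup B with hr
  have hr1 : t₀ ≤ r := le_csSup hBb hBn
  have hr2 : r ≤ t := csSup_le ⟨t₀, hBn⟩ fun s hs => hs.1.2
  have hJ : ∀ s, t₀ ≤ s → s ≤ t → s ∈ Ioo a b := fun s h1 h2 =>
    ⟨ht₀.1.trans_le h1, h2.trans_lt htb⟩
  have hrE : r ∈ E n := hclosed n r (hJ r hr1 hr2)
    (closure_mono (show B ⊆ E n ∩ Ioo a b from fun s hs => ⟨hs.2, hJ s hs.1.1 hs.1.2⟩)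
      (csSup_mem_closure ⟨t₀, hBn⟩ hBb))
  have hNr := hN r hrE hr1 hr2
  rcases hr2.lt_or_eq with hlt | heq
  · have hrI : r ∈ Ico a b := Ioo_subset_Ico_self (hJ r hr1 hr2)
    have h1 := h.negPt_le_heat_of_gap hC hrI.1 hlt htb (fun τ hτ => by
      by_contra hτb
      have hτE := hbad τ ⟨hr1.trans hτ.1.le, by linarith [hτ.2]⟩
        (hJ τ (hr1.trans hτ.1.le) hτ.2.le) hτb
      have : τ ≤ r := le_csSup hBb ⟨⟨hr1.trans hτ.1.le, hτ.2.le⟩, hτE⟩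
      exact absurd hτ.1 (not_lt.2 this)) x
    have h2 := heat_le_add_of_lipschitz (h.continuous_negPt hrI) (h.abs_negPt_le hC hrI) hrE
      (t - r) x
    have h3 := hb2 (y := t - r) (by
      rw [Real.dist_eq, sub_zero, abs_of_nonneg (by linarith)]; linarith)
    linarith
  · rw [heq] at hNr
    linarith

/-- The comparison principle for supersolutions that are nonnegative outside an interval. -/
theorem nonneg (h : ConfinedSupersolution a b R C z zt zx zxx) (hC : 0 ≤ C) (hR : 0 ≤ R)
    (h0 : ∀ x, 0 ≤ z a x) {t : ℝ} (ht : t ∈ Ico a b) (x : ℝ) : 0 ≤ z t x := by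
  rcases ht.1.eq_or_lt with rfl | hat
  · exact h0 x
  have h1 := h.negPt_le_heat_of_gap hC le_rfl hat ht.2
    (fun τ hτ => h.upperRight hC hR τ ⟨hτ.1, hτ.2.trans ht.2⟩) x
  have h2 : negPt z a = fun _ => 0 := funext fun y => max_eq_right (neg_nonpos.2 (h0 y))
  have h3 : heat (fun _ => 0) (t - a) x = 0 := by simp [heat]
  rw [h2, h3] at h1
  linarith [neg_le_negPt z t x]

end ConfinedSupersolution

/-- The comparison principle on the line for functions bounded below. -/
theorem ParabolicOn.nonneg {a b C L : ℝ} {z zt zx zxx : ℝ → ℝ → ℝ}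
    (h : ParabolicOn a b z zt zx zxx) (hL : 0 ≤ L) (hlow : ∀ t ∈ Ico a b, ∀ x, -C ≤ z t x)
    (hineq : ∀ t ∈ Ioo a b, ∀ x, z t x < 0 → zxx t x + L * z t x ≤ zt t x)
    (h0 : ∀ x, 0 ≤ z a x) {t : ℝ} (ht : t ∈ Ico a b) (x : ℝ) : 0 ≤ z t x := by
  wlog hC : 0 ≤ C generalizing C
  · exact this (C := 0) (fun t ht x => by linarith [hlow t ht x]) le_rfl
  have hexp : ∀ t, HasDerivAt (fun t => Real.exp (-L * (t - a)))
      (-L * Real.exp (-L * (t - a))) t := fun t => by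
    have := (((hasDerivAt_id t).sub_const a).const_mul (-L)).exp
    refine this.congr_deriv ?_
    simp only [id]; ring
  have hquad : ∀ ε : ℝ, ParabolicOn a b (fun t x => ε * (x ^ 2 + 2 * (t - a))) (fun _ _ => 2 * ε)
      (fun _ x => 2 * ε * x) (fun _ _ => 2 * ε) := fun ε =>
    { cont_time := fun x => by fun_prop
      cont_space := fun t _ => by fun_prop
      deriv_time := fun t _ x => by
        refine (((((hasDerivAt_id t).sub_const a).const_mul 2).const_add (x ^ 2)).const_mul
          ε).congr_deriv ?_
        ring
      deriv_space := fun t _ x => by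
        refine (((hasDerivAt_pow 2 x).add_const (2 * (t - a))).const_mul ε).congr_deriv ?_
        push_cast; ring
      deriv_space₂ := fun t _ x => by
        refine ((hasDerivAt_id x).const_mul (2 * ε)).congr_deriv ?_
        ring }
  have key : ∀ ε > 0, 0 ≤ Real.exp (-L * (t - a)) * z t x + ε * (x ^ 2 + 2 * (t - a)) := by
    intro ε hε
    have hp := (h.time_mul (c := fun t => Real.exp (-L * (t - a)))
      (fun t _ => (hexp t).continuousAt.continuousWithinAt) (fun t _ => hexp t)).add (hquad ε)
    have hle1 : ∀ t ∈ Ico a b, Real.exp (-L * (t - a)) ≤ 1 := fun t ht => by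
      rw [Real.exp_le_one_iff]
      have := mul_nonneg hL (sub_nonneg.2 ht.1)
      linarith
    have hlow' : ∀ t ∈ Ico a b, ∀ x, -C ≤ Real.exp (-L * (t - a)) * z t x := fun t ht x => by
      have h1 := hlow t ht x
      have h2 := hle1 t ht
      have h3 := Real.exp_pos (-L * (t - a))
      nlinarith
    have hconf : ConfinedSupersolution a b √(C / ε) C _ _ _ _ :=
      { hp with
        lower := fun t ht x => by
          have h1 := hlow' t ht x
          have h2 : 0 ≤ ε * (x ^ 2 + 2 * (t - a)) := by
            have := sub_nonneg.2 ht.1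
            positivity
          linarith
        outside := fun t ht x hx => by
          have h1 := hlow' t ht x
          have h2 := Real.sqrt_le_iff.1 hx
          rw [sq_abs, div_le_iff₀ hε] at h2
          have h3 : 0 ≤ ε * (2 * (t - a)) := by
            have := sub_nonneg.2 ht.1
            positivity
          nlinarith [h2.2]
        ineq := fun t ht x hx => by
          have h2 : 0 ≤ ε * (x ^ 2 + 2 * (t - a)) := by
            have := sub_nonneg.2 ht.1.le
            positivity
          have h3 := Real.exp_pos (-L * (t - a))
          have hz : z t x < 0 := by
            by_contra hc
            have := mul_nonneg h3.le (not_lt.1 hc)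
            linarith
          have h4 := mul_le_mul_of_nonneg_left (hineq t ht x hz) h3.le
          nlinarith }
    refine hconf.nonneg hC (Real.sqrt_nonneg _) (fun y => ?_) ht x
    have := h0 y
    simp only [sub_self, mul_zero, Real.exp_zero, one_mul, add_zero]
    positivity
  have h1 : 0 ≤ Real.exp (-L * (t - a)) * z t x := by
    have hlim : Tendsto (fun ε : ℝ => Real.exp (-L * (t - a)) * z t x
        + ε * (x ^ 2 + 2 * (t - a))) (𝓝[>] 0) (𝓝 (Real.exp (-L * (t - a)) * z t x)) := by
      have : Continuous fun ε : ℝ => Real.exp (-L * (t - a)) * z t x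
        + ε * (x ^ 2 + 2 * (t - a)) := by fun_prop
      have h2 := this.tendsto 0
      simp only [zero_mul, add_zero] at h2
      exact h2.mono_left nhdsWithin_le_nhds
    refine ge_of_tendsto hlim ?_
    filter_upwards [self_mem_nhdsWithin] with ε hε using key ε hε
  exact nonneg_of_mul_nonneg_right h1 (Real.exp_pos _)

/-! ### Nonnegative solutions of `v_t = v_xx - 2 f v + v²` -/

/-- A nonnegative solution of `v_t = v_xx - 2 f v + v²` on `[a, b) × ℝ`, bounded in space at each
time. -/
structure NonnegSolution (f : ℝ → ℝ) (a b : ℝ) (v vx vxx : ℝ → ℝ → ℝ) : Prop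
    extends ParabolicOn a b v (fun t x => vxx t x - 2 * f x * v t x + v t x ^ 2) vx vxx where
  nonneg : ∀ t ∈ Ico a b, ∀ x, 0 ≤ v t x
  bounded : ∀ t ∈ Ico a b, ∃ M, ∀ x, v t x ≤ M

/-- `v` is bounded on a right neighbourhood of `τ`, uniformly in space. -/
def RightBounded (b : ℝ) (v : ℝ → ℝ → ℝ) (τ : ℝ) : Prop :=
  ∃ η > 0, ∃ K, ∀ t ∈ Ico τ (τ + η), t < b → ∀ x, v t x ≤ K

lemma RightBounded.mono {b b' τ : ℝ} {v : ℝ → ℝ → ℝ} (h : RightBounded b v τ) (hb : b' ≤ b) :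
    RightBounded b' v τ := by
  obtain ⟨η, hη, K, hK⟩ := h
  exact ⟨η, hη, K, fun t ht htb => hK t ht (htb.trans_le hb)⟩

namespace NonnegSolution

variable {f : ℝ → ℝ} {F a b : ℝ} {v vx vxx : ℝ → ℝ → ℝ}

lemma mono (h : NonnegSolution f a b v vx vxx) {a' b' : ℝ} (ha : a ≤ a') (hb : b' ≤ b) :
    NonnegSolution f a' b' v vx vxx where
  toParabolicOn := h.toParabolicOn.mono ha hb
  nonneg t ht := h.nonneg t (Ico_subset_Ico ha hb ht)
  bounded t ht := h.bounded t (Ico_subset_Ico ha hb ht)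

lemma abs_le (h : NonnegSolution f a b v vx vxx) {t M : ℝ} (ht : t ∈ Ico a b)
    (hM : ∀ x, v t x ≤ M) (x : ℝ) : |v t x| ≤ M := by
  rw [abs_of_nonneg (h.nonneg t ht x)]; exact hM x

/-- The heat flow is, up to an exponential factor, a lower bound. -/
lemma heat_le (h : NonnegSolution f a b v vx vxx) (hf : ∀ x, 0 ≤ f x) (hF : ∀ x, f x ≤ F)
    {s t : ℝ} (hs : a ≤ s) (hst : s ≤ t) (ht : t < b) (x : ℝ) :
    heat (v s) (t - s) x ≤ Real.exp (2 * F * (t - s)) * v t x := by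
  have hsI : s ∈ Ico a b := ⟨hs, hst.trans_lt ht⟩
  obtain ⟨M, hM⟩ := h.bounded s hsI
  have hc := h.cont_space s hsI
  have hb := h.abs_le hsI hM
  have hF0 : 0 ≤ F := (hf 0).trans (hF 0)
  have hexp : ∀ t, HasDerivAt (fun t => Real.exp (-(2 * F) * (t - s)))
      (-(2 * F) * Real.exp (-(2 * F) * (t - s))) t := fun t => by
    have := (((hasDerivAt_id t).sub_const s).const_mul (-(2 * F))).exp
    refine this.congr_deriv ?_
    simp only [id]; ring
  have hp := (h.toParabolicOn.mono hs le_rfl).sub ((parabolicOn_heat hc hb s b).time_mul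
    (fun t _ => (hexp t).continuousAt.continuousWithinAt) (fun t _ => hexp t))
  have key := hp.nonneg (C := M) (L := 0) le_rfl (fun r hr y => ?_) (fun r hr y hz => ?_)
    (fun y => ?_) ⟨hst, ht⟩ x
  · have h1 : Real.exp (2 * F * (t - s)) * Real.exp (-(2 * F) * (t - s)) = 1 := by
      rw [← Real.exp_add]; simp
    have h2 := mul_le_mul_of_nonneg_left (sub_nonneg.1 key) (Real.exp_pos (2 * F * (t - s))).le
    rwa [← mul_assoc, h1, one_mul] at h2
  · have h1 := h.nonneg r ⟨hs.trans hr.1, hr.2⟩ y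
    have h2 := SemilinearHeat.heat_le hc hb hM (r - s) y
    have h3 := heat_nonneg (h.nonneg s hsI) (r - s) y
    have h4 : Real.exp (-(2 * F) * (r - s)) ≤ 1 := by
      rw [Real.exp_le_one_iff]
      have := mul_nonneg hF0 (sub_nonneg.2 hr.1)
      linarith
    nlinarith
  · have h1 := h.nonneg r ⟨hs.trans hr.1.le, hr.2⟩ y
    have h2 := mul_nonneg (sub_nonneg.2 (hF y)) h1
    nlinarith [sq_nonneg (v r y)]
  · simp [heat_zero]

/-- An upper bound by the heat flow, given an a priori bound `v ≤ k` with primitive `Λ`. -/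
lemma le_exp_mul_heat (h : NonnegSolution f a b v vx vxx) (hf : ∀ x, 0 ≤ f x) {s e K L : ℝ}
    (hs : a ≤ s) (he : e ≤ b) (hL : 0 ≤ L) (hK : ∀ r ∈ Ico s e, ∀ x, v r x ≤ K) {k Λ : ℝ → ℝ}
    (hΛc : ContinuousOn Λ (Ico s e)) (hΛ : ∀ r ∈ Ioo s e, HasDerivAt Λ (k r) r)
    (hk : ∀ r ∈ Ioo s e, k r ≤ L) (hvk : ∀ r ∈ Ioo s e, ∀ x, v r x ≤ k r)
    {t : ℝ} (ht : t ∈ Ico s e) (x : ℝ) :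
    v t x ≤ Real.exp (Λ t - Λ s) * heat (v s) (t - s) x := by
  have hse : s < e := ht.1.trans_lt ht.2
  have hsI : s ∈ Ico a b := ⟨hs, hse.trans_le he⟩
  have hsI' : s ∈ Ico s e := ⟨le_rfl, hse⟩
  have hM := hK s hsI'
  have hc := h.cont_space s hsI
  have hb := h.abs_le hsI hM
  have hp := ((parabolicOn_heat hc hb s e).time_mul (c := fun t => Real.exp (Λ t - Λ s))
    (Real.continuous_exp.comp_continuousOn (hΛc.sub continuousOn_const))
    (fun t ht => ((hΛ t ht).sub_const (Λ s)).exp)).sub (h.toParabolicOn.mono hs he)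
  have key := hp.nonneg (C := K) hL (fun r hr y => ?_) (fun r hr y hz => ?_)
    (fun y => ?_) ht x
  · exact sub_nonneg.1 key
  · have h1 := hK r hr y
    have h2 := mul_nonneg (Real.exp_pos (Λ r - Λ s)).le
      (heat_nonneg (h.nonneg s hsI) (r - s) y)
    linarith
  · have h1 := h.nonneg r ⟨hs.trans hr.1.le, hr.2.trans_le he⟩ y
    have h2 := hvk r hr y
    have h3 := hk r hr
    have h4 := mul_nonneg (hf y) h1
    have h5 := mul_nonneg h1 (sub_nonneg.2 h2)
    nlinarith
  · simp [heat_zero]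

lemma le_exp_mul_heat_const (h : NonnegSolution f a b v vx vxx) (hf : ∀ x, 0 ≤ f x) {s e K : ℝ}
    (hs : a ≤ s) (he : e ≤ b) (hK : ∀ r ∈ Ico s e, ∀ x, v r x ≤ K) {t : ℝ} (ht : t ∈ Ico s e)
    (x : ℝ) : v t x ≤ Real.exp (K * (t - s)) * heat (v s) (t - s) x := by
  have hK0 : 0 ≤ K := (h.nonneg s ⟨hs, ht.1.trans_lt (ht.2.trans_le he)⟩ 0).trans
    (hK s ⟨le_rfl, ht.1.trans_lt ht.2⟩ 0)
  have := h.le_exp_mul_heat hf hs he hK0 hK (k := fun _ => K) (Λ := fun r => K * r)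
    (by fun_prop) (fun r _ => by simpa using (hasDerivAt_id r).const_mul K)
    (fun _ _ => le_rfl) (fun r hr => hK r (Ioo_subset_Ico_self hr)) ht x
  rwa [← mul_sub] at this

/-- A closed bound passes to the right endpoint. -/
lemma le_of_forall_lt (h : NonnegSolution f a b v vx vxx) {s t : ℝ} (hs : a ≤ s) (hst : s < t)
    (ht : t < b) {κ : ℝ → ℝ} (hκ : ContinuousWithinAt κ (Iio t) t) {x : ℝ}
    (hle : ∀ r ∈ Ioo s t, v r x ≤ κ r) : v t x ≤ κ t := by
  have h1 : ContinuousWithinAt (fun r => v r x) (Ioo s t) t :=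
    (h.cont_time x t ⟨hs.trans hst.le, ht⟩).mono fun r hr => ⟨hs.trans hr.1.le, hr.2.trans ht⟩
  have h2 : ContinuousWithinAt κ (Ioo s t) t := hκ.mono fun r hr => hr.2
  have : (𝓝[Ioo s t] t).NeBot := by
    rw [nhdsWithin_Ioo_eq_nhdsLT hst]; infer_instance
  refine le_of_tendsto_of_tendsto h1.tendsto h2.tendsto ?_
  filter_upwards [self_mem_nhdsWithin] with r hr using hle r hr

/-- Continuous induction for bounds on right-bounded solutions. -/
lemma le_of_induction (h : NonnegSolution f a b v vx vxx) (hf : ∀ x, 0 ≤ f x) {s e θ : ℝ}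
    (hs : a ≤ s) (he : e ≤ b) (hgood : ∀ τ ∈ Ico s e, RightBounded e v τ) {κ : ℝ → ℝ}
    (hκ : ContinuousOn κ (Ico s e)) (hκ0 : ∀ t ∈ Ico s e, 0 < κ t) (hθ : θ < 1)
    (h0 : ∀ x, v s x ≤ κ s)
    (hind : ∀ t ∈ Ico s e, (∀ r ∈ Icc s t, ∀ x, v r x ≤ κ r) → ∀ x, v t x ≤ θ * κ t) :
    ∀ t ∈ Ico s e, ∀ x, v t x ≤ κ t := by
  intro t₁ ht₁ x₁
  by_contra hviol
  set S : Set ℝ := {t | t ∈ Ico s e ∧ ∃ x, κ t < v t x} with hS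
  have hSn : t₁ ∈ S := ⟨ht₁, x₁, not_le.1 hviol⟩
  have hSb : BddBelow S := ⟨s, fun t ht => ht.1.1⟩
  set τ := sInf S with hτ
  have hτ1 : s ≤ τ := le_csInf ⟨t₁, hSn⟩ fun t ht => ht.1.1
  have hτ2 : τ ≤ t₁ := csInf_le hSb hSn
  have hτI : τ ∈ Ico s e := ⟨hτ1, hτ2.trans_lt ht₁.2⟩
  have hlt : ∀ r ∈ Ico s τ, ∀ x, v r x ≤ κ r := by
    intro r hr x
    by_contra hc
    exact absurd (csInf_le hSb (show r ∈ S from ⟨⟨hr.1, hr.2.trans hτI.2⟩, x, not_le.1 hc⟩))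
      (not_le.2 hr.2)
  have hτκ : ∀ x, v τ x ≤ κ τ := by
    rcases hτ1.eq_or_lt with h1 | h1
    · rw [← h1]; exact h0
    · intro x
      refine h.le_of_forall_lt hs h1 (hτI.2.trans_le he) ?_
        (fun r hr => hlt r (Ioo_subset_Ico_self hr) x)
      have h2 := (hκ τ hτI).mono (show Ioo s τ ⊆ Ico s e from
        fun r hr => ⟨hr.1.le, hr.2.trans hτI.2⟩)
      rwa [ContinuousWithinAt, nhdsWithin_Ioo_eq_nhdsLT h1] at h2
  have hθκ := hind τ hτI fun r hr x => by
    rcases hr.2.eq_or_lt with h1 | h1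
    · rw [h1]; exact hτκ x
    · exact hlt r ⟨hr.1, h1⟩ x
  obtain ⟨η, hη, K, hK⟩ := hgood τ hτI
  have hev : ∀ᶠ t in 𝓝[Ico τ e] τ, Real.exp (K * (t - τ)) * (θ * κ τ) < κ t := by
    have h1 : ContinuousWithinAt (fun t => κ t - Real.exp (K * (t - τ)) * (θ * κ τ)) (Ico τ e) τ :=
      ((hκ τ hτI).mono (Ico_subset_Ico_left hτ1)).sub (by fun_prop)
    have h2 : 0 < κ τ - Real.exp (K * (τ - τ)) * (θ * κ τ) := by
      have := hκ0 τ hτI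
      simp only [sub_self, mul_zero, Real.exp_zero, one_mul]
      nlinarith
    filter_upwards [h1.tendsto.eventually (lt_mem_nhds h2)] with t ht using sub_pos.1 ht
  obtain ⟨η', hη', hball⟩ := Metric.mem_nhdsWithin_iff.1 hev
  obtain ⟨t, htS, htη⟩ := exists_lt_of_csInf_lt ⟨t₁, hSn⟩
    (show sInf S < τ + min η η' from by have := lt_min hη hη'; linarith)
  have htτ : τ ≤ t := csInf_le hSb htS
  obtain ⟨x, hx⟩ := htS.2
  have hmin1 := min_le_left η η'
  have hmin2 := min_le_right η η'
  have hτb : τ ∈ Ico a b := ⟨hs.trans hτ1, hτI.2.trans_le he⟩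
  have h1 := h.le_exp_mul_heat_const hf (s := τ) (e := min (τ + η) e) (K := K) hτb.1
    ((min_le_right _ _).trans he) (fun r hr x => hK r ⟨hr.1, hr.2.trans_le (min_le_left _ _)⟩
      (hr.2.trans_le (min_le_right _ _)) x) (t := t) ⟨htτ, lt_min (by linarith) htS.1.2⟩ x
  have h2 := SemilinearHeat.heat_le (h.cont_space τ hτb) (h.abs_le hτb hθκ) hθκ (t - τ) x
  have h3 : Real.exp (K * (t - τ)) * (θ * κ τ) < κ t := hball ⟨by
    rw [Metric.mem_ball, Real.dist_eq, abs_of_nonneg (by linarith)]; linarith, htτ, htS.1.2⟩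
  have h4 := mul_le_mul_of_nonneg_left h2 (Real.exp_pos (K * (t - τ))).le
  linarith

/-- A right-bounded solution at most doubles in time `1 / (8 M)`. -/
lemma le_two_mul (h : NonnegSolution f a b v vx vxx) (hf : ∀ x, 0 ≤ f x) {s e M : ℝ}
    (hs : a ≤ s) (he : e ≤ b) (hM : 0 < M) (heM : e ≤ s + 1 / (8 * M))
    (hgood : ∀ τ ∈ Ico s e, RightBounded e v τ) (h0 : ∀ x, v s x ≤ M) :
    ∀ t ∈ Ico s e, ∀ x, v t x ≤ 2 * M := by
  intro t₁ ht₁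
  have hsI : s ∈ Ico a b := ⟨hs, ht₁.1.trans_lt (ht₁.2.trans_le he)⟩
  refine h.le_of_induction hf (θ := 3 / 4) hs he hgood (κ := fun _ => 2 * M) continuousOn_const
    (fun _ _ => by positivity) (by norm_num) (fun x => by linarith [h0 x]) ?_ t₁ ht₁
  intro t ht hle x
  rcases ht.1.eq_or_lt with h1 | h1
  · rw [← h1]; linarith [h0 x]
  refine h.le_of_forall_lt (κ := fun _ => 3 / 4 * (2 * M)) hs h1 (ht.2.trans_le he)
    continuousWithinAt_const fun r hr => ?_
  have h2 := h.le_exp_mul_heat_const hf (K := 2 * M) (e := t) hs (ht.2.le.trans he)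
    (fun r hr => hle r (Ico_subset_Icc_self hr)) (Ioo_subset_Ico_self hr) x
  have h3 := SemilinearHeat.heat_le (h.cont_space s hsI) (h.abs_le hsI h0) h0 (r - s) x
  have h4 : Real.exp (2 * M * (r - s)) ≤ 4 / 3 := by
    have h5 : 2 * M * (r - s) ≤ 1 / 4 := by
      have h6 : r - s ≤ 1 / (8 * M) := by linarith [hr.2, ht.2]
      calc 2 * M * (r - s) ≤ 2 * M * (1 / (8 * M)) := by gcongr
        _ = 1 / 4 := by field_simp; norm_num
    refine (Real.exp_le_exp.2 h5).trans ?_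
    have h7 := Real.add_one_le_exp (-(1 / 4) : ℝ)
    rw [Real.exp_neg] at h7
    have h8 := Real.exp_pos (1 / 4)
    rw [le_div_iff₀ (by norm_num)]
    have h9 : (Real.exp (1 / 4))⁻¹ * Real.exp (1 / 4) = 1 := inv_mul_cancel₀ h8.ne'
    nlinarith
  calc v r x ≤ _ := h2
    _ ≤ 4 / 3 * M := mul_le_mul h4 h3 (heat_nonneg (h.nonneg s hsI) _ _) (by norm_num)
    _ ≤ _ := by linarith

end NonnegSolution

/-- A covering argument: if near every point all small symmetric averages are eventually bounded
by `D`, then so are weighted averages over long intervals. -/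
lemma exists_eventually_integral_mul_le {l : Filter ℝ} {g : ℝ → ℝ → ℝ} {w : ℝ → ℝ}
    (hw : Continuous w) (hw0 : ∀ y, 0 < w y) {D : ℝ} (hD : 0 ≤ D)
    (hg : ∀ᶠ s in l, Continuous (g s) ∧ ∀ y, 0 ≤ g s y)
    (hloc : ∀ x, ∀ᶠ r in 𝓝[>] (0:ℝ), ∀ᶠ s in l, ∫ y in (x - r)..(x + r), g s y ≤ D * r)
    (p q : ℝ) : ∃ x, p ≤ x ∧ q ≤ x ∧
      ∀ᶠ s in l, ∫ y in p..x, w y * g s y ≤ 2 * D * ∫ y in p..x, w y := by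
  set S : Set ℝ := {x | p ≤ x ∧ ∀ᶠ s in l, ∫ y in p..x, w y * g s y ≤ 2 * D * ∫ y in p..x, w y}
    with hS
  have hpS : p ∈ S := ⟨le_rfl, Eventually.of_forall fun s => by simp⟩
  suffices hunb : ¬ BddAbove S by
    obtain ⟨x, hx, hqx⟩ := not_bddAbove_iff.1 hunb q
    exact ⟨x, hx.1, hqx.le, hx.2⟩
  intro hbdd
  set x₀ := sSup S with hx₀
  have hpx : p ≤ x₀ := le_csSup hbdd hpS
  have hW := hw0 x₀
  have hnear : ∀ᶠ y in 𝓝 x₀, 2 / 3 * w x₀ < w y ∧ w y < 4 / 3 * w x₀ :=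
    (hw.continuousAt.eventually (lt_mem_nhds (by linarith))).and
      (hw.continuousAt.eventually (gt_mem_nhds (by linarith)))
  obtain ⟨ρ, hρ, hball⟩ := Metric.eventually_nhds_iff.1 hnear
  obtain ⟨r, hr, hr0, hrρ⟩ := ((hloc x₀).and (Ioo_mem_nhdsGT hρ)).exists
  obtain ⟨x₁, hx₁S, hx₁⟩ := exists_lt_of_lt_csSup ⟨p, hpS⟩ (show x₀ - r < sSup S by linarith)
  have hx₁x₀ : x₁ ≤ x₀ := le_csSup hbdd hx₁S
  have hmem : x₀ + r ∈ S := by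
    refine ⟨by linarith, ?_⟩
    filter_upwards [hr, hx₁S.2, hg] with s hs hs1 hgs
    have hwg : Continuous fun y => w y * g s y := hw.mul hgs.1
    have hle : x₁ ≤ x₀ + r := by linarith
    have hin : ∀ y ∈ Icc x₁ (x₀ + r), 2 / 3 * w x₀ < w y ∧ w y < 4 / 3 * w x₀ := fun y hy =>
      hball (by rw [Real.dist_eq, abs_lt]; exact ⟨by linarith [hy.1], by linarith [hy.2]⟩)
    have h1 : ∫ y in x₁..(x₀ + r), w y * g s y ≤ 4 / 3 * w x₀ * (D * r) := by
      calc ∫ y in x₁..(x₀ + r), w y * g s y ≤ ∫ y in x₁..(x₀ + r), 4 / 3 * w x₀ * g s y :=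
            intervalIntegral.integral_mono_on hle (hwg.intervalIntegrable _ _)
              ((hgs.1.const_mul _).intervalIntegrable _ _)
              fun y hy => mul_le_mul_of_nonneg_right (hin y hy).2.le (hgs.2 y)
        _ = 4 / 3 * w x₀ * ∫ y in x₁..(x₀ + r), g s y := intervalIntegral.integral_const_mul _ _
        _ ≤ 4 / 3 * w x₀ * (D * r) := by
            refine mul_le_mul_of_nonneg_left (le_trans ?_ hs) (by positivity)
            exact intervalIntegral.integral_mono_interval (by linarith) hle le_rfl
              (Eventually.of_forall hgs.2) (hgs.1.intervalIntegrable _ _)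
    have h2 : 2 / 3 * w x₀ * r ≤ ∫ y in x₁..(x₀ + r), w y := by
      have := intervalIntegral.integral_mono_on hle (f := fun _ => 2 / 3 * w x₀) (g := w)
        (μ := volume) (by simp) (hw.intervalIntegrable _ _) fun y hy => (hin y hy).1.le
      rw [intervalIntegral.integral_const, smul_eq_mul] at this
      refine le_trans ?_ this
      rw [mul_comm]
      exact mul_le_mul_of_nonneg_right (by linarith) (by positivity)
    rw [← intervalIntegral.integral_add_adjacent_intervals (hwg.intervalIntegrable p x₁)
      (hwg.intervalIntegrable x₁ (x₀ + r)), ← intervalIntegral.integral_add_adjacent_intervals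
      (hw.intervalIntegrable p x₁) (hw.intervalIntegrable x₁ (x₀ + r))]
    have h3 := mul_le_mul_of_nonneg_left h2 (show 0 ≤ 2 * D by linarith)
    nlinarith
  linarith [le_csSup hbdd hmem]

lemma heatKernel_le_heatKernel_of_far {τ h : ℝ} (hτ : 0 < τ) (hh : τ < h) :
    ∃ ρ > 0, ∀ z : ℝ, ρ ≤ |z| → heatKernel τ z ≤ heatKernel h z := by
  have hh0 : 0 < h := hτ.trans hh
  set c := (4 * τ)⁻¹ - (4 * h)⁻¹ with hc
  have hc0 : 0 < c := sub_pos.2 (inv_strictAnti₀ (by linarith) (by linarith))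
  have hq : 0 < √(4 * Real.pi * h) / √(4 * Real.pi * τ) := by positivity
  refine ⟨√(√(4 * Real.pi * h) / √(4 * Real.pi * τ) / c), by positivity, fun z hz => ?_⟩
  have h1 := (Real.sqrt_le_iff.1 hz).2
  rw [sq_abs, div_le_iff₀ hc0] at h1
  have h2 : √(4 * Real.pi * h) / √(4 * Real.pi * τ) ≤ Real.exp (c * z ^ 2) := by
    have := Real.add_one_le_exp (c * z ^ 2)
    linarith
  rw [heatKernel_eq, heatKernel_eq]
  have h3 : Real.exp (-(4 * h)⁻¹ * z ^ 2) =
      Real.exp (c * z ^ 2) * Real.exp (-(4 * τ)⁻¹ * z ^ 2) := by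
    rw [← Real.exp_add]; congr 1; rw [hc]; ring
  rw [h3, ← mul_assoc]
  refine mul_le_mul_of_nonneg_right ?_ (Real.exp_pos _).le
  calc (√(4 * Real.pi * τ))⁻¹ = (√(4 * Real.pi * h))⁻¹ *
        (√(4 * Real.pi * h) / √(4 * Real.pi * τ)) := by
        have : 0 < √(4 * Real.pi * h) := by positivity
        field_simp
    _ ≤ _ := by gcongr

namespace NonnegSolution

variable {f : ℝ → ℝ} {F a b : ℝ} {v vx vxx : ℝ → ℝ → ℝ}

/-- Uniform bounds just after the left end of an interval of right-bounded times. -/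
lemma exists_heat_bounds (h : NonnegSolution f a b v vx vxx) (hf : ∀ x, 0 ≤ f x)
    (hF : ∀ x, f x ≤ F) (hab : a < b) (hgood : ∀ τ ∈ Ioo a b, RightBounded b v τ) :
    ∃ h₀ > 0, ∃ M, 0 ≤ M ∧ ∃ η > 0, ∃ δ > 0, δ ≤ h₀ ∧ a + δ ≤ b ∧ ∀ s ∈ Ioo a (a + η), s < b ∧
      (∀ x, heat (v s) h₀ x ≤ M) ∧
      ∀ t ∈ Ico s (s + δ), t < b → ∀ x, v t x ≤ Real.exp 1 * heat (v s) (t - s) x := by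
  obtain ⟨m, hm⟩ := exists_between hab
  obtain ⟨η₀, hη₀, K, hK⟩ := hgood m hm
  set h₀ := m - a with hh₀
  have hh₀0 : 0 < h₀ := sub_pos.2 hm.1
  have hmI : m ∈ Ico a b := ⟨hm.1.le, hm.2⟩
  have hK0 : 0 ≤ K := (h.nonneg m hmI 0).trans (hK m ⟨le_rfl, by linarith⟩ hm.2 0)
  set M := Real.exp (2 * F * h₀) * K with hM
  have hM0 : 0 ≤ M := mul_nonneg (Real.exp_pos _).le hK0
  set A := √h₀ * (M + 1) with hA
  have hA0 : 0 < A := mul_pos (Real.sqrt_pos.2 hh₀0) (by linarith)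
  set B := 6 * A with hB
  have hB0 : 0 < B := by positivity
  set δ := min h₀ (1 / (8 * B ^ 2)) with hδ
  have hδ0 : 0 < δ := lt_min hh₀0 (by positivity)
  have hδh : δ ≤ h₀ := min_le_left _ _
  refine ⟨h₀, hh₀0, M, hM0, min η₀ (b - m), lt_min hη₀ (sub_pos.2 hm.2), δ, hδ0, hδh,
    by linarith [hm.2], fun s hs => ?_⟩
  have hs1 : s - a < η₀ := by linarith [hs.2, min_le_left η₀ (b - m)]
  have hs2 : s - a < b - m := by linarith [hs.2, min_le_right η₀ (b - m)]
  have hsa := hs.1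
  have hsb : s < b := by linarith [hm.1]
  have hsI : s ∈ Ico a b := ⟨hsa.le, hsb⟩
  obtain ⟨N, hN⟩ := h.bounded s hsI
  have hc := h.cont_space s hsI
  have hb := h.abs_le hsI hN
  have hN0 : 0 ≤ N := (h.nonneg s hsI 0).trans (hN 0)
  have hheat : ∀ x, heat (v s) h₀ x ≤ M := fun x => by
    have h1 := h.heat_le hf hF (s := s) (t := s + h₀) hsa.le (by linarith) (by linarith) x
    rw [add_sub_cancel_left] at h1
    refine h1.trans (mul_le_mul_of_nonneg_left (hK _ ⟨by linarith, by linarith⟩ (by linarith) x)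
      (Real.exp_pos _).le)
  refine ⟨hsb, hheat, ?_⟩
  obtain ⟨σ, hσ0, hσδ, hσA⟩ : ∃ σ > 0, σ ≤ δ ∧ N * √(2 * σ) ≤ A := by
    refine ⟨min δ (A ^ 2 / (2 * (N + 1) ^ 2)), lt_min hδ0 (by positivity), min_le_left _ _, ?_⟩
    have h1 : √(2 * min δ (A ^ 2 / (2 * (N + 1) ^ 2))) ≤ A / (N + 1) := by
      refine Real.sqrt_le_iff.2 ⟨by positivity, ?_⟩
      calc _ ≤ 2 * (A ^ 2 / (2 * (N + 1) ^ 2)) := by gcongr; exact min_le_right _ _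
        _ = (A / (N + 1)) ^ 2 := by field_simp
    calc N * √(2 * min δ (A ^ 2 / (2 * (N + 1) ^ 2))) ≤ N * (A / (N + 1)) := by gcongr
      _ ≤ A := by rw [← mul_div_assoc, div_le_iff₀ (by positivity)]; nlinarith
  set e := min (s + δ) b with he
  have heb : e ≤ b := min_le_right _ _
  have heδ : e ≤ s + δ := min_le_left _ _
  have hse : s < e := lt_min (by linarith) hsb
  have hpos : ∀ r, s ≤ r → 0 < r - s + σ := fun r hr => by linarith
  have hspos : ∀ r, s ≤ r → 0 < √(r - s + σ) := fun r hr => Real.sqrt_pos.2 (hpos r hr)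
  set κ : ℝ → ℝ := fun r => B / √(r - s + σ) with hκ
  have hκc : ContinuousOn κ (Ici s) :=
    continuousOn_const.div (by fun_prop) fun r hr => (hspos r hr).ne'
  have hheat' : ∀ t ∈ Ico s e, ∀ x, heat (v s) (t - s) x ≤ √2 * A / √(t - s + σ) := by
    intro t ht x
    rw [le_div_iff₀ (hspos t ht.1)]
    have hs2' : (1:ℝ) ≤ √2 := Real.one_le_sqrt.2 (by norm_num)
    rcases le_or_gt (t - s) σ with h1 | h1
    · have h2 := SemilinearHeat.heat_le hc hb hN (t - s) x
      calc heat (v s) (t - s) x * √(t - s + σ) ≤ N * √(2 * σ) := by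
            gcongr; linarith
        _ ≤ A := hσA
        _ ≤ √2 * A := by nlinarith
    · have hts : 0 < t - s := hσ0.trans h1
      have h2 := heat_le_mul_heat hc hb (h.nonneg s hsI) hts
        (show t - s ≤ h₀ by linarith [ht.2]) x
      have h3 : √(h₀ / (t - s)) * √(t - s + σ) ≤ √2 * √h₀ := by
        rw [← Real.sqrt_mul (by positivity), ← Real.sqrt_mul (by norm_num)]
        refine Real.sqrt_le_sqrt ?_
        rw [div_mul_eq_mul_div, div_le_iff₀ hts]
        nlinarith
      calc heat (v s) (t - s) x * √(t - s + σ)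
          ≤ √(h₀ / (t - s)) * heat (v s) h₀ x * √(t - s + σ) := by gcongr
        _ = (√(h₀ / (t - s)) * √(t - s + σ)) * heat (v s) h₀ x := by ring
        _ ≤ (√2 * √h₀) * (M + 1) := by
            refine mul_le_mul h3 (by linarith [hheat x]) (heat_nonneg (h.nonneg s hsI) _ _)
              (by positivity)
        _ = √2 * A := by rw [hA]; ring
  have hB2 : 2 * B * √(2 * δ) ≤ 1 := by
    have h1 : √(2 * δ) ≤ 1 / (2 * B) := by
      refine Real.sqrt_le_iff.2 ⟨by positivity, ?_⟩
      calc 2 * δ ≤ 2 * (1 / (8 * B ^ 2)) := by gcongr; exact min_le_right _ _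
        _ = (1 / (2 * B)) ^ 2 := by field_simp; norm_num
    calc 2 * B * √(2 * δ) ≤ 2 * B * (1 / (2 * B)) := by gcongr
      _ = 1 := by field_simp
  have hup : ∀ e' ≤ e, (∀ r ∈ Ico s e', ∀ x, v r x ≤ κ r) →
      ∀ r ∈ Ico s e', ∀ x, v r x ≤ Real.exp 1 * heat (v s) (r - s) x := by
    intro e' he' hle r hr x
    have hκL : ∀ r, s ≤ r → κ r ≤ B / √σ := fun r hr => by
      simp only [hκ]
      gcongr
      linarith
    have h1 := h.le_exp_mul_heat hf hsa.le (he'.trans heb) (K := B / √σ) (L := B / √σ)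
      (by positivity) (fun r hr x => (hle r hr x).trans (hκL r hr.1)) (k := κ)
      (Λ := fun r => 2 * B * √(r - s + σ)) (by fun_prop) (fun r hr => by
        have h2 : HasDerivAt (fun r : ℝ => r - s + σ) 1 r :=
          ((hasDerivAt_id r).sub_const s).add_const σ
        refine ((h2.sqrt (hpos r hr.1.le).ne').const_mul (2 * B)).congr_deriv ?_
        have := hspos r hr.1.le
        simp only [hκ]
        field_simp) (fun r hr => hκL r hr.1.le) (fun r hr => hle r (Ioo_subset_Ico_self hr)) hr x
    refine h1.trans (mul_le_mul_of_nonneg_right (Real.exp_le_exp.2 ?_)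
      (heat_nonneg (h.nonneg s hsI) _ _))
    have h3 : √(r - s + σ) ≤ √(2 * δ) := Real.sqrt_le_sqrt (by linarith [hr.2])
    have h4 : 0 ≤ 2 * B * √(s - s + σ) := by positivity
    have h5 := mul_le_mul_of_nonneg_left h3 (show 0 ≤ 2 * B by positivity)
    linarith
  have hnum : ∀ t ∈ Ico s e, Real.exp 1 * (√2 * A / √(t - s + σ)) ≤ 3 / 4 * κ t := by
    intro t ht
    have h1 := hspos t ht.1
    have h2 : √2 ≤ 3 / 2 := Real.sqrt_le_iff.2 ⟨by norm_num, by norm_num⟩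
    have h3 := Real.exp_one_lt_three
    have h4 : Real.exp 1 * √2 ≤ 3 * (3 / 2) := mul_le_mul h3.le h2 (by positivity) (by norm_num)
    calc Real.exp 1 * (√2 * A / √(t - s + σ)) = (Real.exp 1 * √2) * (A / √(t - s + σ)) := by ring
      _ ≤ (3 * (3 / 2)) * (A / √(t - s + σ)) := by gcongr
      _ = 3 / 4 * κ t := by simp only [hκ, hB]; ring
  have hsmall : ∀ x, v s x ≤ 3 / 4 * κ s := fun x => by
    have h1 := hheat' s ⟨le_rfl, hse⟩ x
    have h2 := hnum s ⟨le_rfl, hse⟩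
    rw [sub_self, heat_zero] at h1
    have h3 : √2 * A / √(0 + σ) ≤ Real.exp 1 * (√2 * A / √(0 + σ)) :=
      le_mul_of_one_le_left (by positivity) (Real.one_le_exp (by norm_num))
    rw [sub_self] at h2
    linarith
  have hκpos : ∀ t ∈ Ico s e, 0 < κ t := fun t ht => div_pos hB0 (hspos t ht.1)
  have hmain := h.le_of_induction hf (θ := 3 / 4) hsa.le heb
    (fun τ hτ => (hgood τ ⟨hsa.trans_le hτ.1, hτ.2.trans_le heb⟩).mono heb)
    (hκc.mono fun r hr => hr.1) hκpos (by norm_num)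
    (fun x => (hsmall x).trans (by linarith [hκpos s ⟨le_rfl, hse⟩]))
    (fun t ht hle x => by
      rcases ht.1.eq_or_lt with h1 | h1
      · rw [← h1]; exact hsmall x
      refine h.le_of_forall_lt (κ := fun r => 3 / 4 * κ r) hsa.le h1 (ht.2.trans_le heb)
        (((hκc.continuousAt (Ici_mem_nhds h1)).const_mul _).continuousWithinAt) fun r hr => ?_
      have hrI : r ∈ Ico s e := ⟨hr.1.le, hr.2.trans ht.2⟩
      refine (hup t ht.2.le (fun r hr => hle r (Ico_subset_Icc_self hr)) r
        (Ioo_subset_Ico_self hr) x).trans (le_trans ?_ (hnum r hrI))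
      exact mul_le_mul_of_nonneg_left (hheat' r hrI x) (Real.exp_pos _).le)
  exact fun t ht htb x => hup e le_rfl hmain t ⟨ht.1, lt_min ht.2 htb⟩ x

/-- Local averages just after time `a` are controlled by the pointwise bound at time `a`. -/
lemma eventually_integral_le (h : NonnegSolution f a b v vx vxx) (hf : ∀ x, 0 ≤ f x)
    (hF : ∀ x, f x ≤ F) (hab : a < b) {n : ℝ} (hn : ∀ x, v a x ≤ n) (x : ℝ) :
    ∀ᶠ r in 𝓝[>] (0:ℝ), ∀ᶠ s in 𝓝[>] a, ∫ y in (x - r)..(x + r), v s y ≤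
      (√(4 * Real.pi) * Real.exp (1 / 2) * Real.exp 1 * (n + 1)) * r := by
  have hF0 : 0 ≤ F := (hf 0).trans (hF 0)
  have hc : ContinuousWithinAt (fun t => v t x) (Ico a b) a := h.cont_time x a ⟨le_rfl, hab⟩
  have h1 := hc.tendsto.eventually (gt_mem_nhds (show v a x < n + 1 by linarith [hn x]))
  obtain ⟨η, hη, hball⟩ := Metric.mem_nhdsWithin_iff.1 h1
  have hsq : Tendsto (fun r : ℝ => r ^ 2) (𝓝[>] 0) (𝓝 0) := by
    have : Continuous fun r : ℝ => r ^ 2 := by fun_prop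
    have h2 := this.tendsto 0
    rw [zero_pow two_ne_zero] at h2
    exact h2.mono_left nhdsWithin_le_nhds
  filter_upwards [self_mem_nhdsWithin, hsq.eventually (gt_mem_nhds hη),
    hsq.eventually (gt_mem_nhds (sub_pos.2 hab)),
    hsq.eventually (gt_mem_nhds (show 0 < 1 / (2 * F + 1) by positivity))] with r hr hr1 hr2 hr3
  have hr0 : 0 < r := hr
  filter_upwards [Ioo_mem_nhdsGT (show a < a + r ^ 2 / 2 by nlinarith)] with s hs
  have hsb : s < b := by nlinarith [hs.2]
  have hsI : s ∈ Ico a b := ⟨hs.1.le, hsb⟩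
  set τ := a + r ^ 2 - s with hτ
  have hτ1 : r ^ 2 / 2 ≤ τ := by linarith [hs.2]
  have hτ2 : τ ≤ r ^ 2 := by linarith [hs.1]
  have hτ0 : 0 < τ := by nlinarith
  obtain ⟨N, hN⟩ := h.bounded s hsI
  have hvc := h.cont_space s hsI
  have hvb := h.abs_le hsI hN
  have hheat := h.heat_le hf hF (s := s) (t := a + r ^ 2) hs.1.le (by linarith) (by linarith) x
  have hva : v (a + r ^ 2) x ≤ n + 1 := by
    refine le_of_lt (hball ⟨?_, by nlinarith, by linarith⟩)
    rw [Metric.mem_ball, Real.dist_eq, add_sub_cancel_left, abs_of_nonneg (by positivity)]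
    exact hr1
  have hexp : Real.exp (2 * F * τ) ≤ Real.exp 1 := by
    refine Real.exp_le_exp.2 ?_
    have h3 : r ^ 2 * (2 * F + 1) < 1 := by
      rwa [lt_div_iff₀ (by positivity)] at hr3
    nlinarith
  have hn0 : 0 ≤ n := (h.nonneg a ⟨le_rfl, hab⟩ 0).trans (hn 0)
  have hup : heat (v s) τ x ≤ Real.exp 1 * (n + 1) :=
    hheat.trans (mul_le_mul hexp hva (h.nonneg _ ⟨by nlinarith, by linarith⟩ x)
      (Real.exp_pos _).le)
  have hker : ∀ y ∈ Icc (x - r) (x + r),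
      (√(4 * Real.pi) * r * Real.exp (1 / 2))⁻¹ ≤ heatKernel τ (x - y) := by
    intro y hy
    rw [heatKernel, mul_inv, ← Real.exp_neg]
    have h5 : (x - y) ^ 2 ≤ r ^ 2 := by
      rw [sq_le_sq, abs_of_pos hr0]
      exact _root_.abs_le.2 ⟨by linarith [hy.2], by linarith [hy.1]⟩
    refine mul_le_mul ?_ (Real.exp_le_exp.2 ?_) (Real.exp_pos _).le (by positivity)
    · refine inv_anti₀ (by positivity) ?_
      rw [Real.sqrt_mul (by positivity)]
      refine mul_le_mul_of_nonneg_left ?_ (Real.sqrt_nonneg _)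
      exact Real.sqrt_le_iff.2 ⟨hr0.le, hτ2⟩
    · rw [neg_div, neg_le_neg_iff, div_le_iff₀ (by positivity)]
      nlinarith
  have hlow : (√(4 * Real.pi) * r * Real.exp (1 / 2))⁻¹ * ∫ y in (x - r)..(x + r), v s y
      ≤ heat (v s) τ x := by
    rw [heat_eq_kernel hτ0, ← intervalIntegral.integral_const_mul]
    have hi := integrable_heatKernel_mul hvc hvb hτ0 x
    calc _ ≤ ∫ y in (x - r)..(x + r), heatKernel τ (x - y) * v s y :=
          intervalIntegral.integral_mono_on (by linarith)
            ((hvc.const_mul _).intervalIntegrable _ _) hi.intervalIntegrable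
            fun y hy => mul_le_mul_of_nonneg_right (hker y hy) (h.nonneg s hsI y)
      _ ≤ _ := by
          rw [intervalIntegral.integral_of_le (by linarith)]
          exact setIntegral_le_integral hi (Eventually.of_forall fun y =>
            mul_nonneg (heatKernel_nonneg _ _) (h.nonneg s hsI y))
  have hfin := hlow.trans hup
  rw [inv_mul_le_iff₀ (by positivity)] at hfin
  calc _ ≤ _ := hfin
    _ = _ := by ring

/-- If all times in `(a, b)` are right-bounded then so is `a`. -/
lemma rightBounded_of_gap (h : NonnegSolution f a b v vx vxx) (hf : ∀ x, 0 ≤ f x)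
    (hF : ∀ x, f x ≤ F) (hab : a < b) (hgood : ∀ τ ∈ Ioo a b, RightBounded b v τ) :
    RightBounded b v a := by
  obtain ⟨h₀, hh₀, M, hM, η, hη, δ, hδ, hδh, hδb, hmain⟩ := h.exists_heat_bounds hf hF hab hgood
  obtain ⟨n, hn⟩ := h.bounded a ⟨le_rfl, hab⟩
  have hn0 : 0 ≤ n := (h.nonneg a ⟨le_rfl, hab⟩ 0).trans (hn 0)
  set D := √(4 * Real.pi) * Real.exp (1 / 2) * Real.exp 1 * (n + 1) with hD
  have hD0 : 0 ≤ D := by positivity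
  refine ⟨δ, hδ, max n (Real.exp 1 * (2 * (2 * D + M))), fun t ht htb x => ?_⟩
  rcases ht.1.eq_or_lt with h1 | hat
  · rw [← h1]; exact (hn x).trans (le_max_left _ _)
  refine le_trans ?_ (le_max_right _ _)
  set τ := t - a with hτ
  have hτ0 : 0 < τ := sub_pos.2 hat
  obtain ⟨ρ, hρ, hfar⟩ := heatKernel_le_heatKernel_of_far hτ0
    (show τ < h₀ by linarith [ht.2])
  have hIoo : ∀ᶠ s in 𝓝[>] a, s ∈ Ioo a b := Ioo_mem_nhdsGT hab
  have hwpos : ∀ y, 0 < heatKernel τ (x - y) := fun y => by unfold heatKernel; positivity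
  have hwc : Continuous fun y => heatKernel τ (x - y) :=
    (continuous_heatKernel τ).comp (continuous_const.sub continuous_id)
  obtain ⟨q, hpq, hq, hev⟩ := exists_eventually_integral_mul_le (l := 𝓝[>] a) (g := v)
    (w := fun y => heatKernel τ (x - y)) hwc hwpos hD0
    (by filter_upwards [hIoo] with s hs using
          ⟨h.cont_space s (Ioo_subset_Ico_self hs), h.nonneg s (Ioo_subset_Ico_self hs)⟩)
    (fun y => h.eventually_integral_le hf hF hab hn y) (x - ρ) (x + ρ)
  obtain ⟨s, ⟨⟨hsev, hsη⟩, hsτ⟩⟩ := ((hev.and (Ioo_mem_nhdsGT (show a < a + η by linarith))).and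
    (Ioo_mem_nhdsGT (show a < a + τ * (3 / 4) by linarith))).exists
  obtain ⟨hsb, hsM, hst⟩ := hmain s hsη
  have hsI : s ∈ Ico a b := ⟨hsη.1.le, hsb⟩
  have has := hsη.1
  obtain ⟨N, hN⟩ := h.bounded s hsI
  have hvc := h.cont_space s hsI
  have hvb := h.abs_le hsI hN
  have hv0 := h.nonneg s hsI
  have hsτ2 := hsτ.2
  have h2 := hst t ⟨by linarith, by linarith [ht.2]⟩ htb x
  have h3 := heat_le_mul_heat hvc hvb hv0 (show 0 < t - s by linarith)
    (show t - s ≤ τ by linarith) x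
  have h4 : √(τ / (t - s)) ≤ 2 := by
    refine Real.sqrt_le_iff.2 ⟨by norm_num, ?_⟩
    rw [div_le_iff₀ (by linarith)]
    linarith
  have h5 : heat (v s) τ x ≤ 2 * D + M := by
    have hi := integrable_heatKernel_mul hvc hvb hτ0 x
    have hi' := integrable_heatKernel_mul hvc hvb hh₀ x
    rw [heat_eq_kernel hτ0, ← integral_add_compl (measurableSet_Ioc (a := x - ρ) (b := q)) hi,
      ← intervalIntegral.integral_of_le hpq]
    refine add_le_add ?_ ?_
    · refine hsev.trans (mul_le_of_le_one_right (by linarith) ?_)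
      rw [intervalIntegral.integral_of_le hpq]
      refine (setIntegral_le_integral (integrable_heatKernel hτ0 x)
        (Eventually.of_forall fun y => (hwpos y).le)).trans (le_of_eq ?_)
      have h6 := heat_eq_kernel hτ0 (fun _ => 1) x
      simp only [mul_one] at h6
      rw [← h6]; simp [heat]
    · refine le_trans ?_ (hsM x)
      rw [heat_eq_kernel hh₀]
      refine (setIntegral_mono_on hi.integrableOn hi'.integrableOn measurableSet_Ioc.compl
        fun y hy => ?_).trans (setIntegral_le_integral hi' (Eventually.of_forall fun y =>
          mul_nonneg (heatKernel_nonneg _ _) (hv0 y)))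
      refine mul_le_mul_of_nonneg_right (hfar _ ?_) (hv0 y)
      by_contra hc
      have := abs_lt.1 (not_le.1 hc)
      exact hy ⟨by linarith [this.2], by linarith [this.1]⟩
  calc v t x ≤ _ := h2
    _ ≤ Real.exp 1 * (2 * (2 * D + M)) := by
      refine mul_le_mul_of_nonneg_left (h3.trans ?_) (Real.exp_pos _).le
      exact mul_le_mul h4 h5 (heat_nonneg hv0 _ _) (by norm_num)

/-- Every time is right-bounded. -/
theorem rightBounded (h : NonnegSolution f a b v vx vxx) (hf : ∀ x, 0 ≤ f x)
    (hF : ∀ x, f x ≤ F) : ∀ τ ∈ Ico a b, RightBounded b v τ := by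
  set E : ℕ → Set ℝ := fun n => {t | ∀ x, v t x ≤ n} with hE
  have hclosed : ∀ n, ∀ t ∈ Ico a b, t ∈ closure (E n ∩ Ico a b) → t ∈ E n := by
    intro n t ht htc x
    have := mem_closure_iff_nhdsWithin_neBot.1 htc
    have hc : ContinuousWithinAt (fun s => v s x) (E n ∩ Ico a b) t :=
      (h.cont_time x t ht).mono inter_subset_right
    refine le_of_tendsto hc.tendsto ?_
    filter_upwards [self_mem_nhdsWithin] with s hs using hs.1 x
  refine forall_of_baire (J := Ico a b) ?_ _ E hclosed (fun t ht => ?_) ?_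
  · intro t ht
    obtain ⟨d, hd⟩ := exists_between ht.2
    exact ⟨d, hd.1, fun s hs => ⟨ht.1.trans hs.1, hs.2.trans_lt hd.2⟩⟩
  · obtain ⟨M, hM⟩ := h.bounded t ht
    obtain ⟨n, hn⟩ := exists_nat_ge M
    exact ⟨n, fun x => (hM x).trans hn⟩
  intro t₀ ht₀ n d htd htE hbad
  have hn1 : (0:ℝ) < n + 1 := by positivity
  have hpos : (0:ℝ) < 1 / (8 * (n + 1)) := by positivity
  refine ⟨min (d - t₀) (1 / (8 * (n + 1))), lt_min (by linarith) hpos, 2 * (n + 1),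
    fun t ht htb x => ?_⟩
  have m1 := min_le_left (d - t₀) (1 / (8 * ((n:ℝ) + 1)))
  have m2 := min_le_right (d - t₀) (1 / (8 * ((n:ℝ) + 1)))
  have ht2 := ht.2
  set B : Set ℝ := {r | r ∈ Icc t₀ t ∧ r ∈ E n} with hB
  have hBn : t₀ ∈ B := ⟨⟨le_rfl, ht.1⟩, htE⟩
  have hBb : BddAbove B := ⟨t, fun r hr => hr.1.2⟩
  set r := sSup B with hr
  have hr1 : t₀ ≤ r := le_csSup hBb hBn
  have hr2 : r ≤ t := csSup_le ⟨t₀, hBn⟩ fun s hs => hs.1.2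
  have hJ : ∀ s, t₀ ≤ s → s ≤ t → s ∈ Ico a b := fun s h1 h2 =>
    ⟨ht₀.1.trans h1, h2.trans_lt htb⟩
  have hrE : r ∈ E n := hclosed n r (hJ r hr1 hr2)
    (closure_mono (show B ⊆ E n ∩ Ico a b from fun s hs => ⟨hs.2, hJ s hs.1.1 hs.1.2⟩)
      (csSup_mem_closure ⟨t₀, hBn⟩ hBb))
  rcases hr2.lt_or_eq with hlt | heq
  · have hgood : ∀ τ ∈ Ioo r t, RightBounded t v τ := fun τ hτ => by
      by_contra hτb
      have hτE := hbad τ ⟨hr1.trans hτ.1.le, by linarith [hτ.2]⟩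
        (hJ τ (hr1.trans hτ.1.le) hτ.2.le) fun hg => hτb (hg.mono htb.le)
      exact absurd (le_csSup hBb (show τ ∈ B from ⟨⟨hr1.trans hτ.1.le, hτ.2.le⟩, hτE⟩))
        (not_le.2 hτ.1)
    have hrI := hJ r hr1 hr2
    have hrg := (h.mono hrI.1 htb.le).rightBounded_of_gap hf hF hlt hgood
    have h1 := h.le_two_mul hf (s := r) (e := t) (M := n + 1) hrI.1 htb.le hn1 (by linarith)
      (fun τ hτ => hτ.1.eq_or_lt.elim (fun he => he ▸ hrg) fun hl => hgood τ ⟨hl, hτ.2⟩)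
      (fun x => (hrE x).trans (by linarith))
    exact h.le_of_forall_lt (κ := fun _ => 2 * ((n:ℝ) + 1)) hrI.1 hlt htb
      continuousWithinAt_const fun r hr => h1 r (Ioo_subset_Ico_self hr) x
  · rw [heq] at hrE
    linarith [hrE x]

end NonnegSolution

/-! ### Duhamel integrals -/

/-- The Gaussian average with weight `p` of the slice `g s`, rescaled to time `r`. -/
noncomputable def gaussAverage (p : ℝ → ℝ) (g : ℝ → ℝ → ℝ) (r s x : ℝ) : ℝ :=
  ∫ ξ, p ξ * g s (x + √(2 * r) * ξ) ∂(gaussianReal 0 1)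

lemma continuous_gaussAverage {p : ℝ → ℝ} {g : ℝ → ℝ → ℝ} {B : ℝ} (hp : Continuous p)
    (hpi : Integrable p (gaussianReal 0 1)) (hg : Continuous (fun y : ℝ × ℝ => g y.1 y.2))
    (hB : ∀ s x, |g s x| ≤ B) :
    Continuous (fun y : ℝ × ℝ × ℝ => gaussAverage p g y.1 y.2.1 y.2.2) := by
  have hc : Continuous fun z : (ℝ × ℝ × ℝ) × ℝ =>
      p z.2 * g z.1.2.1 (z.1.2.2 + √(2 * z.1.1) * z.2) :=
    (hp.comp continuous_snd).mul (hg.comp (by fun_prop : Continuous fun z : (ℝ × ℝ × ℝ) × ℝ =>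
      (z.1.2.1, z.1.2.2 + √(2 * z.1.1) * z.2)))
  refine continuous_of_dominated (bound := fun ξ => |p ξ| * B)
    (fun y => (hc.comp (by fun_prop : Continuous fun ξ : ℝ => (y, ξ))).aestronglyMeasurable)
    (fun y => Eventually.of_forall fun ξ => ?_) (hpi.abs.mul_const B)
    (Eventually.of_forall fun ξ => hc.comp (by fun_prop : Continuous fun y : ℝ × ℝ × ℝ => (y, ξ)))
  rw [norm_mul]
  exact mul_le_mul_of_nonneg_left (hB _ _) (abs_nonneg _)

lemma integrable_id_gaussian : Integrable (fun ξ : ℝ => ξ) (gaussianReal 0 1) := by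
  simpa using integrable_pow_gaussian 1

lemma integrable_sq_sub_one_gaussian :
    Integrable (fun ξ : ℝ => ξ ^ 2 - 1) (gaussianReal 0 1) :=
  (integrable_pow_gaussian 2).sub (integrable_const 1)

lemma integral_sq_sub_one_gaussian : ∫ ξ : ℝ, (ξ ^ 2 - 1) ∂(gaussianReal 0 1) = 0 := by
  have h : Var[id; gaussianReal 0 1] = 1 := by simp
  rw [variance_of_integral_eq_zero (by fun_prop) (by simp)] at h
  rw [integral_sub (integrable_pow_gaussian 2) (integrable_const 1)]
  simpa [sub_eq_zero] using h

lemma integrable_abs_sq_sub_one_mul_abs_gaussian :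
    Integrable (fun ξ : ℝ => |ξ ^ 2 - 1| * |ξ|) (gaussianReal 0 1) := by
  have := ((integrable_pow_gaussian 3).sub integrable_id_gaussian).abs
  refine this.congr (Eventually.of_forall fun ξ => ?_)
  simp only [Pi.sub_apply]
  rw [← abs_mul]; congr 1; ring

lemma abs_heatX_le {q : ℝ → ℝ} {C : ℝ} (hC : ∀ y, |q y| ≤ C) (r x : ℝ) :
    |heatX q r x| ≤ (√(2 * r))⁻¹ * (C * ∫ ξ, |ξ| ∂(gaussianReal 0 1)) := by
  rw [heatX, abs_mul, abs_of_nonneg (by positivity)]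
  refine mul_le_mul_of_nonneg_left ?_ (by positivity)
  rw [← integral_const_mul]
  refine norm_integral_le_of_norm_le (G := ℝ) (integrable_abs_gaussian.const_mul C)
    (Eventually.of_forall fun ξ => ?_)
  rw [norm_mul, mul_comm]
  exact mul_le_mul_of_nonneg_right (hC _) (abs_nonneg _)

lemma abs_heatXX_le {q : ℝ → ℝ} {C n : ℝ} (hq : Continuous q) (hC : ∀ y, |q y| ≤ C)
    (hn : ∀ x y, |q x - q y| ≤ n * |x - y|) {r : ℝ} (hr : 0 < r) (x : ℝ) :
    |heatXX q r x| ≤ (√(2 * r))⁻¹ * (n * ∫ ξ, |ξ ^ 2 - 1| * |ξ| ∂(gaussianReal 0 1)) := by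
  have hs : 0 < √(2 * r) := Real.sqrt_pos.2 (by positivity)
  have hi : Integrable (fun ξ => (ξ ^ 2 - 1) * q (x + √(2 * r) * ξ)) (gaussianReal 0 1) :=
    integrable_sq_sub_one_gaussian.mul_bdd (c := C) (by fun_prop)
      (Eventually.of_forall fun ξ => hC _)
  have e : ∫ ξ, (ξ ^ 2 - 1) * q (x + √(2 * r) * ξ) ∂(gaussianReal 0 1)
      = ∫ ξ, (ξ ^ 2 - 1) * (q (x + √(2 * r) * ξ) - q x) ∂(gaussianReal 0 1) := by
    simp only [mul_sub]
    rw [integral_sub hi (integrable_sq_sub_one_gaussian.mul_const _), integral_mul_const,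
      integral_sq_sub_one_gaussian]
    simp
  rw [heatXX, e, abs_mul, abs_of_nonneg (by positivity)]
  have h1 : |∫ ξ, (ξ ^ 2 - 1) * (q (x + √(2 * r) * ξ) - q x) ∂(gaussianReal 0 1)|
      ≤ ∫ ξ, (√(2 * r) * n) * (|ξ ^ 2 - 1| * |ξ|) ∂(gaussianReal 0 1) := by
    refine norm_integral_le_of_norm_le (G := ℝ)
        (integrable_abs_sq_sub_one_mul_abs_gaussian.const_mul _)
      (Eventually.of_forall fun ξ => ?_)
    have := hn (x + √(2 * r) * ξ) x
    rw [add_sub_cancel_left, abs_mul, abs_of_pos hs] at this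
    rw [norm_mul, Real.norm_eq_abs, Real.norm_eq_abs]
    calc _ ≤ |ξ ^ 2 - 1| * (n * (√(2 * r) * |ξ|)) := by gcongr
      _ = _ := by ring
  rw [integral_const_mul] at h1
  calc _ ≤ (2 * r)⁻¹ * ((√(2 * r) * n) * ∫ ξ, |ξ ^ 2 - 1| * |ξ| ∂(gaussianReal 0 1)) := by gcongr
    _ = _ := by
      have h2 : (2 * r)⁻¹ * √(2 * r) = (√(2 * r))⁻¹ := by
        rw [inv_mul_eq_iff_eq_mul₀ (by positivity)]
        field_simp
        exact Real.sq_sqrt (by positivity)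
      rw [← h2]; ring

lemma integrableOn_inv_sqrt (t : ℝ) : IntegrableOn (fun s : ℝ => (√s)⁻¹) (Ioo 0 t) := by
  rcases le_or_gt t 0 with ht | ht
  · simp [Ioo_eq_empty (not_lt.2 ht)]
  have h := (intervalIntegral.intervalIntegrable_rpow' (a := 0) (b := t) (r := -(1 / 2))
    (by norm_num)).1
  refine (h.mono_set Ioo_subset_Ioc_self).congr_fun (fun s hs => ?_) measurableSet_Ioo
  simp only
  rw [Real.rpow_neg hs.1.le, ← Real.sqrt_eq_rpow]

lemma integrableOn_inv_sqrt_one_sub :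
    IntegrableOn (fun θ : ℝ => (√(1 - θ))⁻¹) (Ioo 0 1) := by
  have h := (intervalIntegral.intervalIntegrable_rpow' (a := 0) (b := 1) (r := -(1 / 2))
    (by norm_num)).comp_sub_left 1
  simp only [sub_zero, sub_self] at h
  refine (h.2.mono_set Ioo_subset_Ioc_self).congr_fun (fun s hs => ?_) measurableSet_Ioo
  simp only
  rw [Real.rpow_neg (by linarith [hs.2]), ← Real.sqrt_eq_rpow]

lemma integrableOn_inv_sqrt_mul :
    IntegrableOn (fun θ : ℝ => (√(1 - θ))⁻¹ * (√θ)⁻¹) (Ioo 0 1) := by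
  refine Integrable.mono'
      ((integrableOn_inv_sqrt_one_sub.add (integrableOn_inv_sqrt 1)).const_mul 2)
    (by fun_prop) ((ae_restrict_iff' measurableSet_Ioo).2 (Eventually.of_forall fun θ hθ => ?_))
  have key : ∀ z : ℝ, 1 / 2 ≤ z → (√z)⁻¹ ≤ 2 := fun z hz => by
    rw [inv_le_comm₀ (Real.sqrt_pos.2 (by linarith)) (by norm_num)]
    exact Real.le_sqrt_of_sq_le (by norm_num; linarith)
  have p1 : 0 ≤ (√(1 - θ))⁻¹ := by positivity
  have p2 : 0 ≤ (√θ)⁻¹ := by positivity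
  rw [Real.norm_of_nonneg (by positivity)]
  simp only [Pi.add_apply]
  rcases le_total (1 / 2) θ with h | h
  · nlinarith [key θ h]
  · nlinarith [key (1 - θ) (by linarith)]

/-- The Duhamel integral `∫₀ᵗ heat (g s) (t - s) x ds`, parametrized by `s = t θ`. -/
noncomputable def duhamel (g : ℝ → ℝ → ℝ) (t x : ℝ) : ℝ :=
  ∫ θ in Ioo (0 : ℝ) 1, t * heat (g (t * θ)) (t * (1 - θ)) x

/-- The first space derivative of `duhamel g`. -/
noncomputable def duhamelX (g : ℝ → ℝ → ℝ) (t x : ℝ) : ℝ :=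
  ∫ θ in Ioo (0 : ℝ) 1, t * heatX (g (t * θ)) (t * (1 - θ)) x

/-- The second space derivative of `duhamel g`. -/
noncomputable def duhamelXX (g : ℝ → ℝ → ℝ) (t x : ℝ) : ℝ :=
  ∫ θ in Ioo (0 : ℝ) 1, t * heatXX (g (t * θ)) (t * (1 - θ)) x

section Duhamel

variable {g : ℝ → ℝ → ℝ} {B : ℝ}

lemma continuous_heat_param (hg : Continuous (fun y : ℝ × ℝ => g y.1 y.2))
    (hB : ∀ s x, |g s x| ≤ B) :
    Continuous (fun y : ℝ × ℝ × ℝ => heat (g y.2.1) y.1 y.2.2) := by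
  have h := continuous_gaussAverage (p := fun _ => 1) continuous_const (integrable_const 1) hg hB
  simpa only [gaussAverage, one_mul, heat] using h

lemma measurable_heatX_param (hg : Continuous (fun y : ℝ × ℝ => g y.1 y.2))
    (hB : ∀ s x, |g s x| ≤ B) :
    Measurable (fun y : ℝ × ℝ × ℝ => heatX (g y.2.1) y.1 y.2.2) := by
  have h := continuous_gaussAverage continuous_id integrable_id_gaussian hg hB
  exact (by fun_prop : Measurable fun y : ℝ × ℝ × ℝ => (√(2 * y.1))⁻¹).mul h.measurable

lemma measurable_heatXX_param (hg : Continuous (fun y : ℝ × ℝ => g y.1 y.2))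
    (hB : ∀ s x, |g s x| ≤ B) :
    Measurable (fun y : ℝ × ℝ × ℝ => heatXX (g y.2.1) y.1 y.2.2) := by
  have h := continuous_gaussAverage (p := fun ξ => ξ ^ 2 - 1) (by fun_prop)
    integrable_sq_sub_one_gaussian hg hB
  exact (by fun_prop : Measurable fun y : ℝ × ℝ × ℝ => (2 * y.1)⁻¹).mul h.measurable

lemma continuousAt_heatXX_param (hg : Continuous (fun y : ℝ × ℝ => g y.1 y.2))
    (hB : ∀ s x, |g s x| ≤ B) {y : ℝ × ℝ × ℝ} (hy : 0 < y.1) :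
    ContinuousAt (fun y : ℝ × ℝ × ℝ => heatXX (g y.2.1) y.1 y.2.2) y := by
  have h := continuous_gaussAverage (p := fun ξ => ξ ^ 2 - 1) (by fun_prop)
    integrable_sq_sub_one_gaussian hg hB
  refine ContinuousAt.mul (ContinuousAt.inv₀ (by fun_prop) (by positivity)) h.continuousAt

lemma continuous_slice (hg : Continuous (fun y : ℝ × ℝ => g y.1 y.2)) (s : ℝ) :
    Continuous (g s) :=
  hg.comp (by fun_prop : Continuous fun x : ℝ => (s, x))

lemma integrableOn_duhamel (hg : Continuous (fun y : ℝ × ℝ => g y.1 y.2))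
    (hB : ∀ s x, |g s x| ≤ B) (t x : ℝ) :
    IntegrableOn (fun θ : ℝ => t * heat (g (t * θ)) (t * (1 - θ)) x) (Ioo 0 1) := by
  have hc : Continuous fun θ : ℝ => t * heat (g (t * θ)) (t * (1 - θ)) x :=
    continuous_const.mul ((continuous_heat_param hg hB).comp
      (by fun_prop : Continuous fun θ : ℝ => (t * (1 - θ), t * θ, x)))
  exact hc.integrableOn_Icc.mono_set Ioo_subset_Icc_self

lemma abs_duhamel_le (hB : ∀ s x, |g s x| ≤ B) {t : ℝ} (ht : 0 ≤ t) (x : ℝ) :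
    |duhamel g t x| ≤ t * B := by
  have h := norm_setIntegral_le_of_norm_le_const (μ := volume) (s := Ioo (0:ℝ) 1) (C := t * B)
    (f := fun θ : ℝ => t * heat (g (t * θ)) (t * (1 - θ)) x) (by simp) fun θ _ => by
      rw [norm_mul, Real.norm_of_nonneg ht]
      exact mul_le_mul_of_nonneg_left (abs_heat_le (hB _) _ _) ht
  simpa [duhamel] using h

lemma duhamel_sub {g' : ℝ → ℝ → ℝ} {B' : ℝ} (hg : Continuous (fun y : ℝ × ℝ => g y.1 y.2))
    (hB : ∀ s x, |g s x| ≤ B) (hg' : Continuous (fun y : ℝ × ℝ => g' y.1 y.2))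
    (hB' : ∀ s x, |g' s x| ≤ B') (t x : ℝ) :
    duhamel g t x - duhamel g' t x = duhamel (fun s x => g s x - g' s x) t x := by
  rw [duhamel, duhamel, duhamel, ← integral_sub (integrableOn_duhamel hg hB t x)
    (integrableOn_duhamel hg' hB' t x)]
  congr 1 with θ
  rw [← mul_sub, heat, heat, heat, ← integral_sub
    (integrable_heat (continuous_slice hg _) (hB _) _ _)
    (integrable_heat (continuous_slice hg' _) (hB' _) _ _)]

lemma continuous_duhamel (hg : Continuous (fun y : ℝ × ℝ => g y.1 y.2))
    (hB : ∀ s x, |g s x| ≤ B) : Continuous (fun y : ℝ × ℝ => duhamel g y.1 y.2) := by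
  have hc : Continuous fun z : (ℝ × ℝ) × ℝ =>
      z.1.1 * heat (g (z.1.1 * z.2)) (z.1.1 * (1 - z.2)) z.1.2 :=
    (by fun_prop : Continuous fun z : (ℝ × ℝ) × ℝ => z.1.1).mul
      ((continuous_heat_param hg hB).comp (by fun_prop : Continuous fun z : (ℝ × ℝ) × ℝ =>
        (z.1.1 * (1 - z.2), z.1.1 * z.2, z.1.2)))
  have h := continuous_parametric_integral_of_continuous (μ := volume) (s := Icc (0:ℝ) 1)
    (f := fun (y : ℝ × ℝ) θ => y.1 * heat (g (y.1 * θ)) (y.1 * (1 - θ)) y.2) hc isCompact_Icc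
  simpa only [duhamel, integral_Icc_eq_integral_Ioo] using h

lemma mul_inv_sqrt_le {t θ : ℝ} (ht : 0 < t) (hθ : θ ∈ Ioo (0 : ℝ) 1) :
    t * (√(2 * (t * (1 - θ))))⁻¹ ≤ √t * (√(1 - θ))⁻¹ := by
  have h0 : 0 < 1 - θ := sub_pos.2 hθ.2
  have e : t * (√(t * (1 - θ)))⁻¹ = √t * (√(1 - θ))⁻¹ := by
    rw [Real.sqrt_mul ht.le]
    nth_rewrite 1 [← Real.mul_self_sqrt ht.le]
    have := Real.sqrt_pos.2 ht
    field_simp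
  rw [← e]
  have : 0 < t * (1 - θ) := by positivity
  refine mul_le_mul_of_nonneg_left (inv_anti₀ (Real.sqrt_pos.2 this) (Real.sqrt_le_sqrt ?_)) ht.le
  linarith

lemma hasDerivAt_duhamel_space (hg : Continuous (fun y : ℝ × ℝ => g y.1 y.2))
    (hB : ∀ s x, |g s x| ≤ B) {t : ℝ} (ht : 0 < t) (x : ℝ) :
    HasDerivAt (duhamel g t) (duhamelX g t x) x := by
  refine (hasDerivAt_integral_of_dominated_loc_of_deriv_le
    (μ := volume.restrict (Ioo (0:ℝ) 1))
    (F := fun x θ => t * heat (g (t * θ)) (t * (1 - θ)) x)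
    (F' := fun x θ => t * heatX (g (t * θ)) (t * (1 - θ)) x)
    (bound := fun θ => (√t * (√(1 - θ))⁻¹) * (B * ∫ ξ, |ξ| ∂(gaussianReal 0 1)))
    (s := univ) univ_mem (Eventually.of_forall fun y =>
      (integrableOn_duhamel hg hB t y).aestronglyMeasurable) (integrableOn_duhamel hg hB t x)
    ?_ ?_ ((integrableOn_inv_sqrt_one_sub.const_mul _).mul_const _) ?_).2
  · exact (((measurable_heatX_param hg hB).comp (by fun_prop : Measurable fun θ : ℝ =>
      (t * (1 - θ), t * θ, x))).const_mul t).aestronglyMeasurable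
  · refine (ae_restrict_iff' measurableSet_Ioo).2 (Eventually.of_forall fun θ hθ y _ => ?_)
    rw [norm_mul, Real.norm_of_nonneg ht.le]
    have hB0 : 0 ≤ B := (abs_nonneg _).trans (hB 0 0)
    calc _ ≤ t * ((√(2 * (t * (1 - θ))))⁻¹ * (B * ∫ ξ, |ξ| ∂(gaussianReal 0 1))) :=
          mul_le_mul_of_nonneg_left (abs_heatX_le (hB _) _ _) ht.le
      _ = (t * (√(2 * (t * (1 - θ))))⁻¹) * (B * ∫ ξ, |ξ| ∂(gaussianReal 0 1)) := by ring
      _ ≤ _ := mul_le_mul_of_nonneg_right (mul_inv_sqrt_le ht hθ)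
        (mul_nonneg hB0 (integral_nonneg fun _ => abs_nonneg _))
  · refine (ae_restrict_iff' measurableSet_Ioo).2 (Eventually.of_forall fun θ hθ y _ => ?_)
    exact (hasDerivAt_heat_space (continuous_slice hg _) (hB _)
      (mul_pos ht (sub_pos.2 hθ.2)) y).const_mul t

lemma exists_abs_duhamelX_le (hB : ∀ s x, |g s x| ≤ B) :
    ∃ K, 0 ≤ K ∧ ∀ t, 0 < t → ∀ x, |duhamelX g t x| ≤ K * √t := by
  have hB0 : 0 ≤ B := (abs_nonneg _).trans (hB 0 0)
  have hm : 0 ≤ ∫ ξ, |ξ| ∂(gaussianReal 0 1) := integral_nonneg fun _ => abs_nonneg _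
  refine ⟨(∫ θ in Ioo (0:ℝ) 1, (√(1 - θ))⁻¹) * (B * ∫ ξ, |ξ| ∂(gaussianReal 0 1)),
    mul_nonneg (integral_nonneg fun _ => by positivity) (mul_nonneg hB0 hm), fun t ht x => ?_⟩
  have h := norm_integral_le_of_norm_le (μ := volume.restrict (Ioo (0:ℝ) 1))
    (f := fun θ => t * heatX (g (t * θ)) (t * (1 - θ)) x)
    (g := fun θ => (√t * (√(1 - θ))⁻¹) * (B * ∫ ξ, |ξ| ∂(gaussianReal 0 1)))
    ((integrableOn_inv_sqrt_one_sub.const_mul _).mul_const _)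
    ((ae_restrict_iff' measurableSet_Ioo).2 (Eventually.of_forall fun θ hθ => by
      rw [norm_mul, Real.norm_of_nonneg ht.le]
      calc _ ≤ t * ((√(2 * (t * (1 - θ))))⁻¹ * (B * ∫ ξ, |ξ| ∂(gaussianReal 0 1))) :=
            mul_le_mul_of_nonneg_left (abs_heatX_le (hB _) _ _) ht.le
        _ = (t * (√(2 * (t * (1 - θ))))⁻¹) * (B * ∫ ξ, |ξ| ∂(gaussianReal 0 1)) := by ring
        _ ≤ _ := mul_le_mul_of_nonneg_right (mul_inv_sqrt_le ht hθ) (mul_nonneg hB0 hm)))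
  rw [integral_mul_const, integral_const_mul (√t)] at h
  exact h.trans_eq (by ring)

end Duhamel

section Duhamel

variable {g : ℝ → ℝ → ℝ} {B δ Λ : ℝ}

lemma abs_mul_heatXX_le (hg : Continuous (fun y : ℝ × ℝ => g y.1 y.2))
    (hB : ∀ s x, |g s x| ≤ B)
    (hΛ : ∀ s ∈ Ioo 0 δ, ∀ x y, |g s x - g s y| ≤ Λ * (√s)⁻¹ * |x - y|) {t θ : ℝ}
    (ht : t ∈ Ioo 0 δ) (hθ : θ ∈ Ioo (0 : ℝ) 1) (x : ℝ) :
    ‖t * heatXX (g (t * θ)) (t * (1 - θ)) x‖ ≤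
      ((√(1 - θ))⁻¹ * (√θ)⁻¹) * (Λ * ∫ ξ, |ξ ^ 2 - 1| * |ξ| ∂(gaussianReal 0 1)) := by
  have htθ : t * θ ∈ Ioo 0 δ := ⟨mul_pos ht.1 hθ.1, by nlinarith [hθ.1, hθ.2, ht.1, ht.2]⟩
  have hm : 0 ≤ ∫ ξ, |ξ ^ 2 - 1| * |ξ| ∂(gaussianReal 0 1) := integral_nonneg fun _ => by positivity
  have hΛ0 : 0 ≤ Λ * (√(t * θ))⁻¹ := by
    have := (abs_nonneg _).trans (hΛ _ htθ 1 0)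
    simpa using this
  have ht0 := ht.1
  have hst := Real.sqrt_pos.2 ht0
  rw [norm_mul, Real.norm_of_nonneg ht.1.le]
  calc _ ≤ t * ((√(2 * (t * (1 - θ))))⁻¹ *
        ((Λ * (√(t * θ))⁻¹) * ∫ ξ, |ξ ^ 2 - 1| * |ξ| ∂(gaussianReal 0 1))) :=
        mul_le_mul_of_nonneg_left (abs_heatXX_le (continuous_slice hg _) (hB _) (hΛ _ htθ)
          (mul_pos ht.1 (sub_pos.2 hθ.2)) _) ht.1.le
    _ = (t * (√(2 * (t * (1 - θ))))⁻¹) *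
        ((Λ * (√(t * θ))⁻¹) * ∫ ξ, |ξ ^ 2 - 1| * |ξ| ∂(gaussianReal 0 1)) := by ring
    _ ≤ (√t * (√(1 - θ))⁻¹) *
        ((Λ * (√(t * θ))⁻¹) * ∫ ξ, |ξ ^ 2 - 1| * |ξ| ∂(gaussianReal 0 1)) :=
        mul_le_mul_of_nonneg_right (mul_inv_sqrt_le ht.1 hθ) (mul_nonneg hΛ0 hm)
    _ = _ := by
      rw [Real.sqrt_mul ht0.le]
      field_simp

lemma hasDerivAt_duhamelX_space (hg : Continuous (fun y : ℝ × ℝ => g y.1 y.2))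
    (hB : ∀ s x, |g s x| ≤ B)
    (hΛ : ∀ s ∈ Ioo 0 δ, ∀ x y, |g s x - g s y| ≤ Λ * (√s)⁻¹ * |x - y|) {t : ℝ}
    (ht : t ∈ Ioo 0 δ) (x : ℝ) :
    HasDerivAt (duhamelX g t) (duhamelXX g t x) x := by
  have hB0 : 0 ≤ B := (abs_nonneg _).trans (hB 0 0)
  have hmeas : ∀ y, AEStronglyMeasurable (fun θ => t * heatX (g (t * θ)) (t * (1 - θ)) y)
      (volume.restrict (Ioo (0:ℝ) 1)) := fun y =>
    (((measurable_heatX_param hg hB).comp (by fun_prop : Measurable fun θ : ℝ =>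
      (t * (1 - θ), t * θ, y))).const_mul t).aestronglyMeasurable
  refine (hasDerivAt_integral_of_dominated_loc_of_deriv_le
    (μ := volume.restrict (Ioo (0:ℝ) 1))
    (F := fun x θ => t * heatX (g (t * θ)) (t * (1 - θ)) x)
    (F' := fun x θ => t * heatXX (g (t * θ)) (t * (1 - θ)) x)
    (bound := fun θ => ((√(1 - θ))⁻¹ * (√θ)⁻¹) *
      (Λ * ∫ ξ, |ξ ^ 2 - 1| * |ξ| ∂(gaussianReal 0 1)))
    (s := univ) univ_mem (Eventually.of_forall hmeas) ?_
    ?_ ?_ (integrableOn_inv_sqrt_mul.mul_const _) ?_).2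
  · refine ((integrableOn_inv_sqrt_one_sub.const_mul (√t)).mul_const
      (B * ∫ ξ, |ξ| ∂(gaussianReal 0 1))).mono' (hmeas x)
      ((ae_restrict_iff' measurableSet_Ioo).2 (Eventually.of_forall fun θ hθ => ?_))
    rw [norm_mul, Real.norm_of_nonneg ht.1.le]
    calc _ ≤ t * ((√(2 * (t * (1 - θ))))⁻¹ * (B * ∫ ξ, |ξ| ∂(gaussianReal 0 1))) :=
          mul_le_mul_of_nonneg_left (abs_heatX_le (hB _) _ _) ht.1.le
      _ = (t * (√(2 * (t * (1 - θ))))⁻¹) * (B * ∫ ξ, |ξ| ∂(gaussianReal 0 1)) := by ring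
      _ ≤ _ := mul_le_mul_of_nonneg_right (mul_inv_sqrt_le ht.1 hθ)
        (mul_nonneg hB0 (integral_nonneg fun _ => abs_nonneg _))
  · exact (((measurable_heatXX_param hg hB).comp (by fun_prop : Measurable fun θ : ℝ =>
      (t * (1 - θ), t * θ, x))).const_mul t).aestronglyMeasurable
  · exact (ae_restrict_iff' measurableSet_Ioo).2 (Eventually.of_forall fun θ hθ y _ =>
      abs_mul_heatXX_le hg hB hΛ ht hθ y)
  · refine (ae_restrict_iff' measurableSet_Ioo).2 (Eventually.of_forall fun θ hθ y _ => ?_)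
    exact (hasDerivAt_heatX_space (continuous_slice hg _) (hB _)
      (mul_pos ht.1 (sub_pos.2 hθ.2)) y).const_mul t

lemma continuousAt_duhamelXX (hg : Continuous (fun y : ℝ × ℝ => g y.1 y.2))
    (hB : ∀ s x, |g s x| ≤ B)
    (hΛ : ∀ s ∈ Ioo 0 δ, ∀ x y, |g s x - g s y| ≤ Λ * (√s)⁻¹ * |x - y|) {y : ℝ × ℝ}
    (hy : y.1 ∈ Ioo 0 δ) :
    ContinuousAt (fun y : ℝ × ℝ => duhamelXX g y.1 y.2) y := by
  refine continuousAt_of_dominated (μ := volume.restrict (Ioo (0:ℝ) 1))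
    (F := fun (y : ℝ × ℝ) θ => y.1 * heatXX (g (y.1 * θ)) (y.1 * (1 - θ)) y.2)
    (bound := fun θ => ((√(1 - θ))⁻¹ * (√θ)⁻¹) *
      (Λ * ∫ ξ, |ξ ^ 2 - 1| * |ξ| ∂(gaussianReal 0 1)))
    (Eventually.of_forall fun z => ?_) ?_ (integrableOn_inv_sqrt_mul.mul_const _) ?_
  · exact (((measurable_heatXX_param hg hB).comp (by fun_prop : Measurable fun θ : ℝ =>
      (z.1 * (1 - θ), z.1 * θ, z.2))).const_mul z.1).aestronglyMeasurable
  · filter_upwards [continuous_fst.continuousAt.preimage_mem_nhds (Ioo_mem_nhds hy.1 hy.2)]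
      with z hz
    exact (ae_restrict_iff' measurableSet_Ioo).2 (Eventually.of_forall fun θ hθ =>
      abs_mul_heatXX_le hg hB hΛ hz hθ z.2)
  · refine (ae_restrict_iff' measurableSet_Ioo).2 (Eventually.of_forall fun θ hθ => ?_)
    refine continuous_fst.continuousAt.mul ?_
    have hpos : 0 < y.1 * (1 - θ) := mul_pos hy.1 (sub_pos.2 hθ.2)
    exact ContinuousAt.comp (f := fun z : ℝ × ℝ => (z.1 * (1 - θ), z.1 * θ, z.2)) (x := y)
      (continuousAt_heatXX_param hg hB (y := (y.1 * (1 - θ), y.1 * θ, y.2)) hpos) (by fun_prop)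

lemma setIntegral_mul_comp_mul {t : ℝ} (ht : 0 < t) (k : ℝ → ℝ) :
    ∫ θ in Ioo (0 : ℝ) 1, t * k (t * θ) = ∫ s in Ioo 0 t, k s := by
  rw [integral_const_mul, ← integral_Ioc_eq_integral_Ioo, ← integral_Ioc_eq_integral_Ioo,
    ← intervalIntegral.integral_of_le zero_le_one, ← intervalIntegral.integral_of_le ht.le,
    intervalIntegral.integral_comp_mul_left _ ht.ne']
  simp [ht.ne']

lemma duhamel_eq {t : ℝ} (ht : 0 < t) (x : ℝ) :
    duhamel g t x = ∫ s in Ioo 0 t, heat (g s) (t - s) x := by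
  rw [← setIntegral_mul_comp_mul ht, duhamel]
  simp only [mul_sub, mul_one]

lemma duhamelXX_eq {t : ℝ} (ht : 0 < t) (x : ℝ) :
    duhamelXX g t x = ∫ s in Ioo 0 t, heatXX (g s) (t - s) x := by
  rw [← setIntegral_mul_comp_mul ht, duhamelXX]
  simp only [mul_sub, mul_one]

/-- The triangle `0 < s < τ < t`, with coordinates `(τ, s)`. -/
def triangle (t : ℝ) : Set (ℝ × ℝ) := {p | 0 < p.2 ∧ p.2 < p.1 ∧ p.1 < t}

lemma measurableSet_triangle (t : ℝ) : MeasurableSet (triangle t) :=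
  (measurableSet_lt measurable_const measurable_snd).inter
    ((measurableSet_lt measurable_snd measurable_fst).inter
      (measurableSet_lt measurable_fst measurable_const))

lemma integrable_triangle_heatXX (hg : Continuous (fun y : ℝ × ℝ => g y.1 y.2))
    (hB : ∀ s x, |g s x| ≤ B)
    (hΛ : ∀ s ∈ Ioo 0 δ, ∀ x y, |g s x - g s y| ≤ Λ * (√s)⁻¹ * |x - y|) {t : ℝ}
    (ht : t ∈ Ioo 0 δ) (x : ℝ) :
    Integrable ((triangle t).indicator fun p => heatXX (g p.2) (p.1 - p.2) x)
      (volume.prod volume) := by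
  set k : ℝ → ℝ := (Ioo 0 t).indicator fun s => (√s)⁻¹ with hk
  have hki : Integrable k :=
      (integrable_indicator_iff measurableSet_Ioo).2 (integrableOn_inv_sqrt t)
  have hconv := (hki.convolution_integrand (ContinuousLinearMap.mul ℝ ℝ) hki).mul_const
    (Λ * ∫ ξ, |ξ ^ 2 - 1| * |ξ| ∂(gaussianReal 0 1))
  refine hconv.mono' ?_ (Eventually.of_forall fun p => ?_)
  · exact (((measurable_heatXX_param hg hB).comp (by fun_prop : Measurable fun p : ℝ × ℝ =>
      (p.1 - p.2, p.2, x))).indicator (measurableSet_triangle t)).aestronglyMeasurable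
  have hm : 0 ≤ ∫ ξ, |ξ ^ 2 - 1| * |ξ| ∂(gaussianReal 0 1) := integral_nonneg fun _ => by positivity
  have hk0 : ∀ s, 0 ≤ k s := fun s => indicator_nonneg (fun _ _ => by positivity) s
  have hΛ0 : 0 ≤ Λ := by
    have := (abs_nonneg _).trans (hΛ t ht 1 0)
    simp only [sub_zero, abs_one, mul_one] at this
    exact nonneg_of_mul_nonneg_left this (by have := Real.sqrt_pos.2 ht.1; positivity)
  simp only [ContinuousLinearMap.mul_apply']
  by_cases hp : p ∈ triangle t
  · have hp2 : p.2 ∈ Ioo 0 t := ⟨hp.1, hp.2.1.trans hp.2.2⟩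
    have hp1 : p.1 - p.2 ∈ Ioo 0 t := ⟨sub_pos.2 hp.2.1, by linarith [hp.1, hp.2.2]⟩
    rw [indicator_of_mem hp, hk, indicator_of_mem hp2, indicator_of_mem hp1]
    refine (abs_heatXX_le (continuous_slice hg _) (hB _) (hΛ _ ⟨hp2.1, hp2.2.trans ht.2⟩)
      hp1.1 x).trans ?_
    have h1 : (√(2 * (p.1 - p.2)))⁻¹ ≤ (√(p.1 - p.2))⁻¹ :=
      inv_anti₀ (Real.sqrt_pos.2 hp1.1) (Real.sqrt_le_sqrt (by linarith [hp1.1]))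
    calc _ ≤ (√(p.1 - p.2))⁻¹ * (Λ * (√p.2)⁻¹ * ∫ ξ, |ξ ^ 2 - 1| * |ξ| ∂(gaussianReal 0 1)) := by
          gcongr
      _ = _ := by ring
  · rw [indicator_of_notMem hp, norm_zero]
    exact mul_nonneg (mul_nonneg (hk0 _) (hk0 _)) (mul_nonneg hΛ0 hm)

lemma integral_triangle_fst {t : ℝ} (x τ : ℝ) :
    ∫ s, (triangle t).indicator (fun p => heatXX (g p.2) (p.1 - p.2) x) (τ, s)
      = (Ioo 0 t).indicator (fun τ => duhamelXX g τ x) τ := by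
  by_cases hτ : τ ∈ Ioo 0 t
  · rw [indicator_of_mem hτ, duhamelXX_eq hτ.1, ← integral_indicator measurableSet_Ioo]
    congr 1 with s
    by_cases hs : s ∈ Ioo 0 τ
    · rw [indicator_of_mem hs, indicator_of_mem (show (τ, s) ∈ triangle t from ⟨hs.1, hs.2, hτ.2⟩)]
    · rw [indicator_of_notMem hs, indicator_of_notMem]
      exact fun h => hs ⟨h.1, h.2.1⟩
  · rw [indicator_of_notMem hτ, ← integral_zero ℝ ℝ (μ := volume)]
    congr 1 with s
    rw [indicator_of_notMem]
    exact fun h => hτ ⟨h.1.trans h.2.1, h.2.2⟩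

lemma integral_triangle_snd (hg : Continuous (fun y : ℝ × ℝ => g y.1 y.2))
    (hB : ∀ s x, |g s x| ≤ B) {t s x : ℝ} (hi : Integrable fun τ =>
      (triangle t).indicator (fun p => heatXX (g p.2) (p.1 - p.2) x) (τ, s)) :
    ∫ τ, (triangle t).indicator (fun p => heatXX (g p.2) (p.1 - p.2) x) (τ, s)
      = (Ioo 0 t).indicator (fun s => heat (g s) (t - s) x - g s x) s := by
  by_cases hs : s ∈ Ioo 0 t
  · have e : (fun τ => (triangle t).indicator (fun p => heatXX (g p.2) (p.1 - p.2) x) (τ, s))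
        = (Ioo s t).indicator fun τ => heatXX (g s) (τ - s) x := by
      funext τ
      by_cases hτ : τ ∈ Ioo s t
      · rw [indicator_of_mem hτ, indicator_of_mem (show (τ, s) ∈ triangle t from
          ⟨hs.1, hτ.1, hτ.2⟩)]
      · rw [indicator_of_notMem hτ, indicator_of_notMem]
        exact fun h => hτ ⟨h.2.1, h.2.2⟩
    rw [e, integrable_indicator_iff measurableSet_Ioo] at hi
    rw [e, indicator_of_mem hs, integral_indicator measurableSet_Ioo,
      ← integral_Ioc_eq_integral_Ioo, ← intervalIntegral.integral_of_le hs.2.le]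
    have h := intervalIntegral.integral_eq_sub_of_hasDerivAt_of_le hs.2.le
      (f := fun τ => heat (g s) (τ - s) x) (f' := fun τ => heatXX (g s) (τ - s) x)
      ((continuous_heat (continuous_slice hg s) (hB s)).comp
        (by fun_prop : Continuous fun τ : ℝ => (τ - s, x))).continuousOn
      (fun τ hτ => by
        have h := (hasDerivAt_heat_time (continuous_slice hg s) (hB s) (sub_pos.2 hτ.1) x).comp τ
          ((hasDerivAt_id τ).sub_const s)
        exact h.congr_deriv (mul_one _))
      ((intervalIntegrable_iff_integrableOn_Ioo_of_le hs.2.le).2 hi)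
    rw [h, sub_self, heat_zero]
  · rw [indicator_of_notMem hs, ← integral_zero ℝ ℝ (μ := volume)]
    congr 1 with τ
    rw [indicator_of_notMem]
    exact fun h => hs ⟨h.1, h.2.1.trans h.2.2⟩

lemma integrableOn_duhamelXX (hg : Continuous (fun y : ℝ × ℝ => g y.1 y.2))
    (hB : ∀ s x, |g s x| ≤ B)
    (hΛ : ∀ s ∈ Ioo 0 δ, ∀ x y, |g s x - g s y| ≤ Λ * (√s)⁻¹ * |x - y|) {t : ℝ}
    (ht : t ∈ Ioo 0 δ) (x : ℝ) : IntegrableOn (fun τ => duhamelXX g τ x) (Ioo 0 t) := by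
  have h := (integrable_triangle_heatXX hg hB hΛ ht x).integral_prod_left
  simp only [integral_triangle_fst] at h
  exact (integrable_indicator_iff measurableSet_Ioo).1 h

lemma duhamel_eq_integral (hg : Continuous (fun y : ℝ × ℝ => g y.1 y.2))
    (hB : ∀ s x, |g s x| ≤ B)
    (hΛ : ∀ s ∈ Ioo 0 δ, ∀ x y, |g s x - g s y| ≤ Λ * (√s)⁻¹ * |x - y|) {t : ℝ}
    (ht : t ∈ Ioo 0 δ) (x : ℝ) :
    duhamel g t x = ∫ τ in (0 : ℝ)..t, (duhamelXX g τ x + g τ x) := by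
  have hK := integrable_triangle_heatXX hg hB hΛ ht x
  have hgi : IntegrableOn (fun s => g s x) (Ioo 0 t) :=
    ((hg.comp (by fun_prop : Continuous fun s : ℝ => (s, x))).integrableOn_Icc).mono_set
      Ioo_subset_Icc_self
  have hhi : IntegrableOn (fun s => heat (g s) (t - s) x) (Ioo 0 t) :=
    (((continuous_heat_param hg hB).comp (by fun_prop : Continuous fun s : ℝ =>
      (t - s, s, x))).integrableOn_Icc).mono_set Ioo_subset_Icc_self
  have h1 : ∫ τ in Ioo 0 t, duhamelXX g τ x = ∫ s in Ioo 0 t, (heat (g s) (t - s) x - g s x) := by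
    rw [← integral_indicator measurableSet_Ioo, ← integral_indicator measurableSet_Ioo]
    calc _ = ∫ τ, ∫ s, (triangle t).indicator (fun p => heatXX (g p.2) (p.1 - p.2) x) (τ, s) := by
          simp only [integral_triangle_fst]
      _ = ∫ s, ∫ τ, (triangle t).indicator (fun p => heatXX (g p.2) (p.1 - p.2) x) (τ, s) :=
          integral_integral_swap (f := fun τ s =>
            (triangle t).indicator (fun p => heatXX (g p.2) (p.1 - p.2) x) (τ, s)) hK
      _ = _ := by
          refine integral_congr_ae ?_
          filter_upwards [hK.prod_left_ae] with s hs using integral_triangle_snd hg hB hs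
  rw [intervalIntegral.integral_of_le ht.1.le, integral_Ioc_eq_integral_Ioo,
    integral_add (integrableOn_duhamelXX hg hB hΛ ht x) hgi, h1, integral_sub hhi hgi,
    duhamel_eq ht.1]
  ring

lemma hasDerivAt_duhamel_time (hg : Continuous (fun y : ℝ × ℝ => g y.1 y.2))
    (hB : ∀ s x, |g s x| ≤ B)
    (hΛ : ∀ s ∈ Ioo 0 δ, ∀ x y, |g s x - g s y| ≤ Λ * (√s)⁻¹ * |x - y|) {t : ℝ}
    (ht : t ∈ Ioo 0 δ) (x : ℝ) :
    HasDerivAt (fun t => duhamel g t x) (duhamelXX g t x + g t x) t := by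
  have hgc : Continuous fun s => g s x := hg.comp (by fun_prop : Continuous fun s : ℝ => (s, x))
  have hcont : ∀ τ ∈ Ioo 0 δ, ContinuousAt (fun τ => duhamelXX g τ x + g τ x) τ := fun τ hτ =>
    (ContinuousAt.comp (f := fun τ : ℝ => (τ, x)) (x := τ)
      (continuousAt_duhamelXX hg hB hΛ (y := (τ, x)) hτ) (by fun_prop)).add hgc.continuousAt
  have hint : IntervalIntegrable (fun τ => duhamelXX g τ x + g τ x) volume 0 t :=
    ((intervalIntegrable_iff_integrableOn_Ioo_of_le ht.1.le).2
      (integrableOn_duhamelXX hg hB hΛ ht x)).add (hgc.intervalIntegrable _ _)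
  have h := intervalIntegral.integral_hasDerivAt_right hint
    (ContinuousAt.stronglyMeasurableAtFilter isOpen_Ioo hcont t ht) (hcont t ht)
  refine h.congr_of_eventuallyEq ?_
  filter_upwards [Ioo_mem_nhds ht.1 ht.2] with τ hτ using duhamel_eq_integral hg hB hΛ hτ x

lemma parabolicOn_duhamel (hg : Continuous (fun y : ℝ × ℝ => g y.1 y.2))
    (hB : ∀ s x, |g s x| ≤ B)
    (hΛ : ∀ s ∈ Ioo 0 δ, ∀ x y, |g s x - g s y| ≤ Λ * (√s)⁻¹ * |x - y|) :
    ParabolicOn 0 δ (duhamel g) (fun t x => duhamelXX g t x + g t x) (duhamelX g)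
      (duhamelXX g) where
  cont_time x := ((continuous_duhamel hg hB).comp
    (by fun_prop : Continuous fun t : ℝ => (t, x))).continuousOn
  cont_space t _ := (continuous_duhamel hg hB).comp (by fun_prop : Continuous fun x : ℝ => (t, x))
  deriv_time t ht x := hasDerivAt_duhamel_time hg hB hΛ ht x
  deriv_space t ht x := hasDerivAt_duhamel_space hg hB ht.1 x
  deriv_space₂ t ht x := hasDerivAt_duhamelX_space hg hB hΛ ht x

end Duhamel

/-! ### Local existence -/

/-- Truncation to `[0, 2 M]`. -/
noncomputable def clip (M w : ℝ) : ℝ := max 0 (min w (2 * M))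

/-- The truncated reaction term. -/
noncomputable def reaction (f : ℝ → ℝ) (M x w : ℝ) : ℝ := -2 * f x * clip M w + clip M w ^ 2

section Reaction

variable {f : ℝ → ℝ} {M F N : ℝ}

lemma clip_nonneg (M w : ℝ) : 0 ≤ clip M w := le_max_left _ _

lemma clip_le (hM : 0 ≤ M) (w : ℝ) : clip M w ≤ 2 * M :=
  max_le (by positivity) (min_le_right _ _)

lemma clip_of_nonpos {w : ℝ} (hw : w ≤ 0) : clip M w = 0 :=
  max_eq_left ((min_le_left _ _).trans hw)

lemma clip_of_mem {w : ℝ} (h0 : 0 ≤ w) (h1 : w ≤ 2 * M) : clip M w = w := by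
  rw [clip, min_eq_left h1, max_eq_right h0]

lemma abs_clip_sub_clip_le (M a b : ℝ) : |clip M a - clip M b| ≤ |a - b| := by
  refine (abs_max_sub_max_le_max 0 _ 0 _).trans ?_
  rw [sub_self, abs_zero, max_eq_right (abs_nonneg _)]
  refine (abs_min_sub_min_le_max _ _ _ _).trans ?_
  rw [sub_self, abs_zero, max_eq_left (abs_nonneg _)]

lemma continuous_reaction (hfc : Continuous f) :
    Continuous fun p : ℝ × ℝ => reaction f M p.1 p.2 := by
  unfold reaction clip; fun_prop

lemma abs_reaction_le (hf : ∀ x, 0 ≤ f x) (hF : ∀ x, f x ≤ F) (hM : 0 ≤ M) (x w : ℝ) :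
    |reaction f M x w| ≤ 4 * M * F + 4 * M ^ 2 := by
  have h0 := clip_nonneg M w
  have h1 := clip_le hM w
  have h2 : f x * clip M w ≤ F * (2 * M) := mul_le_mul (hF x) h1 h0 ((hf x).trans (hF x))
  have h3 := mul_nonneg (hf x) h0
  unfold reaction
  rw [abs_le]
  constructor <;> nlinarith

lemma reaction_le (hf : ∀ x, 0 ≤ f x) (hM : 0 ≤ M) (x w : ℝ) :
    reaction f M x w ≤ 4 * M ^ 2 := by
  have h0 := clip_nonneg M w
  have h1 := clip_le hM w
  have h3 := mul_nonneg (hf x) h0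
  unfold reaction
  nlinarith

lemma abs_reaction_sub_le (hf : ∀ x, 0 ≤ f x) (hF : ∀ x, f x ≤ F) (hM : 0 ≤ M) (x a b : ℝ) :
    |reaction f M x a - reaction f M x b| ≤ (2 * F + 4 * M) * |a - b| := by
  have e : reaction f M x a - reaction f M x b
      = (-2 * f x + (clip M a + clip M b)) * (clip M a - clip M b) := by
    unfold reaction; ring
  rw [e, abs_mul]
  refine mul_le_mul ?_ (abs_clip_sub_clip_le M a b) (abs_nonneg _)
    (by linarith [(hf x).trans (hF x)])
  rw [abs_le]
  have := hf x
  have := hF x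
  constructor <;> linarith [clip_nonneg M a, clip_nonneg M b, clip_le hM a, clip_le hM b]

lemma abs_reaction_sub_le_space (hN : ∀ x y, |f x - f y| ≤ N * |x - y|) (hM : 0 ≤ M)
    (x y a : ℝ) :
    |reaction f M x a - reaction f M y a| ≤ 4 * M * N * |x - y| := by
  have e : reaction f M x a - reaction f M y a = -(2 * clip M a) * (f x - f y) := by
    unfold reaction; ring
  rw [e, abs_mul, abs_neg, abs_of_nonneg (by linarith [clip_nonneg M a])]
  calc _ ≤ (4 * M) * (N * |x - y|) := mul_le_mul (by linarith [clip_le hM a]) (hN x y)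
        (abs_nonneg _) (by positivity)
    _ = _ := by ring

end Reaction

/-- A fixed point of the Duhamel map for the truncated equation. -/
lemma exists_mild_solution {f q : ℝ → ℝ} {F M δ : ℝ} (hfc : Continuous f) (hf : ∀ x, 0 ≤ f x)
    (hF : ∀ x, f x ≤ F) (hM : 0 < M) (hδ : 0 < δ) (hδ1 : δ * (2 * F + 4 * M) ≤ 1 / 2)
    (hq : Continuous q) (hqM : ∀ x, |q x| ≤ M) :
    ∃ w : ℝ → ℝ → ℝ, Continuous (fun p : ℝ × ℝ => w p.1 p.2) ∧ (∃ C, ∀ t x, |w t x| ≤ C) ∧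
      ∀ t ∈ Icc 0 δ, ∀ x,
        w t x = heat q t x + duhamel (fun s y => reaction f M y (w s y)) t x := by
  set B := 4 * M * F + 4 * M ^ 2
  let τ : ℝ → ℝ := fun s => max 0 (min s δ)
  have hτc : Continuous τ := by fun_prop
  have hτ : ∀ s, τ s ∈ Icc 0 δ := fun s => ⟨le_max_left _ _, max_le hδ.le (min_le_right _ _)⟩
  have hF0 : 0 ≤ F := (hf 0).trans (hF 0)
  have hB0 : 0 ≤ B := by positivity
  let X := BoundedContinuousFunction (ℝ × ℝ) ℝ
  have hGc : ∀ w : X, Continuous fun p : ℝ × ℝ => reaction f M p.2 (w (p.1, p.2)) := fun w =>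
    (continuous_reaction hfc).comp (by fun_prop : Continuous fun p : ℝ × ℝ => (p.2, w (p.1, p.2)))
  have hGB : ∀ w : X, ∀ s x, |reaction f M x (w (s, x))| ≤ B := fun w s x =>
    abs_reaction_le hf hF hM.le x _
  let Φ : X → X := fun w => BoundedContinuousFunction.ofNormedAddCommGroup
    (fun p : ℝ × ℝ => heat q (τ p.1) p.2
      + duhamel (fun s y => reaction f M y (w (s, y))) (τ p.1) p.2)
    (((continuous_heat hq hqM).comp (by fun_prop : Continuous fun p : ℝ × ℝ => (τ p.1, p.2))).add
      ((continuous_duhamel (hGc w) (hGB w)).comp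
        (by fun_prop : Continuous fun p : ℝ × ℝ => (τ p.1, p.2)))) (M + δ * B) fun p => by
      refine (norm_add_le _ _).trans (add_le_add (abs_heat_le hqM _ _) ?_)
      exact (abs_duhamel_le (hGB w) (hτ p.1).1 _).trans
        (mul_le_mul_of_nonneg_right (hτ p.1).2 hB0)
  have hΦapply : ∀ (w : X) (p : ℝ × ℝ), Φ w p = heat q (τ p.1) p.2
      + duhamel (fun s y => reaction f M y (w (s, y))) (τ p.1) p.2 := fun _ _ => rfl
  have hΦ : ContractingWith (1 / 2) Φ := by
    refine ⟨by norm_num, LipschitzWith.of_dist_le_mul fun w w' => ?_⟩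
    rw [BoundedContinuousFunction.dist_le (by positivity)]
    intro p
    have hsub : ∀ s x, |reaction f M x (w (s, x)) - reaction f M x (w' (s, x))|
        ≤ (2 * F + 4 * M) * dist w w' := fun s x =>
      (abs_reaction_sub_le hf hF hM.le x _ _).trans (mul_le_mul_of_nonneg_left
        (BoundedContinuousFunction.dist_coe_le_dist (f := w) (g := w') (s, x)) (by positivity))
    have h := abs_duhamel_le hsub (hτ p.1).1 p.2
    rw [← duhamel_sub (hGc w) (hGB w) (hGc w') (hGB w')] at h
    have e : dist (Φ w p) (Φ w' p) = |duhamel (fun s y => reaction f M y (w (s, y))) (τ p.1) p.2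
        - duhamel (fun s y => reaction f M y (w' (s, y))) (τ p.1) p.2| := by
      rw [Real.dist_eq, hΦapply, hΦapply, add_sub_add_left_eq_sub]
    rw [e]
    refine h.trans ?_
    have h2 : (0:ℝ) ≤ (2 * F + 4 * M) * dist w w' := by positivity
    calc _ ≤ δ * ((2 * F + 4 * M) * dist w w') := mul_le_mul_of_nonneg_right (hτ p.1).2 h2
      _ = (δ * (2 * F + 4 * M)) * dist w w' := by ring
      _ ≤ 1 / 2 * dist w w' := mul_le_mul_of_nonneg_right hδ1 dist_nonneg
      _ = _ := by simp
  let w : X := hΦ.fixedPoint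
  have hw : Φ w = w := hΦ.fixedPoint_isFixedPt
  refine ⟨fun t x => w (t, x), by fun_prop, ⟨‖w‖, fun t x => w.norm_coe_le_norm _⟩,
    fun t ht x => ?_⟩
  have ht' : τ t = t := by simp only [τ]; rw [min_eq_left ht.2, max_eq_right ht.1]
  have h := DFunLike.congr_fun hw (t, x)
  rw [hΦapply] at h
  simp only [ht'] at h
  exact h.symm

lemma exists_lipschitz_mild {f q : ℝ → ℝ} {F M N δ : ℝ} (hfc : Continuous f) (hf : ∀ x, 0 ≤ f x)
    (hF : ∀ x, f x ≤ F) (hN : ∀ x y, |f x - f y| ≤ N * |x - y|) (hM : 0 < M)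
    (hq : Continuous q) (hqM : ∀ x, |q x| ≤ M) {w : ℝ → ℝ → ℝ}
    (hwc : Continuous (fun p : ℝ × ℝ => w p.1 p.2))
    (hw : ∀ t ∈ Icc 0 δ, ∀ x,
        w t x = heat q t x + duhamel (fun s y => reaction f M y (w s y)) t x) :
    ∃ Λ, ∀ s ∈ Ioo 0 δ, ∀ x y,
      |reaction f M x (w s x) - reaction f M y (w s y)| ≤ Λ * (√s)⁻¹ * |x - y| := by
  have hGc : Continuous fun p : ℝ × ℝ => reaction f M p.2 (w p.1 p.2) :=
    (continuous_reaction hfc).comp (by fun_prop : Continuous fun p : ℝ × ℝ => (p.2, w p.1 p.2))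
  have hGB : ∀ s x, |reaction f M x (w s x)| ≤ 4 * M * F + 4 * M ^ 2 := fun s x =>
    abs_reaction_le hf hF hM.le x _
  have hF0 : 0 ≤ F := (hf 0).trans (hF 0)
  have hN0 : 0 ≤ N := by simpa using (abs_nonneg _).trans (hN 1 0)
  obtain ⟨K, hK0, hK⟩ := exists_abs_duhamelX_le hGB
  set m := ∫ ξ, |ξ| ∂(gaussianReal 0 1) with hm
  have hm0 : 0 ≤ m := integral_nonneg fun _ => abs_nonneg _
  refine ⟨4 * M * N * √δ + (2 * F + 4 * M) * (M * m + K * δ), fun s hs x y => ?_⟩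
  have hs0 := Real.sqrt_pos.2 hs.1
  have hwl : |w s x - w s y| ≤ (M * m + K * δ) * (√s)⁻¹ * |x - y| := by
    refine (convex_univ (𝕜 := ℝ)).norm_image_sub_le_of_norm_hasDerivWithin_le
      (f := w s) (f' := fun x => heatX q s x + duhamelX (fun s y => reaction f M y (w s y)) s x)
      (fun z _ => ?_) (fun z _ => ?_) (mem_univ y) (mem_univ x)
    · have e : w s = fun z => heat q s z + duhamel (fun s y => reaction f M y (w s y)) s z :=
        funext fun z => hw s ⟨hs.1.le, hs.2.le⟩ z
      rw [e]
      exact ((hasDerivAt_heat_space hq hqM hs.1 z).add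
        (hasDerivAt_duhamel_space hGc hGB hs.1 z)).hasDerivWithinAt
    · refine (norm_add_le _ _).trans ?_
      rw [add_mul]
      refine add_le_add ((abs_heatX_le hqM s z).trans ?_) ((hK s hs.1 z).trans ?_)
      · rw [mul_comm]
        refine mul_le_mul_of_nonneg_left (inv_anti₀ hs0 (Real.sqrt_le_sqrt (by linarith [hs.1])))
          (by positivity)
      · rw [mul_assoc]
        refine mul_le_mul_of_nonneg_left ?_ hK0
        rw [← div_eq_mul_inv, le_div_iff₀ hs0, Real.mul_self_sqrt hs.1.le]
        exact hs.2.le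
  have h1 : 1 ≤ √δ * (√s)⁻¹ := by
    rw [← div_eq_mul_inv, one_le_div hs0]
    exact Real.sqrt_le_sqrt hs.2.le
  calc |reaction f M x (w s x) - reaction f M y (w s y)|
      ≤ |reaction f M x (w s x) - reaction f M y (w s x)|
        + |reaction f M y (w s x) - reaction f M y (w s y)| := abs_sub_le _ _ _
    _ ≤ 4 * M * N * |x - y| + (2 * F + 4 * M) * ((M * m + K * δ) * (√s)⁻¹ * |x - y|) := by
      refine add_le_add (abs_reaction_sub_le_space hN hM.le x y _)
        ((abs_reaction_sub_le hf hF hM.le y _ _).trans ?_)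
      gcongr
    _ ≤ 4 * M * N * |x - y| * (√δ * (√s)⁻¹)
        + (2 * F + 4 * M) * ((M * m + K * δ) * (√s)⁻¹ * |x - y|) := by
      exact add_le_add_left (le_mul_of_one_le_right (by positivity) h1) _
    _ = _ := by ring

lemma parabolicOn_time {a b : ℝ} {c c' : ℝ → ℝ} (hc : ContinuousOn c (Ico a b))
    (hc' : ∀ t ∈ Ioo a b, HasDerivAt c (c' t) t) :
    ParabolicOn a b (fun t _ => c t) (fun t _ => c' t) (fun _ _ => 0) (fun _ _ => 0) where
  cont_time _ := hc
  cont_space _ _ := continuous_const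
  deriv_time t ht _ := hc' t ht
  deriv_space _ _ x := hasDerivAt_const x _
  deriv_space₂ _ _ x := hasDerivAt_const x _

/-- Local existence on an interval depending only on a bound for the initial datum. -/
theorem exists_nonnegSolution {f : ℝ → ℝ} {F M N : ℝ} (hfc : Continuous f) (hf : ∀ x, 0 ≤ f x)
    (hF : ∀ x, f x ≤ F) (hN : ∀ x y, |f x - f y| ≤ N * |x - y|) (hM : 0 < M) :
    ∃ δ > 0, ∀ q : ℝ → ℝ, Continuous q → (∀ x, 0 ≤ q x) → (∀ x, q x ≤ M) →
      ∃ w wx wxx : ℝ → ℝ → ℝ, NonnegSolution f 0 δ w wx wxx ∧ (∀ x, w 0 x = q x) ∧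
        (∀ t ∈ Ico 0 δ, ∀ x, w t x ≤ 2 * M) ∧ ∀ t ∈ Ioo 0 δ, Continuous (wxx t) := by
  have hF0 : 0 ≤ F := (hf 0).trans (hF 0)
  have hden : 0 < 2 * (2 * F + 4 * M) := by positivity
  refine ⟨(2 * (2 * F + 4 * M))⁻¹, by positivity, fun q hq hq0 hqle => ?_⟩
  set δ := (2 * (2 * F + 4 * M))⁻¹ with hδ
  have hδ0 : 0 < δ := by positivity
  have hδ1 : δ * (2 * F + 4 * M) = 1 / 2 := by rw [hδ]; field_simp
  have hqM : ∀ x, |q x| ≤ M := fun x => by rw [abs_of_nonneg (hq0 x)]; exact hqle x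
  obtain ⟨w, hwc, ⟨C, hC⟩, hw⟩ := exists_mild_solution hfc hf hF hM hδ0 hδ1.le hq hqM
  obtain ⟨Λ, hΛ⟩ := exists_lipschitz_mild hfc hf hF hN hM hq hqM hwc hw
  have hGc : Continuous fun p : ℝ × ℝ => reaction f M p.2 (w p.1 p.2) :=
    (continuous_reaction hfc).comp (by fun_prop : Continuous fun p : ℝ × ℝ => (p.2, w p.1 p.2))
  have hGB : ∀ s x, |reaction f M x (w s x)| ≤ 4 * M * F + 4 * M ^ 2 := fun s x =>
    abs_reaction_le hf hF hM.le x _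
  set g : ℝ → ℝ → ℝ := fun s y => reaction f M y (w s y) with hg
  have hpar := (parabolicOn_heat hq hqM 0 δ).add (parabolicOn_duhamel hGc hGB hΛ)
  simp only [sub_zero] at hpar
  have hpw : ParabolicOn 0 δ w
      (fun t x => heatXX q t x + (duhamelXX g t x + g t x))
      (fun t x => heatX q t x + duhamelX g t x)
      (fun t x => heatXX q t x + duhamelXX g t x) := by
    refine ⟨fun x => (hwc.comp (by fun_prop : Continuous fun t : ℝ => (t, x))).continuousOn,
      fun t _ => hwc.comp (by fun_prop : Continuous fun x : ℝ => (t, x)), fun t ht x => ?_,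
      fun t ht x => ?_, hpar.deriv_space₂⟩
    · refine (hpar.deriv_time t ht x).congr_of_eventuallyEq ?_
      filter_upwards [Ioo_mem_nhds ht.1 ht.2] with s hs using hw s ⟨hs.1.le, hs.2.le⟩ x
    · rw [funext fun z => hw t ⟨ht.1.le, ht.2.le⟩ z]
      exact hpar.deriv_space t ht x
  have hw0 : ∀ x, w 0 x = q x := fun x => by
    rw [hw 0 ⟨le_rfl, hδ0.le⟩, heat_zero]
    simp [duhamel]
  have hnn : ∀ t ∈ Ico 0 δ, ∀ x, 0 ≤ w t x := fun t ht x =>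
    hpw.nonneg (L := 0) (C := C) le_rfl (fun t _ x => (abs_le.1 (hC t x)).1)
      (fun t _ x hneg => by
        have : g t x = 0 := by simp [hg, reaction, clip_of_nonpos hneg.le]
        linarith) (fun x => by rw [hw0]; exact hq0 x) ht x
  have hup : ∀ t ∈ Ico 0 δ, ∀ x, w t x ≤ 2 * M := fun t ht x => by
    have hlin : ∀ t, HasDerivAt (fun t : ℝ => M + 4 * M ^ 2 * t) (4 * M ^ 2) t := fun t =>
      (((hasDerivAt_id t).const_mul (4 * M ^ 2)).const_add M).congr_deriv (mul_one _)
    have hz := (parabolicOn_time (a := 0) (b := δ) (by fun_prop) fun t _ => hlin t).sub hpw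
    have h := hz.nonneg (L := 0) (C := C) le_rfl
      (fun t ht x => by nlinarith [(abs_le.1 (hC t x)).2, ht.1, sq_nonneg M])
      (fun t _ x _ => by
        have : g t x ≤ 4 * M ^ 2 := reaction_le hf hM.le x _
        linarith)
      (fun x => by rw [hw0]; linarith [hqle x]) ht x
    have : M * (δ * (2 * F + 4 * M)) = M * (1 / 2) := by rw [hδ1]
    nlinarith [ht.1, ht.2, mul_nonneg hδ0.le hF0, mul_nonneg (mul_nonneg hδ0.le hF0) hM.le,
      mul_le_mul_of_nonneg_left ht.2.le (sq_nonneg M)]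
  refine ⟨w, fun t x => heatX q t x + duhamelX g t x, fun t x => heatXX q t x + duhamelXX g t x,
    { cont_time := hpw.cont_time, cont_space := hpw.cont_space, deriv_space := hpw.deriv_space,
      deriv_space₂ := hpw.deriv_space₂, nonneg := hnn,
      bounded := fun t ht => ⟨2 * M, hup t ht⟩, deriv_time := fun t ht x => ?_ }, hw0, hup,
    fun t ht => ?_⟩
  · refine (hpw.deriv_time t ht x).congr_deriv ?_
    have ht' := Ioo_subset_Ico_self ht
    simp only [hg, reaction]
    rw [clip_of_mem (hnn t ht' x) (hup t ht' x)]
    ring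
  · refine Continuous.add ?_ (continuous_iff_continuousAt.2 fun x => ?_)
    · refine continuous_iff_continuousAt.2 fun x => ?_
      exact ContinuousAt.comp (f := fun x : ℝ => (t, (0:ℝ), x)) (x := x)
        (continuousAt_heatXX_param (g := fun _ => q) (hq.comp continuous_snd) (fun _ => hqM)
          (y := (t, (0:ℝ), x)) ht.1) (by fun_prop)
    · exact ContinuousAt.comp (f := fun x : ℝ => (t, x)) (x := x)
        (continuousAt_duhamelXX hGc hGB hΛ (y := (t, x)) ht) (by fun_prop)

/-! ### Continuation of bounded solutions -/

lemma ParabolicOn.shift {a b : ℝ} {z zt zx zxx : ℝ → ℝ → ℝ} (h : ParabolicOn a b z zt zx zxx)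
    (c : ℝ) : ParabolicOn (c + a) (c + b) (fun t => z (t - c)) (fun t => zt (t - c))
      (fun t => zx (t - c)) (fun t => zxx (t - c)) where
  cont_time x := (h.cont_time x).comp (f := fun t => t - c) (by fun_prop)
    fun t ht => ⟨by linarith [ht.1], by linarith [ht.2]⟩
  cont_space t ht := h.cont_space _ ⟨by linarith [ht.1], by linarith [ht.2]⟩
  deriv_time t ht x :=
    (HasDerivAt.comp (h₂ := fun s => z s x) t
      (h.deriv_time (t - c) ⟨by linarith [ht.1], by linarith [ht.2]⟩ x)
      ((hasDerivAt_id t).sub_const c)).congr_deriv (mul_one _)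
  deriv_space t ht := h.deriv_space _ ⟨by linarith [ht.1], by linarith [ht.2]⟩
  deriv_space₂ t ht := h.deriv_space₂ _ ⟨by linarith [ht.1], by linarith [ht.2]⟩

lemma NonnegSolution.shift {f : ℝ → ℝ} {a b : ℝ} {v vx vxx : ℝ → ℝ → ℝ}
    (h : NonnegSolution f a b v vx vxx) (c : ℝ) :
    NonnegSolution f (c + a) (c + b) (fun t => v (t - c)) (fun t => vx (t - c))
      (fun t => vxx (t - c)) where
  toParabolicOn := h.toParabolicOn.shift c
  nonneg t ht := h.nonneg _ ⟨by linarith [ht.1], by linarith [ht.2]⟩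
  bounded t ht := h.bounded _ ⟨by linarith [ht.1], by linarith [ht.2]⟩

lemma NonnegSolution.le_of_initial_le {f : ℝ → ℝ} {a b K : ℝ} {v vx vxx w wx wxx : ℝ → ℝ → ℝ}
    (hv : NonnegSolution f a b v vx vxx) (hw : NonnegSolution f a b w wx wxx)
    (hf : ∀ x, 0 ≤ f x) (hK : 0 ≤ K)
    (hwK : ∀ t ∈ Ico a b, ∀ x, w t x ≤ K) (h0 : ∀ x, w a x ≤ v a x) {t : ℝ} (ht : t ∈ Ico a b)
    (x : ℝ) : w t x ≤ v t x := by
  have h := (hv.toParabolicOn.sub hw.toParabolicOn).nonneg (L := 2 * K) (C := K) (by positivity)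
    (fun t ht x => by linarith [hv.nonneg t ht x, hwK t ht x])
    (fun t ht x hneg => by
      have ht' := Ioo_subset_Ico_self ht
      have h1 : v t x + w t x - 2 * f x ≤ 2 * K := by
        linarith [hwK t ht' x, hf x]
      nlinarith [mul_le_mul_of_nonneg_right h1 (neg_nonneg.2 hneg.le)])
    (fun x => sub_nonneg.2 (h0 x)) ht x
  linarith

lemma nonnegSolution_neg {f h : ℝ → ℝ} {T : ℝ} {u : ℝ → ℝ → ℝ} (hh : Continuous h)
    (hu : IsClassicalSolution f h T u) (hneg : ∀ t ∈ Ico 0 T, ∀ x, u t x ≤ 0)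
    (hbdd : ∀ t ∈ Ico 0 T, ∃ M, ∀ x, |u t x| ≤ M) :
    NonnegSolution f 0 T (fun t x => -u t x) (fun t x => -deriv (u t) x)
      (fun t x => -deriv (deriv (u t)) x) where
  cont_time x := (hu.2.1 x).neg
  cont_space t ht := by
    rcases ht.1.eq_or_lt with rfl | h0
    · rw [show (fun x => -u 0 x) = fun x => -h x from funext fun x => by rw [hu.1 x]]
      exact hh.neg
    · exact (hu.2.2.1 t ⟨h0, ht.2⟩).continuous.neg
  deriv_time t ht x := ((hu.2.2.2 t ht x).neg).congr_deriv (by ring)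
  deriv_space t ht x :=
    (((hu.2.2.1 t ht).differentiable (by norm_num)).differentiableAt.hasDerivAt).neg
  deriv_space₂ t ht x := by
    have h1 : ContDiff ℝ 1 (deriv (u t)) := by
      have := hu.2.2.1 t ht
      rw [show (2 : WithTop ℕ∞) = 1 + 1 by norm_num, contDiff_succ_iff_deriv] at this
      exact this.2.2
    exact ((h1.differentiable (by norm_num)).differentiableAt.hasDerivAt).neg
  nonneg t ht x := neg_nonneg.2 (hneg t ht x)
  bounded t ht := by
    obtain ⟨M, hM⟩ := hbdd t ht
    exact ⟨M, fun x => (neg_le_abs _).trans (hM x)⟩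

lemma contDiff_two_of_hasDerivAt {q q' q'' : ℝ → ℝ} (h1 : ∀ x, HasDerivAt q (q' x) x)
    (h2 : ∀ x, HasDerivAt q' (q'' x) x) (h3 : Continuous q'') : ContDiff ℝ 2 q := by
  have e1 : deriv q = q' := funext fun x => (h1 x).deriv
  have e2 : deriv q' = q'' := funext fun x => (h2 x).deriv
  rw [show (2 : WithTop ℕ∞) = 1 + 1 by norm_num, contDiff_succ_iff_deriv]
  refine ⟨fun x => (h1 x).differentiableAt, by simp, ?_⟩
  rw [e1, contDiff_one_iff_deriv, e2]
  exact ⟨fun x => (h2 x).differentiableAt, h3⟩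

/-- A solution which stays bounded along a sequence of times approaching `T` extends past `T`. -/
theorem exists_extension {f h : ℝ → ℝ} {F N T M : ℝ} {u : ℝ → ℝ → ℝ} (hfc : Continuous f)
    (hf : ∀ x, 0 ≤ f x) (hF : ∀ x, f x ≤ F) (hN : ∀ x y, |f x - f y| ≤ N * |x - y|)
    (hh : Continuous h) (hT : 0 < T) (hu : IsClassicalSolution f h T u)
    (hneg : ∀ t ∈ Ico 0 T, ∀ x, u t x ≤ 0) (hbdd : ∀ t ∈ Ico 0 T, ∃ M, ∀ x, |u t x| ≤ M)
    (hM : 0 < M) (hfreq : ∃ᶠ t in 𝓝[<] T, ∀ x, |u t x| ≤ M) :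
    ∃ T' : ℝ, T < T' ∧ ∃ u' : ℝ → ℝ → ℝ, IsClassicalSolution f h T' u' ∧
      (∀ t ∈ Ico 0 T, ∀ x, u' t x = u t x) ∧ (∀ t ∈ Ico 0 T', ∀ x, u' t x ≤ 0) ∧
      (∀ t ∈ Ico 0 T', ∃ M : ℝ, ∀ x, |u' t x| ≤ M) := by
  have hv := nonnegSolution_neg hh hu hneg hbdd
  obtain ⟨δ, hδ, hex⟩ := exists_nonnegSolution hfc hf hF hN hM
  have hη : 0 < min δ (1 / (8 * M)) := lt_min hδ (by positivity)
  obtain ⟨t₀, ht₀M, ht₀⟩ := (hfreq.and_eventually (Ioo_mem_nhdsLT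
    (show max 0 (T - min δ (1 / (8 * M))) < T from max_lt hT (by linarith)))).exists
  have h00 : 0 < t₀ := (le_max_left _ _).trans_lt ht₀.1
  have h0T : t₀ < T := ht₀.2
  have h0δ : T - min δ (1 / (8 * M)) < t₀ := (le_max_right _ _).trans_lt ht₀.1
  have hTδ : T < t₀ + δ := by linarith [min_le_left δ (1 / (8 * M))]
  have hTM : T ≤ t₀ + 1 / (8 * M) := by linarith [min_le_right δ (1 / (8 * M))]
  have ht₀I : t₀ ∈ Ico 0 T := ⟨h00.le, h0T⟩
  have hvM : ∀ x, -u t₀ x ≤ M := fun x => (neg_le_abs _).trans (ht₀M x)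
  have hv2 : ∀ t ∈ Ico t₀ T, ∀ x, -u t x ≤ 2 * M := hv.le_two_mul hf h00.le le_rfl hM hTM
    (fun τ hτ => hv.rightBounded hf hF τ ⟨h00.le.trans hτ.1, hτ.2⟩) hvM
  obtain ⟨w, wx, wxx, hw, hw0, hw2, hwc⟩ := hex (fun x => -u t₀ x) (hv.cont_space t₀ ht₀I)
    (hv.nonneg t₀ ht₀I) hvM
  have hs := hw.shift t₀
  rw [add_zero] at hs
  have heq : ∀ t ∈ Ico t₀ T, ∀ x, u t x = -w (t - t₀) x := by
    intro t ht x
    have hv' := hv.mono h00.le (le_refl T)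
    have hs' := hs.mono (le_refl t₀) hTδ.le
    have hw2' : ∀ t ∈ Ico t₀ T, ∀ x, w (t - t₀) x ≤ 2 * M := fun t ht x =>
      hw2 _ ⟨by linarith [ht.1], by linarith [ht.2]⟩ x
    have h1 := hv'.le_of_initial_le hs' hf (by positivity) hw2'
      (fun x => by rw [sub_self, hw0]) ht x
    have h2 := hs'.le_of_initial_le hv' hf (by positivity) hv2
      (fun x => by rw [sub_self, hw0]) ht x
    linarith
  set u' : ℝ → ℝ → ℝ := fun t => if t < T then u t else fun x => -w (t - t₀) x with hu'
  have hlt : ∀ t, t < T → u' t = u t := fun t ht => if_pos ht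
  have hge : ∀ t, t₀ ≤ t → u' t = fun x => -w (t - t₀) x := fun t ht => by
    by_cases h : t < T
    · rw [hlt t h]; exact funext fun x => heq t ⟨ht, h⟩ x
    · exact if_neg h
  have hcases : ∀ t, t < T ∨ t₀ < t := fun t => (lt_or_ge t T).imp_right h0T.trans_le
  have hltev : ∀ t, t < T → ∀ x, ∀ᶠ s in 𝓝 t, u' s x = u s x := fun t ht x => by
    filter_upwards [Iio_mem_nhds ht] with s hs using by rw [hlt s hs]
  have hgeev : ∀ t, t₀ < t → ∀ x, ∀ᶠ s in 𝓝 t, u' s x = -w (s - t₀) x := fun t ht x => by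
    filter_upwards [Ioi_mem_nhds ht] with s hs using by rw [hge s (le_of_lt hs)]
  refine ⟨t₀ + δ, hTδ, u', ⟨fun x => ?_, fun x t ht => ?_, fun t ht => ?_, fun t ht x => ?_⟩,
    fun t ht x => by rw [hlt t ht.2], fun t ht x => ?_, fun t ht => ?_⟩
  · rw [hlt 0 hT]; exact hu.1 x
  · rcases hcases t with h | h
    · have hc := hu.2.1 x t ⟨ht.1, h⟩
      refine ContinuousWithinAt.congr_of_eventuallyEq
        (hc.mono_of_mem_nhdsWithin ?_) ((hltev t h x).filter_mono nhdsWithin_le_nhds)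
        (by rw [hlt t h])
      filter_upwards [self_mem_nhdsWithin, mem_nhdsWithin_of_mem_nhds (Iio_mem_nhds h)]
        with s hs hs' using ⟨hs.1, hs'⟩
    · have hc : ContinuousAt (fun s => -w (s - t₀) x) t :=
        ((hs.cont_time x).continuousAt (Ico_mem_nhds h ht.2)).neg
      exact (hc.congr ((hgeev t h x).mono fun s hs => hs.symm)).continuousWithinAt
  · rcases hcases t with h | h
    · rw [hlt t h]; exact hu.2.2.1 t ⟨ht.1, h⟩
    · rw [hge t h.le]
      have hI : t - t₀ ∈ Ioo 0 δ := ⟨by linarith, by linarith [ht.2]⟩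
      exact (contDiff_two_of_hasDerivAt (hw.deriv_space _ hI) (hw.deriv_space₂ _ hI)
        (hwc _ hI)).neg
  · rcases hcases t with h | h
    · rw [hlt t h]
      exact (hu.2.2.2 t ⟨ht.1, h⟩ x).congr_of_eventuallyEq (hltev t h x)
    · have hI : t ∈ Ioo t₀ (t₀ + δ) := ⟨h, ht.2⟩
      have e1 : deriv (fun x => -w (t - t₀) x) = fun x => -wx (t - t₀) x :=
        funext fun x => (hs.deriv_space t hI x).neg.deriv
      have e2 : deriv (fun x => -wx (t - t₀) x) x = -wxx (t - t₀) x :=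
        (hs.deriv_space₂ t hI x).neg.deriv
      rw [hge t h.le, e1, e2]
      exact ((hs.deriv_time t hI x).neg.congr_of_eventuallyEq (hgeev t h x)).congr_deriv (by ring)
  · rcases hcases t with h | h
    · rw [hlt t h]; exact hneg t ⟨ht.1, h⟩ x
    · rw [hge t h.le]
      exact neg_nonpos.2 (hs.nonneg t ⟨h.le, ht.2⟩ x)
  · rcases hcases t with h | h
    · rw [hlt t h]; exact hbdd t ⟨ht.1, h⟩
    · rw [hge t h.le]
      refine ⟨2 * M, fun x => ?_⟩
      rw [abs_neg]
      exact hs.abs_le ⟨h.le, ht.2⟩ (hw2 _ ⟨by linarith, by linarith [ht.2]⟩) x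

/-- Along a maximal solution the supremum norm tends to infinity. -/
theorem tendsto_iSup_abs_atTop {f h : ℝ → ℝ} {F N T : ℝ} {u : ℝ → ℝ → ℝ} (hfc : Continuous f)
    (hf : ∀ x, 0 ≤ f x) (hF : ∀ x, f x ≤ F) (hN : ∀ x y, |f x - f y| ≤ N * |x - y|)
    (hh : Continuous h) (hT : 0 < T) (hu : IsClassicalSolution f h T u)
    (hneg : ∀ t ∈ Ico 0 T, ∀ x, u t x ≤ 0) (hbdd : ∀ t ∈ Ico 0 T, ∃ M, ∀ x, |u t x| ≤ M)
    (hmax : ¬ ∃ T' : ℝ, T < T' ∧ ∃ u' : ℝ → ℝ → ℝ, IsClassicalSolution f h T' u' ∧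
      (∀ t ∈ Ico 0 T, ∀ x, u' t x = u t x) ∧ (∀ t ∈ Ico 0 T', ∀ x, u' t x ≤ 0) ∧
      (∀ t ∈ Ico 0 T', ∃ M : ℝ, ∀ x, |u' t x| ≤ M)) :
    Tendsto (fun t : ℝ => ⨆ x : ℝ, |u t x|) (𝓝[<] T) atTop := by
  rw [tendsto_atTop]
  by_contra! hcon
  obtain ⟨b, hb⟩ := hcon
  refine hmax (exists_extension hfc hf hF hN hh hT hu hneg hbdd (M := max b 1) (by positivity) ?_)
  refine (hb.and_eventually (Ioo_mem_nhdsLT hT)).mono fun t ht x => ?_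
  obtain ⟨M, hM⟩ := hbdd t ⟨ht.2.1.le, ht.2.2⟩
  have h1 : |u t x| ≤ ⨆ x : ℝ, |u t x| :=
    le_ciSup (f := fun x => |u t x|) ⟨M, by rintro _ ⟨y, rfl⟩; exact hM y⟩ x
  exact h1.trans (ht.1.le.trans (le_max_left _ _))

/-! ### Blow-up -/

/-- The amplitude `4 a / (4 - a t)` solves `α' = α² / 4` with `α 0 = a`. -/
lemma hasDerivAt_amplitude {a t : ℝ} (ht : a * t < 4) :
    HasDerivAt (fun s => 4 * a / (4 - a * s)) ((4 * a / (4 - a * t)) ^ 2 / 4) t := by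
  have h0 : 4 - a * t ≠ 0 := by linarith
  have h1 : HasDerivAt (fun s => 4 - a * s) (-(a * 1)) t :=
    ((hasDerivAt_id t).const_mul a).const_sub 4
  refine ((hasDerivAt_const t (4 * a)).div h1 h0).congr_deriv ?_
  field_simp
  ring

/-- The parabola `α - (α² / 32) (x - x₀)²` with `α' = α² / 4`. -/
lemma parabolicOn_parabola {a b x₀ : ℝ} {α : ℝ → ℝ}
    (hα : ∀ t ∈ Ico a b, HasDerivAt α (α t ^ 2 / 4) t) :
    ParabolicOn a b (fun t x => α t - α t ^ 2 / 32 * (x - x₀) ^ 2)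
      (fun t x => α t ^ 2 / 4 - α t ^ 3 / 64 * (x - x₀) ^ 2)
      (fun t x => -(α t ^ 2 / 16 * (x - x₀))) (fun t _ => -(α t ^ 2 / 16)) where
  cont_time x := by
    have h : ContinuousOn α (Ico a b) := fun t ht => (hα t ht).continuousAt.continuousWithinAt
    fun_prop
  cont_space t _ := by fun_prop
  deriv_time t ht x := by
    have h := hα t (Ioo_subset_Ico_self ht)
    refine (h.sub (((h.pow 2).div_const 32).mul_const ((x - x₀) ^ 2))).congr_deriv ?_
    push_cast
    ring
  deriv_space t _ x := by
    have h := ((((hasDerivAt_id x).sub_const x₀).pow 2).const_mul (α t ^ 2 / 32)).const_sub (α t)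
    refine h.congr_deriv ?_
    push_cast
    simp only [id]
    ring
  deriv_space₂ t _ x := by
    have h := (((hasDerivAt_id x).sub_const x₀).const_mul (α t ^ 2 / 16)).neg
    exact h.congr_deriv (by ring)

lemma parabola_subsolution {α φ y : ℝ} (hφ : φ ≤ α / 8)
    (hy : 0 < α - α ^ 2 / 32 * y) :
    α ^ 2 / 4 - α ^ 3 / 64 * y + α ^ 2 / 16 ≤
      (α - α ^ 2 / 32 * y) ^ 2 - 2 * φ * (α - α ^ 2 / 32 * y) := by
  set w := α - α ^ 2 / 32 * y with hw
  have h1 : α ^ 3 / 64 * y = (α ^ 2 - α * w) / 2 := by rw [hw]; ring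
  rw [h1]
  nlinarith [mul_le_mul_of_nonneg_right hφ hy.le, sq_nonneg (w - 3 / 8 * α), sq_nonneg α]

/-- A nonnegative solution lying above a wide parabola, on which the potential is small, cannot
exist past the blow-up time of the amplitude. -/
theorem NonnegSolution.le_four_div {f : ℝ → ℝ} {a T x₀ : ℝ} {v vx vxx : ℝ → ℝ → ℝ}
    (hv : NonnegSolution f 0 T v vx vxx) (ha : 0 < a) (hf : ∀ x, 0 ≤ f x)
    (hfa : ∀ x, a * (x - x₀) ^ 2 ≤ 32 → f x ≤ a / 8)
    (h0 : ∀ x, a - a ^ 2 / 32 * (x - x₀) ^ 2 ≤ v 0 x) : T ≤ 4 / a := by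
  by_contra! hT
  obtain ⟨M, hM⟩ := (isCompact_Icc.bddAbove_image ((hv.cont_time x₀).mono
    (fun t (ht : t ∈ Icc 0 (4 / a)) => ⟨ht.1, ht.2.trans_lt hT⟩)))
  set K := max M a + 1 with hKdef
  have hMK : M < K := (le_max_left M a).trans_lt (lt_add_one _)
  have haK : a < K := (le_max_right M a).trans_lt (lt_add_one _)
  have hK : 0 < K := ha.trans haK
  set b := 4 / a - 4 / (K + 1) with hb
  set t := 4 / a - 4 / K with ht
  have ht0 : 0 ≤ t := sub_nonneg.2 (by gcongr)
  have htb : t < b := by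
    have : 4 / (K + 1) < 4 / K := by gcongr; linarith
    linarith
  have hba : b < 4 / a := by
    have : 0 < 4 / (K + 1) := by positivity
    linarith
  set α : ℝ → ℝ := fun s => 4 * a / (4 - a * s) with hαdef
  have hgap : ∀ s ∈ Ico 0 b, 4 * a / (K + 1) < 4 - a * s := fun s hs => by
    have h1 : a * s < a * b := by gcongr; exact hs.2
    have h2 : a * b = 4 - 4 * a / (K + 1) := by rw [hb]; field_simp
    linarith
  have hgap0 : ∀ s ∈ Ico 0 b, 0 < 4 - a * s := fun s hs =>
    lt_trans (by positivity) (hgap s hs)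
  have hαpos : ∀ s ∈ Ico 0 b, a ≤ α s := fun s hs => by
    rw [hαdef]
    simp only
    rw [le_div_iff₀ (hgap0 s hs)]
    nlinarith [mul_nonneg ha.le (mul_nonneg ha.le hs.1)]
  have hαK : ∀ s ∈ Ico 0 b, α s ≤ K + 1 := fun s hs => by
    have h1 := hgap s hs
    rw [div_lt_iff₀ (by positivity)] at h1
    rw [hαdef]
    simp only
    rw [div_le_iff₀ (hgap0 s hs)]
    linarith
  have hpar : ParabolicOn 0 b _ _ _ _ := parabolicOn_parabola (x₀ := x₀)
    fun s hs => hasDerivAt_amplitude (a := a) (t := s) (by linarith [hgap0 s hs])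
  have hsub := (hv.toParabolicOn.mono le_rfl (hba.le.trans hT.le)).sub hpar
  have hwle : ∀ s ∈ Ico 0 b, ∀ x, α s - α s ^ 2 / 32 * (x - x₀) ^ 2 ≤ K + 1 := fun s hs x => by
    have : 0 ≤ α s ^ 2 / 32 * (x - x₀) ^ 2 := by positivity
    linarith [hαK s hs]
  have hmem : ∀ s ∈ Ico 0 b, s ∈ Ico 0 T := fun s hs => ⟨hs.1, hs.2.trans (hba.trans hT)⟩
  have hcmp := hsub.nonneg (L := 2 * (K + 1)) (C := K + 1) (by positivity)
    (fun s hs x => by linarith [hwle s hs x, hv.nonneg s (hmem s hs) x])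
    (fun s hs x hneg => by
      have hs' := Ioo_subset_Ico_self hs
      have hv0 := hv.nonneg s (hmem s hs') x
      have hle := hwle s hs' x
      have hα0 : 0 < α s := ha.trans_le (hαpos s hs')
      change v s x - (α s - α s ^ 2 / 32 * (x - x₀) ^ 2) < 0 at hneg
      have hw : 0 < α s - α s ^ 2 / 32 * (x - x₀) ^ 2 := by linarith
      have hy : a * (x - x₀) ^ 2 ≤ 32 := by
        have h1 : 0 < α s * (32 - α s * (x - x₀) ^ 2) := by nlinarith
        have h2 := pos_of_mul_pos_right h1 hα0.le
        nlinarith [mul_le_mul_of_nonneg_right (hαpos s hs') (sq_nonneg (x - x₀))]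
      have hsubsol := parabola_subsolution ((hfa x hy).trans (by linarith [hαpos s hs'])) hw
      change vxx s x - -(α s ^ 2 / 16) +
        2 * (K + 1) * (v s x - (α s - α s ^ 2 / 32 * (x - x₀) ^ 2)) ≤
        _ - (α s ^ 2 / 4 - α s ^ 3 / 64 * (x - x₀) ^ 2)
      set w := α s - α s ^ 2 / 32 * (x - x₀) ^ 2
      have h1 : v s x + w - 2 * f x ≤ 2 * (K + 1) := by linarith [hf x]
      nlinarith [mul_le_mul_of_nonneg_right h1 (neg_nonneg.2 hneg.le)])
    (fun x => by simpa using h0 x) ⟨ht0, htb⟩ x₀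
  have hvM : v t x₀ ≤ M := hM ⟨t, ⟨ht0, (htb.trans hba).le⟩, rfl⟩
  have hαt : 4 * a / (4 - a * t) = K := by
    have : 4 - a * t = 4 * a / K := by rw [ht]; field_simp; ring
    rw [this]
    field_simp
  simp only [sub_self, hαt] at hcmp
  norm_num at hcmp
  linarith

/-! ### Norms of the initial datum -/

lemma eLpNorm_le_of_enorm_le {g : ℝ → ℝ} {C p : ℝ≥0∞} (hp : 1 ≤ p) (hC : C ≠ ∞)
    (hg : ∀ x, ‖g x‖ₑ ≤ C) (h1 : eLpNorm g 1 volume ≤ C) : eLpNorm g p volume ≤ C := by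
  have hp0 : p ≠ 0 := (zero_lt_one.trans_le hp).ne'
  by_cases hpt : p = ∞
  · rw [hpt, eLpNorm_exponent_top]
    exact essSup_le_of_ae_le _ (Eventually.of_forall hg)
  have hp1 : 1 ≤ p.toReal := by
    rw [← ENNReal.toReal_one]
    exact ENNReal.toReal_mono hpt hp
  rw [eLpNorm_one_eq_lintegral_enorm] at h1
  have hsplit : ∀ y : ℝ≥0∞, y ^ p.toReal = y ^ (p.toReal - 1) * y := fun y => by
    conv_rhs => rw [← ENNReal.rpow_one y, ← ENNReal.rpow_mul, one_mul]
    rw [← ENNReal.rpow_add_of_nonneg _ _ (by linarith) zero_le_one, sub_add_cancel]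
  rw [eLpNorm_eq_lintegral_rpow_enorm_toReal hp0 hpt, one_div,
    ENNReal.rpow_inv_le_iff (by linarith), hsplit C]
  calc ∫⁻ x, ‖g x‖ₑ ^ p.toReal ≤ ∫⁻ x, C ^ (p.toReal - 1) * ‖g x‖ₑ :=
        lintegral_mono fun x => by
          rw [hsplit]
          gcongr
          exact hg x
    _ = C ^ (p.toReal - 1) * ∫⁻ x, ‖g x‖ₑ :=
        lintegral_const_mul' _ _ (ENNReal.rpow_ne_top_of_nonneg (by linarith) hC)
    _ ≤ C ^ (p.toReal - 1) * C := by gcongr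

lemma eLpNorm_gaussian_le {s x₀ : ℝ} (hs : 0 < s) (hs1 : s ≤ 1) {p : ℝ≥0∞} (hp : 1 ≤ p) :
    eLpNorm (fun x : ℝ => -s ^ 4 * Real.exp (-s ^ 6 * (x - x₀) ^ 2)) p volume ≤
      ENNReal.ofReal (2 * s) := by
  have hnorm : ∀ x, ‖-s ^ 4 * Real.exp (-s ^ 6 * (x - x₀) ^ 2)‖ₑ =
      ENNReal.ofReal (s ^ 4 * Real.exp (-s ^ 6 * (x - x₀) ^ 2)) := fun x => by
    rw [neg_mul, enorm_neg, Real.enorm_of_nonneg (by positivity)]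
  refine eLpNorm_le_of_enorm_le hp ENNReal.ofReal_ne_top (fun x => ?_) ?_
  · rw [hnorm]
    refine ENNReal.ofReal_le_ofReal ?_
    have h1 : s ^ 4 ≤ s := pow_le_of_le_one hs.le hs1 (by norm_num)
    have h2 : Real.exp (-s ^ 6 * (x - x₀) ^ 2) ≤ 1 := Real.exp_le_one_iff.2 (by
      have : 0 ≤ s ^ 6 * (x - x₀) ^ 2 := by positivity
      linarith)
    nlinarith [Real.exp_pos (-s ^ 6 * (x - x₀) ^ 2), pow_pos hs 4]
  · have hint : Integrable fun x : ℝ => Real.exp (-s ^ 6 * (x - x₀) ^ 2) :=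
      (integrable_exp_neg_mul_sq (pow_pos hs 6)).comp_sub_right x₀
    rw [eLpNorm_one_eq_lintegral_enorm]
    simp only [hnorm]
    rw [← ofReal_integral_eq_lintegral_ofReal (hint.const_mul _)
      (Eventually.of_forall fun x => by positivity), integral_const_mul,
      integral_sub_right_eq_self (fun x => Real.exp (-s ^ 6 * x ^ 2)) x₀, integral_gaussian,
      Real.sqrt_div Real.pi_pos.le, show s ^ 6 = (s ^ 3) ^ 2 by ring, Real.sqrt_sq (by positivity)]
    refine ENNReal.ofReal_le_ofReal ?_
    have h2 : √Real.pi ≤ 2 := by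
      rw [Real.sqrt_le_left (by norm_num)]
      linarith [Real.pi_lt_four]
    have : s ^ 4 * (√Real.pi / s ^ 3) = √Real.pi * s := by field_simp
    rw [this]
    gcongr

lemma pow_four_rpow {s : ℝ} (hs : 0 ≤ s) : (s ^ 4) ^ ((3 : ℝ) / 2) = s ^ 6 := by
  rw [← Real.rpow_natCast s 4, ← Real.rpow_natCast s 6, ← Real.rpow_mul hs]
  norm_num

lemma parabola_le_gaussian {s y : ℝ} (hs : 0 < s) (hs1 : s ≤ 1 / 16) :
    s ^ 4 / 2 - (s ^ 4 / 2) ^ 2 / 32 * y ^ 2 ≤ s ^ 4 * Real.exp (-s ^ 6 * y ^ 2) := by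
  have h1 := Real.add_one_le_exp (-s ^ 6 * y ^ 2)
  have h2 : s ^ 2 ≤ 1 / 128 := by nlinarith
  have h3 : s ^ 6 * y ^ 2 ≤ s ^ 4 * y ^ 2 / 128 := by
    have := mul_le_mul_of_nonneg_right h2 (show 0 ≤ s ^ 4 * y ^ 2 by positivity)
    nlinarith
  calc _ = s ^ 4 * (1 / 2 - s ^ 4 * y ^ 2 / 128) := by ring
    _ ≤ _ := by gcongr; linarith

/-- Far away from the origin, a function vanishing at infinity is small on long intervals. -/
lemma exists_forall_le_of_tendsto_cocompact {f : ℝ → ℝ} (hf : Tendsto f (cocompact ℝ) (𝓝 0))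
    {c : ℝ} (hc : 0 < c) (r : ℝ) : ∃ x₀, ∀ x, |x - x₀| ≤ r → f x ≤ c := by
  have h : ∀ᶠ x in atTop, f x ≤ c :=
    ((hf.mono_left atTop_le_cocompact).eventually (gt_mem_nhds hc)).mono fun x hx => hx.le
  obtain ⟨R, hR⟩ := eventually_atTop.1 h
  exact ⟨R + r, fun x hx => hR x (by linarith [(abs_le.1 hx).1])⟩

lemma exists_forall_le_of_continuous {f : ℝ → ℝ} (hfc : Continuous f)
    (hf : Tendsto f (cocompact ℝ) (𝓝 0)) : ∃ F, ∀ x, f x ≤ F := by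
  obtain ⟨K, hK, hKf⟩ := mem_cocompact.1 (hf.eventually (gt_mem_nhds zero_lt_one))
  obtain ⟨M, hM⟩ := hK.bddAbove_image hfc.continuousOn
  refine ⟨max M 1, fun x => ?_⟩
  by_cases hx : x ∈ K
  · exact (hM ⟨x, hx, rfl⟩).trans (le_max_left _ _)
  · exact (le_of_lt (hKf hx)).trans (le_max_right _ _)

end SemilinearHeat

open SemilinearHeat

/-- Main instability theorem: for every sufficiently small `ε > 0` there are `β > 0`
and `x₀ ∈ ℝ` such that `h(x) = −β e^{−β^{3/2}(x−x₀)²}` has `‖h‖_{L^p} < ε` for every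
`1 ≤ p ≤ ∞`, yet the Cauchy problem `∂u/∂t = ∂²u/∂x² − 2 f u − u²`, `u(0,·) = h` has
no global nonpositive bounded classical solution; moreover any maximal such solution
on `[0,T)` has `T < ∞` and `‖u(t,·)‖_∞ → ∞` as `t → T⁻`. -/
theorem instability_of_zero_equilibrium
    (f : ℝ → ℝ) (hf_smooth : ContDiff ℝ (⊤ : ℕ∞) f) (hf_pos : ∀ x, 0 < f x)
    (hf_decay : Tendsto f (cocompact ℝ) (nhds 0))
    (hf_d1 : ∃ M : ℝ, ∀ x, |deriv f x| ≤ M)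
    (hf_d2 : ∃ M : ℝ, ∀ x, |deriv (deriv f) x| ≤ M) :
    ∃ ε₀ : ℝ, 0 < ε₀ ∧ ∀ ε : ℝ, 0 < ε → ε < ε₀ →
      ∃ β : ℝ, 0 < β ∧ ∃ x₀ : ℝ,
        (∀ p : ℝ≥0∞, 1 ≤ p →
          eLpNorm (fun x : ℝ => -β * Real.exp (-β ^ ((3 : ℝ) / 2) * (x - x₀) ^ 2)) p volume
            < ENNReal.ofReal ε) ∧
        (¬ ∃ u : ℝ → ℝ → ℝ,
          (∀ T : ℝ, 0 < T →
            IsClassicalSolution f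
              (fun x : ℝ => -β * Real.exp (-β ^ ((3 : ℝ) / 2) * (x - x₀) ^ 2)) T u) ∧
          (∀ t : ℝ, 0 ≤ t → ∀ x, u t x ≤ 0) ∧
          (∀ t : ℝ, 0 ≤ t → ∃ M : ℝ, ∀ x, |u t x| ≤ M)) ∧
        (∀ T : ℝ, 0 < T → ∀ u : ℝ → ℝ → ℝ,
          IsClassicalSolution f
            (fun x : ℝ => -β * Real.exp (-β ^ ((3 : ℝ) / 2) * (x - x₀) ^ 2)) T u →
          (∀ t ∈ Set.Ico (0 : ℝ) T, ∀ x, u t x ≤ 0) →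
          (∀ t ∈ Set.Ico (0 : ℝ) T, ∃ M : ℝ, ∀ x, |u t x| ≤ M) →
          -- maximality: `u` admits no extension to a classical solution on a longer
          -- time interval with the same sign and boundedness properties
          (¬ ∃ T' : ℝ, T < T' ∧ ∃ u' : ℝ → ℝ → ℝ,
            IsClassicalSolution f
              (fun x : ℝ => -β * Real.exp (-β ^ ((3 : ℝ) / 2) * (x - x₀) ^ 2)) T' u' ∧
            (∀ t ∈ Set.Ico (0 : ℝ) T, ∀ x, u' t x = u t x) ∧
            (∀ t ∈ Set.Ico (0 : ℝ) T', ∀ x, u' t x ≤ 0) ∧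
            (∀ t ∈ Set.Ico (0 : ℝ) T', ∃ M : ℝ, ∀ x, |u' t x| ≤ M)) →
          Tendsto (fun t : ℝ => ⨆ x : ℝ, |u t x|)
            (nhdsWithin T (Set.Iio T)) atTop) := by
  have hfc := hf_smooth.continuous
  have hf0 : ∀ x, 0 ≤ f x := fun x => (hf_pos x).le
  obtain ⟨F, hF⟩ := exists_forall_le_of_continuous hfc hf_decay
  obtain ⟨N, hN⟩ := hf_d1
  have hLip : ∀ x y, |f x - f y| ≤ N * |x - y| := fun x y =>
    convex_univ.norm_image_sub_le_of_norm_deriv_le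
      (fun z _ => hf_smooth.differentiable (by simp) z) (fun z _ => hN z) trivial trivial
  refine ⟨1, one_pos, fun ε hε hε1 => ?_⟩
  obtain ⟨s, hs, hsε⟩ : ∃ s : ℝ, 0 < s ∧ 16 * s = ε := ⟨ε / 16, by positivity, by ring⟩
  have hβ : 0 < s ^ 4 := pow_pos hs 4
  obtain ⟨x₀, hx₀⟩ := exists_forall_le_of_tendsto_cocompact hf_decay
    (show 0 < s ^ 4 / 2 / 8 by positivity) (8 / s ^ 2)
  refine ⟨s ^ 4, hβ, x₀, ?_⟩
  rw [pow_four_rpow hs.le]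
  have hh : Continuous fun x : ℝ => -s ^ 4 * Real.exp (-s ^ 6 * (x - x₀) ^ 2) := by fun_prop
  refine ⟨fun p hp => ?_, ?_, fun T hT u hu hneg hbdd hmax =>
    tendsto_iSup_abs_atTop hfc hf0 hF hLip hh hT hu hneg hbdd hmax⟩
  · exact (eLpNorm_gaussian_le hs (by linarith) hp).trans_lt
      ((ENNReal.ofReal_lt_ofReal_iff hε).2 (by linarith))
  · rintro ⟨u, hu, hneg, hbdd⟩
    have hT : 0 < 4 / (s ^ 4 / 2) := by positivity
    have hv := nonnegSolution_neg hh (hu (4 / (s ^ 4 / 2) + 1) (by positivity))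
      (fun t ht => hneg t ht.1) (fun t ht => hbdd t ht.1)
    have hle := hv.le_four_div (a := s ^ 4 / 2) (x₀ := x₀) (by positivity) hf0
      (fun x hx => hx₀ x (abs_le_of_sq_le_sq (by
        rw [div_pow, le_div_iff₀ (by positivity)]
        nlinarith) (by positivity)))
      (fun x => by
        rw [(hu 1 one_pos).1 x]
        exact (parabola_le_gaussian hs (by linarith)).trans_eq (by ring))
    linarith
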